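/- arXiv:0812.1139 — 2 statements merged into one kernel-verified Lean document; each statement's English description precedes it below -/
import Mathlib

section
/- Let p be an odd prime. If the symmetric group S_p on p letters acts faithfully by diffeomorphisms on Euclidean space R^n, then n ≥ p − 1. This bound is sharp, being realized by the standard (p−1)-dimensional real linear representation of S_p. -/
/-!
A `p`-cycle `c` acts on `ℝⁿ` with order `p`, and `c` is conjugate in the symmetric group to each of
its powers `c ^ j`, `0 < j < p`. The action has a fixed point `x`, and the derivatives of `c` at any
two fixed points are conjugate. If `h` conjugates `c ^ j` to `c`, it takes the fixed point `x` of
`c ^ j` to another fixed point of `c`, so the derivative `L` of `c` at `x` is conjugate to `L ^ j`.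
A diffeomorphism of finite order whose derivative at a fixed point is the identity is itself the
identity, first near the fixed point and hence everywhere. So `L ≠ 1`, some nontrivial `p`-th root
of unity is an eigenvalue of `L`, and then all `p - 1` of them are.

The fixed point and the conjugacy of derivatives both come from a Borsuk–Ulam theorem: if a map `c`
of prime order `p > 2` preserves a convex set `Y`, every continuous `u : Y → ℝᵐ` satisfies
`u (c v) = u v` for some `v ∈ Y`. For `u = id` this gives a fixed point. For the second claim, `Y`
is the space of paths joining two fixed points and `u` is parallel transport along a path, averaged
over `c`: the derivatives of `c` at the endpoints intertwine the transports along `γ` and along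
`c ∘ γ`, so where these agree they conjugate one derivative to the other.

For the Borsuk–Ulam theorem, a Fourier transform along orbits turns `u` into a map `w` to `ℂᵐ` with
`w (c v) = ζ • w v`, where `ζ` is a primitive `p`-th root of unity, which has to vanish somewhere.
The sectors of the plane containing the coordinates of `w v` are labels in `ZMod p`, increased by
one by `c`. The cup product of the Bocksteins of such labels generates the cohomology of the cyclic
group of order `p` in even degrees, so it takes the value `1` modulo `p` on the chains obtained by
filling in the periodic resolution inside `Y`. If `w` had no zero, one of the Bocksteins would
vanish on every sufficiently small simplex.
-/

open Finset Function Module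

section LinearMapsOnSupported

variable {α R M : Type*} [Semiring R] [AddCommMonoid M] [Module R M] {S : Set α} {x : α →₀ R}

theorem linearMap_mem_of_mem_supported {φ : (α →₀ R) →ₗ[R] M} {N : Submodule R M}
    (h : ∀ a ∈ S, φ (Finsupp.single a 1) ∈ N) (hx : x ∈ Finsupp.supported R R S) : φ x ∈ N := by
  have hle : Finsupp.supported R R S ≤ N.comap φ := by
    rw [Finsupp.supported_eq_span_single, Submodule.span_le]
    rintro _ ⟨a, ha, rfl⟩
    exact h a ha
  exact hle hx

theorem linearMap_eq_of_mem_supported {φ ψ : (α →₀ R) →ₗ[R] M}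
    (h : ∀ a ∈ S, φ (Finsupp.single a 1) = ψ (Finsupp.single a 1))
    (hx : x ∈ Finsupp.supported R R S) : φ x = ψ x :=
  LinearMap.eqOn_span (Set.forall_mem_image.2 h)
    (Finsupp.supported_eq_span_single R S ▸ hx)

end LinearMapsOnSupported

section PeriodicDifferential

variable {R : Type*} [Ring R]

/-- The differentials `t - 1` (even degrees) and `1 + t + ⋯ + t ^ (p - 1)` (odd degrees) of the
periodic resolution of the cyclic group of order `p` with generator `t`. -/
def periodicDifferential (p : ℕ) (t : R) (k : ℕ) : R :=
  if Even k then t - 1 else ∑ j ∈ range p, t ^ j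

theorem periodicDifferential_of_even (p : ℕ) (t : R) {k : ℕ} (hk : Even k) :
    periodicDifferential p t k = t - 1 :=
  if_pos hk

theorem periodicDifferential_of_odd (p : ℕ) (t : R) {k : ℕ} (hk : Odd k) :
    periodicDifferential p t k = ∑ j ∈ range p, t ^ j :=
  if_neg (Nat.not_even_iff_odd.2 hk)

theorem periodicDifferential_succ_mul {p : ℕ} {t : R} (ht : t ^ p = 1) (k : ℕ) :
    periodicDifferential p t (k + 1) * periodicDifferential p t k = 0 := by
  rcases Nat.even_or_odd k with hk | hk
  · rw [periodicDifferential_of_odd p t hk.add_one, periodicDifferential_of_even p t hk,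
      geom_sum_mul, ht, sub_self]
  · rw [periodicDifferential_of_even p t hk.add_one, periodicDifferential_of_odd p t hk,
      mul_geom_sum, ht, sub_self]

theorem commute_periodicDifferential {s t : R} (h : Commute s t) (p k : ℕ) :
    Commute s (periodicDifferential p t k) := by
  unfold periodicDifferential
  split_ifs
  · exact h.sub_right (Commute.one_right s)
  · exact Commute.sum_right _ _ _ fun j _ => h.pow_right j

theorem periodicDifferential_apply_mem {A M : Type*} [Ring A] [AddCommGroup M] [Module A M]
    {p : ℕ} (hp : p ≠ 0) {t : End A M} {N : Submodule A M} {x : M}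
    (h : ∀ j ≤ p, (t ^ j) x ∈ N) (k : ℕ) : periodicDifferential p t k x ∈ N := by
  rcases Nat.even_or_odd k with hk | hk
  · rw [periodicDifferential_of_even p t hk]
    simpa using N.sub_mem (h 1 (Nat.one_le_iff_ne_zero.2 hp)) (h 0 p.zero_le)
  · rw [periodicDifferential_of_odd p t hk, LinearMap.sum_apply]
    exact N.sum_mem fun j hj => h j (mem_range.1 hj).le

end PeriodicDifferential

/-- Augmented ordered integral chains on a set of vertices. An ordered simplex is the list of its
vertices, so lists of length `n + 1` span the chains of degree `n`, and the boundary of a vertex is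
the empty list. -/
abbrev OrderedChain (V : Type*) := List V →₀ ℤ

namespace OrderedChain

variable {V : Type*}

/-- The cone of a chain with apex `v`. -/
noncomputable def cons (v : V) : End ℤ (OrderedChain V) :=
  Finsupp.lmapDomain ℤ ℤ (List.cons v)

/-- The chain map induced by a map of vertices. -/
noncomputable def map (f : V → V) : End ℤ (OrderedChain V) :=
  Finsupp.lmapDomain ℤ ℤ (List.map f)

/-- The alternating sum of the faces of an ordered simplex. -/
noncomputable def simplexBoundary : List V → OrderedChain V
  | [] => 0
  | v :: l => Finsupp.single l 1 - cons v (simplexBoundary l)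

/-- The boundary operator of the ordered chain complex. -/
noncomputable def boundary : End ℤ (OrderedChain V) :=
  Finsupp.linearCombination ℤ simplexBoundary

/-- The triangulated prism joining the images of an ordered simplex under `f` and `g`. -/
noncomputable def simplexPrism (f g : V → V) : List V → OrderedChain V
  | [] => 0
  | v :: l => Finsupp.single (f v :: g v :: l.map g) 1 - cons (f v) (simplexPrism f g l)

/-- The prism operator, a chain homotopy from `map f` to `map g`. -/
noncomputable def prism (f g : V → V) : End ℤ (OrderedChain V) :=
  Finsupp.linearCombination ℤ (simplexPrism f g)

@[simp]
theorem cons_single (v : V) (l : List V) :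
    cons v (Finsupp.single l 1) = Finsupp.single (v :: l) 1 := by
  simp [cons]

@[simp]
theorem map_single (f : V → V) (l : List V) :
    map f (Finsupp.single l 1) = Finsupp.single (l.map f) 1 := by
  simp [map]

@[simp]
theorem boundary_single (l : List V) :
    boundary (Finsupp.single l 1) = simplexBoundary l := by
  simp [boundary]

@[simp]
theorem prism_single (f g : V → V) (l : List V) :
    prism f g (Finsupp.single l 1) = simplexPrism f g l := by
  simp [prism]

theorem linearMap_ext {M : Type*} [AddCommGroup M] {φ ψ : OrderedChain V →ₗ[ℤ] M}
    (h : ∀ l, φ (Finsupp.single l 1) = ψ (Finsupp.single l 1)) : φ = ψ :=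
  Finsupp.lhom_ext' fun l => LinearMap.ext_ring (h l)

theorem boundary_cons (v : V) (x : OrderedChain V) :
    boundary (cons v x) = x - cons v (boundary x) := by
  have h : boundary * cons v = 1 - cons v * boundary :=
    linearMap_ext fun l => by simp [simplexBoundary]
  exact LinearMap.congr_fun h x

theorem map_cons (f : V → V) (v : V) (x : OrderedChain V) :
    map f (cons v x) = cons (f v) (map f x) := by
  have h : map f * cons v = cons (f v) * map f := linearMap_ext fun l => by simp
  exact LinearMap.congr_fun h x

theorem prism_cons (f g : V → V) (v : V) (x : OrderedChain V) :
    prism f g (cons v x) = cons (f v) (cons (g v) (map g x)) - cons (f v) (prism f g x) := by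
  have h : prism f g * cons v = cons (f v) * cons (g v) * map g - cons (f v) * prism f g :=
    linearMap_ext fun l => by simp [simplexPrism]
  exact LinearMap.congr_fun h x

theorem map_pow (f : V → V) (j : ℕ) : map f ^ j = map f^[j] := by
  induction j with
  | zero => exact linearMap_ext fun l => by simp
  | succ j ih => rw [pow_succ, ih]; exact linearMap_ext fun l => by simp

theorem simplexBoundary_map (f : V → V) (l : List V) :
    simplexBoundary (l.map f) = map f (simplexBoundary l) := by
  induction l with
  | nil => simp [simplexBoundary]
  | cons v l ih => simp [simplexBoundary, map_cons, ih]

theorem commute_boundary_map (f : V → V) : Commute boundary (map f) :=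
  linearMap_ext fun l => by simp [simplexBoundary_map]

theorem boundary_prism (f g : V → V) :
    boundary * prism f g + prism f g * boundary = map g - map f := by
  refine linearMap_ext fun l => ?_
  simp only [LinearMap.add_apply, End.mul_apply, LinearMap.sub_apply, prism_single,
    boundary_single, map_single]
  induction l with
  | nil => simp [simplexBoundary, simplexPrism]
  | cons v l ih =>
    rw [← eq_sub_iff_add_eq] at ih
    simp only [simplexPrism, simplexBoundary, map_sub, boundary_single, boundary_cons, prism_cons,
      prism_single, ih, cons_single, simplexBoundary_map, List.map_cons]
    abel

theorem boundary_sum_prism (f : ℕ → V → V) {x : OrderedChain V} (hx : boundary x = 0) (m : ℕ) :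
    boundary (∑ s ∈ range m, prism (f s) (f (s + 1)) x) = map (f m) x - map (f 0) x := by
  have hprism (s : ℕ) : boundary (prism (f s) (f (s + 1)) x) = map (f (s + 1)) x - map (f s) x := by
    simpa [hx] using LinearMap.congr_fun (boundary_prism (f s) (f (s + 1))) x
  simp only [map_sum, hprism, sum_range_sub fun s => map (f s) x]

section Support

open Finsupp (supported)

variable {K K' : Set V} {n : ℕ}

/-- Ordered simplices with `n` vertices, all in `K`. -/
def simplices (K : Set V) (n : ℕ) : Set (List V) :=
  {l | l.length = n ∧ ∀ v ∈ l, v ∈ K}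

theorem simplices_mono (h : K ⊆ K') (n : ℕ) : simplices K n ⊆ simplices K' n :=
  fun _ hl => ⟨hl.1, fun v hv => h (hl.2 v hv)⟩

theorem cons_mem_simplices {v : V} {l : List V} (hv : v ∈ K) (hl : l ∈ simplices K n) :
    v :: l ∈ simplices K (n + 1) :=
  ⟨by simp [hl.1], List.forall_mem_cons.2 ⟨hv, hl.2⟩⟩

theorem map_mem_simplices {f : V → V} (hf : Set.MapsTo f K K') {l : List V}
    (hl : l ∈ simplices K n) : l.map f ∈ simplices K' n :=
  ⟨by simp [hl.1], List.forall_mem_map.2 fun v hv => hf (hl.2 v hv)⟩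

theorem cons_mem_supported {v : V} (hv : v ∈ K) {x : OrderedChain V}
    (hx : x ∈ supported ℤ ℤ (simplices K n)) :
    cons v x ∈ supported ℤ ℤ (simplices K (n + 1)) :=
  linearMap_mem_of_mem_supported (fun l hl => by
    rw [cons_single]; exact Finsupp.single_mem_supported ℤ 1 (cons_mem_simplices hv hl)) hx

theorem map_mem_supported {f : V → V} (hf : Set.MapsTo f K K') {x : OrderedChain V}
    (hx : x ∈ supported ℤ ℤ (simplices K n)) : map f x ∈ supported ℤ ℤ (simplices K' n) :=
  linearMap_mem_of_mem_supported (fun l hl => by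
    rw [map_single]; exact Finsupp.single_mem_supported ℤ 1 (map_mem_simplices hf hl)) hx

theorem simplexPrism_mem_supported (f g : V → V) {l : List V} (hl : l ∈ simplices K n) :
    simplexPrism f g l ∈ supported ℤ ℤ (simplices (f '' K ∪ g '' K) (n + 1)) := by
  induction l generalizing n with
  | nil => simp [simplexPrism]
  | cons v l ih =>
    obtain ⟨rfl, hvl⟩ := hl
    obtain ⟨hv, hlK⟩ := List.forall_mem_cons.1 hvl
    have hl : l ∈ simplices K l.length := ⟨rfl, hlK⟩
    have hfv : f v ∈ f '' K ∪ g '' K := Or.inl ⟨v, hv, rfl⟩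
    have hgv : g v ∈ f '' K ∪ g '' K := Or.inr ⟨v, hv, rfl⟩
    have hg : Set.MapsTo g K (f '' K ∪ g '' K) := fun u hu => Or.inr ⟨u, hu, rfl⟩
    exact Submodule.sub_mem _
      (Finsupp.single_mem_supported ℤ 1
        (cons_mem_simplices hfv (cons_mem_simplices hgv (map_mem_simplices hg hl))))
      (cons_mem_supported hfv (ih hl))

section Metric

variable [PseudoMetricSpace V] {δ ε : ℝ}

/-- Ordered simplices with `n` vertices in `K`, any two of them at distance less than `δ`. -/
def smallSimplices (K : Set V) (δ : ℝ) (n : ℕ) : Set (List V) :=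
  {l | l ∈ simplices K n ∧ ∀ u ∈ l, ∀ v ∈ l, dist u v < δ}

theorem smallSimplices_mono (h : K ⊆ K') (δ : ℝ) (n : ℕ) :
    smallSimplices K δ n ⊆ smallSimplices K' δ n :=
  fun _ hl => ⟨simplices_mono h n hl.1, hl.2⟩

theorem supported_smallSimplices_le (K : Set V) (δ : ℝ) (n : ℕ) :
    supported ℤ ℤ (smallSimplices K δ n) ≤ supported ℤ ℤ (simplices K n) :=
  Finsupp.supported_mono fun _ hl => hl.1

theorem simplices_singleton_subset {b : V} (hb : b ∈ K) (hδ : 0 < δ) (n : ℕ) :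
    simplices {b} n ⊆ smallSimplices K δ n := fun l hl =>
  ⟨simplices_mono (Set.singleton_subset_iff.2 hb) n hl, fun u hu v hv => by
    rw [hl.2 u hu, hl.2 v hv, dist_self]; exact hδ⟩

theorem map_mem_supported_smallSimplices {f : V → V} (hf : Set.MapsTo f K K')
    (hδε : ∀ u ∈ K, ∀ v ∈ K, dist u v < δ → dist (f u) (f v) < ε) {x : OrderedChain V}
    (hx : x ∈ supported ℤ ℤ (smallSimplices K δ n)) :
    map f x ∈ supported ℤ ℤ (smallSimplices K' ε n) := by
  refine linearMap_mem_of_mem_supported (fun l hl => ?_) hx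
  rw [map_single]
  refine Finsupp.single_mem_supported ℤ 1 ⟨map_mem_simplices hf hl.1, ?_⟩
  simp only [List.forall_mem_map]
  exact fun u hu v hv => hδε u (hl.1.2 u hu) v (hl.1.2 v hv) (hl.2 u hu v hv)

theorem prism_mem_supported_smallSimplices {f g : V → V} (hf : Set.MapsTo f K K')
    (hg : Set.MapsTo g K K')
    (hff : ∀ u ∈ K, ∀ v ∈ K, dist u v < δ → dist (f u) (f v) < ε)
    (hgg : ∀ u ∈ K, ∀ v ∈ K, dist u v < δ → dist (g u) (g v) < ε)
    (hfg : ∀ u ∈ K, ∀ v ∈ K, dist u v < δ → dist (f u) (g v) < ε) {x : OrderedChain V}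
    (hx : x ∈ supported ℤ ℤ (smallSimplices K δ n)) :
    prism f g x ∈ supported ℤ ℤ (smallSimplices K' ε (n + 1)) := by
  refine linearMap_mem_of_mem_supported (fun l hl => ?_) hx
  rw [prism_single]
  refine Finsupp.supported_mono ?_ (simplexPrism_mem_supported f g
    (K := {v | v ∈ l}) (n := n) ⟨hl.1.1, fun _ hv => hv⟩)
  rintro m ⟨hmn, hm⟩
  refine ⟨⟨hmn, fun u hu => ?_⟩, fun u hu w hw => ?_⟩
  · rcases hm u hu with ⟨v, hv, rfl⟩ | ⟨v, hv, rfl⟩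
    exacts [hf (hl.1.2 v hv), hg (hl.1.2 v hv)]
  · rcases hm u hu with ⟨v, hv, rfl⟩ | ⟨v, hv, rfl⟩ <;>
      rcases hm w hw with ⟨v', hv', rfl⟩ | ⟨v', hv', rfl⟩
    · exact hff v (hl.1.2 v hv) v' (hl.1.2 v' hv') (hl.2 v hv v' hv')
    · exact hfg v (hl.1.2 v hv) v' (hl.1.2 v' hv') (hl.2 v hv v' hv')
    · rw [dist_comm]
      exact hfg v' (hl.1.2 v' hv') v (hl.1.2 v hv) (hl.2 v' hv' v hv)
    · exact hgg v (hl.1.2 v hv) v' (hl.1.2 v' hv') (hl.2 v hv v' hv')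

end Metric

end Support

section Cone

open Finsupp (supported)

variable {V : Type*} [NormedAddCommGroup V] [NormedSpace ℝ V] {K : Set V}

theorem lineMap_mem_convexJoin {b v : V} (hv : v ∈ K) {t : ℝ} (ht : t ∈ Set.Icc (0 : ℝ) 1) :
    AffineMap.lineMap v b t ∈ convexJoin ℝ K {b} :=
  mem_convexJoin.2 ⟨v, hv, b, rfl, by
    rw [segment_eq_image_lineMap]; exact Set.mem_image_of_mem _ ht⟩

theorem isCompact_convexJoin_singleton (hK : IsCompact K) (b : V) :
    IsCompact (convexJoin ℝ K {b}) := by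
  have himage : convexJoin ℝ K {b} =
      (fun q : ℝ × V => AffineMap.lineMap q.2 b q.1) '' (Set.Icc (0 : ℝ) 1 ×ˢ K) := by
    refine Set.Subset.antisymm (fun u hu => ?_) ?_
    · obtain ⟨v, hv, _, rfl, huv⟩ := mem_convexJoin.1 hu
      rw [segment_eq_image_lineMap] at huv
      obtain ⟨t, ht, rfl⟩ := huv
      exact ⟨(t, v), ⟨ht, hv⟩, rfl⟩
    · rintro _ ⟨⟨t, v⟩, ⟨ht, hv⟩, rfl⟩
      exact lineMap_mem_convexJoin hv ht
  rw [himage]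
  refine (isCompact_Icc.prod hK).image ?_
  simp only [AffineMap.lineMap_apply_module]
  fun_prop

theorem dist_lineMap_le (b : V) {t : ℝ} (ht : t ∈ Set.Icc (0 : ℝ) 1) (u v : V) :
    dist (AffineMap.lineMap u b t) (AffineMap.lineMap v b t) ≤ dist u v := by
  have hsub : AffineMap.lineMap u b t - AffineMap.lineMap v b t = (1 - t) • (u - v) := by
    simp only [AffineMap.lineMap_apply_module]; module
  rw [dist_eq_norm, dist_eq_norm, hsub, norm_smul, Real.norm_of_nonneg (sub_nonneg.2 ht.2)]
  exact mul_le_of_le_one_left (norm_nonneg _) (sub_le_self 1 ht.1)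

theorem prism_lineMap_mem_supported {b : V} {t t' δ : ℝ} (ht : t ∈ Set.Icc (0 : ℝ) 1)
    (ht' : t' ∈ Set.Icc (0 : ℝ) 1) (hδ : 0 < δ) (hstep : ∀ v ∈ K, dist t t' * dist v b < δ)
    {n : ℕ} {x : OrderedChain V} (hx : x ∈ supported ℤ ℤ (smallSimplices K δ n)) :
    prism (AffineMap.lineMap · b t) (AffineMap.lineMap · b t') x ∈
      supported ℤ ℤ (smallSimplices (convexJoin ℝ K {b}) (2 * δ) (n + 1)) := by
  refine prism_mem_supported_smallSimplices (fun v hv => lineMap_mem_convexJoin hv ht)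
    (fun v hv => lineMap_mem_convexJoin hv ht') ?_ ?_ ?_ hx <;> intro u _ v hv huv
  · linarith [dist_lineMap_le b ht u v]
  · linarith [dist_lineMap_le b ht' u v]
  · calc dist (AffineMap.lineMap u b t) (AffineMap.lineMap v b t')
        ≤ dist (AffineMap.lineMap u b t) (AffineMap.lineMap v b t) +
          dist (AffineMap.lineMap v b t) (AffineMap.lineMap v b t') := dist_triangle _ _ _
      _ < δ + δ := add_lt_add ((dist_lineMap_le b ht u v).trans_lt huv)
          (by rw [dist_lineMap_lineMap]; exact hstep v hv)
      _ = 2 * δ := by ring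

theorem dist_natCast_div_succ_div (s M : ℕ) :
    dist (s / M : ℝ) ((s + 1 : ℕ) / M) = 1 / M := by
  rw [dist_comm, Real.dist_eq, Nat.cast_succ, ← sub_div, add_sub_cancel_left,
    abs_of_nonneg (by positivity)]

-- The cone from `b` over a small chain is not small, so the chain is first contracted to `b` in
-- small steps, at the cost of one small prism for each step.
theorem exists_boundary_eq_of_mem_smallSimplices (hK : IsCompact K) (hKne : K.Nonempty) (b : V)
    {δ : ℝ} (hδ : 0 < δ) {n : ℕ} {x : OrderedChain V}
    (hx : x ∈ supported ℤ ℤ (smallSimplices K δ n)) (hbx : boundary x = 0) :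
    ∃ z ∈ supported ℤ ℤ (smallSimplices (convexJoin ℝ K {b}) (2 * δ) (n + 1)),
      boundary z = x := by
  obtain ⟨R, hR⟩ := hK.isBounded.subset_closedBall b
  obtain ⟨M, hM⟩ := exists_nat_gt (max (R / δ) 0)
  obtain ⟨hRM, hM0⟩ := max_lt_iff.1 hM
  have hmem {s : ℕ} (hs : s ≤ M) : (s / M : ℝ) ∈ Set.Icc (0 : ℝ) 1 :=
    ⟨by positivity, (div_le_one hM0).2 (mod_cast hs)⟩
  have hstep (s : ℕ) : ∀ v ∈ K, dist (s / M : ℝ) ((s + 1 : ℕ) / M) * dist v b < δ := by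
    intro v hv
    rw [dist_natCast_div_succ_div, one_div_mul_eq_div, div_lt_iff₀ hM0, mul_comm]
    exact (hR hv).trans_lt ((div_lt_iff₀ hδ).1 hRM)
  set f : ℕ → V → V := fun s v => AffineMap.lineMap v b (s / M : ℝ) with hf
  have hf0 : map (f 0) = 1 := by
    rw [show f 0 = id from funext fun v => by simp [hf]]
    exact (map_pow id 0).symm
  have hfM : Set.MapsTo (f M) K {b} := fun v _ => by simp [hf, hM0.ne']
  obtain ⟨v, hv⟩ := hKne
  have hb : b ∈ convexJoin ℝ K {b} := by
    simpa using lineMap_mem_convexJoin (b := b) hv (t := 1) (by simp)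
  refine ⟨cons b (map (f M) x) - ∑ s ∈ range M, prism (f s) (f (s + 1)) x,
    Submodule.sub_mem _ ?_ (Submodule.sum_mem _ fun s hs => ?_), ?_⟩
  · exact Finsupp.supported_mono (simplices_singleton_subset hb (by positivity) _)
      (cons_mem_supported (Set.mem_singleton b)
        (map_mem_supported hfM (supported_smallSimplices_le K δ n hx)))
  · exact prism_lineMap_mem_supported (hmem (mem_range.1 hs).le) (hmem (mem_range.1 hs)) hδ
      (hstep s) hx
  · have hcycle : boundary (map (f M) x) = 0 := by
      rw [← End.mul_apply, (commute_boundary_map _).eq, End.mul_apply, hbx, map_zero]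
    rw [map_sub, boundary_cons, hcycle, boundary_sum_prism f hbx, hf0, map_zero, End.one_apply]
    abel

end Cone

section ResolutionChain

open Finsupp (single supported)

variable {p k : ℕ} {c : V → V} {K K' : Set V} {x : OrderedChain V}

/-- `IsResolutionChain p c K k x` says that `x` is the degree `k` term of the image of the periodic
resolution of the cyclic group of order `p` under an equivariant chain map to the ordered chains on
`K`, where the generator acts through `c`. -/
inductive IsResolutionChain (p : ℕ) (c : V → V) (K : Set V) : ℕ → OrderedChain V → Prop
  | zero {b : V} (hb : b ∈ K) : IsResolutionChain p c K 0 (single [b] 1)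
  | succ {k : ℕ} {x y : OrderedChain V} (hx : IsResolutionChain p c K k x)
      (hy : y ∈ supported ℤ ℤ (simplices K (k + 2)))
      (hxy : boundary y = periodicDifferential p (map c) k x) : IsResolutionChain p c K (k + 1) y

theorem IsResolutionChain.mem_supported (h : IsResolutionChain p c K k x) :
    x ∈ supported ℤ ℤ (simplices K (k + 1)) := by
  cases h with
  | zero hb => exact Finsupp.single_mem_supported ℤ 1 (cons_mem_simplices hb ⟨rfl, by simp⟩)
  | succ _ hy _ => exact hy

theorem IsResolutionChain.mono (hKK' : K ⊆ K') (h : IsResolutionChain p c K k x) :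
    IsResolutionChain p c K' k x := by
  induction h with
  | zero hb => exact zero (hKK' hb)
  | succ _ hy hxy ih => exact succ ih (Finsupp.supported_mono (simplices_mono hKK' _) hy) hxy

theorem boundary_periodicDifferential (p k : ℕ) (c : V → V) (x : OrderedChain V) :
    boundary (periodicDifferential p (map c) k x) =
      periodicDifferential p (map c) k (boundary x) :=
  LinearMap.congr_fun (commute_periodicDifferential (commute_boundary_map c) p k) x

theorem IsResolutionChain.boundary_periodicDifferential_eq_zero (hc : c^[p] = id)
    (h : IsResolutionChain p c K k x) : boundary (periodicDifferential p (map c) k x) = 0 := by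
  rw [boundary_periodicDifferential]
  cases h with
  | zero hb => simp [periodicDifferential_of_even, simplexBoundary]
  | @succ k x y _ _ hxy =>
    have hpow : map c ^ p = 1 := by rw [map_pow, hc]; exact (map_pow id 0).symm
    rw [hxy, ← End.mul_apply, periodicDifferential_succ_mul hpow, LinearMap.zero_apply]

theorem exists_isCompact_superset_mapsTo [TopologicalSpace V] (hp : p ≠ 0) (hc : Continuous c)
    (hcp : c^[p] = id) {Y A : Set V} (hcY : Set.MapsTo c Y Y) (hA : IsCompact A) (hAY : A ⊆ Y) :
    ∃ K, IsCompact K ∧ A ⊆ K ∧ K ⊆ Y ∧ Set.MapsTo c K K := by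
  refine ⟨⋃ j < p, c^[j] '' A, ?_, ?_, ?_, ?_⟩
  · exact (Set.finite_Iio p).isCompact_biUnion fun j _ => hA.image (hc.iterate j)
  · exact fun v hv => Set.mem_iUnion₂.2 ⟨0, Nat.pos_of_ne_zero hp, v, hv, rfl⟩
  · exact Set.iUnion₂_subset fun j _ => ((hcY.iterate j).mono_left hAY).image_subset
  · intro v hv
    obtain ⟨j, hj, a, ha, rfl⟩ := Set.mem_iUnion₂.1 hv
    rw [← iterate_succ_apply' c]
    rcases (Nat.succ_le_of_lt hj).lt_or_eq with hj | hj
    · exact Set.mem_iUnion₂.2 ⟨j + 1, hj, a, ha, rfl⟩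
    · rw [hj, hcp]
      exact Set.mem_iUnion₂.2 ⟨0, Nat.pos_of_ne_zero hp, a, ha, rfl⟩

theorem exists_dist_iterate_lt [PseudoMetricSpace V] (hK : IsCompact K) (hc : Continuous c) (p : ℕ)
    {ε : ℝ} (hε : 0 < ε) :
    ∃ η > 0, ∀ j ≤ p, ∀ u ∈ K, ∀ v ∈ K, dist u v < η → dist (c^[j] u) (c^[j] v) < ε := by
  have hcont : Continuous fun v (j : Fin (p + 1)) => c^[j] v :=
    continuous_pi fun j => hc.iterate j
  obtain ⟨η, hη, h⟩ := Metric.uniformContinuousOn_iff.1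
    (hK.uniformContinuousOn_of_continuous hcont.continuousOn) ε hε
  exact ⟨η, hη, fun j hj u hu v hv huv =>
    (dist_pi_lt_iff hε).1 (h u hu v hv huv) ⟨j, Nat.lt_succ_of_le hj⟩⟩

theorem exists_periodicDifferential_mem_smallSimplices [PseudoMetricSpace V] (hp : p ≠ 0)
    (hK : IsCompact K) (hc : Continuous c) (hcK : Set.MapsTo c K K) {ε : ℝ} (hε : 0 < ε) :
    ∃ η > 0, ∀ n k, ∀ x ∈ supported ℤ ℤ (smallSimplices K η n),
      periodicDifferential p (map c) k x ∈ supported ℤ ℤ (smallSimplices K ε n) := by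
  obtain ⟨η, hη, h⟩ := exists_dist_iterate_lt hK hc p hε
  refine ⟨η, hη, fun n k x hx => periodicDifferential_apply_mem hp (fun j hj => ?_) k⟩
  rw [map_pow]
  exact map_mem_supported_smallSimplices (hcK.iterate j) (h j hj) hx

theorem exists_isResolutionChain {V : Type*} [NormedAddCommGroup V] [NormedSpace ℝ V] {c : V → V}
    (hp : p ≠ 0) (hc : Continuous c) (hcp : c^[p] = id) {Y : Set V} (hY : Convex ℝ Y)
    (hYne : Y.Nonempty) (hcY : Set.MapsTo c Y Y) (k : ℕ) :
    ∃ K, IsCompact K ∧ K.Nonempty ∧ K ⊆ Y ∧ Set.MapsTo c K K ∧ ∀ δ > 0,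
      ∃ x, IsResolutionChain p c K k x ∧ x ∈ supported ℤ ℤ (smallSimplices K δ (k + 1)) := by
  obtain ⟨b, hb⟩ := hYne
  induction k with
  | zero =>
    obtain ⟨K, hK, hbK, hKY, hcK⟩ := exists_isCompact_superset_mapsTo hp hc hcp hcY
      isCompact_singleton (Set.singleton_subset_iff.2 hb)
    rw [Set.singleton_subset_iff] at hbK
    have hb1 : [b] ∈ simplices {b} (0 + 1) := ⟨rfl, by simp⟩
    exact ⟨K, hK, ⟨b, hbK⟩, hKY, hcK, fun δ hδ => ⟨single [b] 1, .zero hbK,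
      Finsupp.single_mem_supported ℤ 1 (simplices_singleton_subset hbK hδ _ hb1)⟩⟩
  | succ k ih =>
    obtain ⟨K, hK, hKne, hKY, hcK, hsmall⟩ := ih
    obtain ⟨K', hK', hconeK', hK'Y, hcK'⟩ := exists_isCompact_superset_mapsTo hp hc hcp hcY
      (isCompact_convexJoin_singleton hK b)
      (convexJoin_subset hKY (Set.singleton_subset_iff.2 hb) hY)
    have hKK' : K ⊆ K' := (subset_convexJoin_left (Set.singleton_nonempty b)).trans hconeK'
    refine ⟨K', hK', hKne.mono hKK', hK'Y, hcK', fun δ hδ => ?_⟩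
    obtain ⟨η, hη, hηδ⟩ :=
      exists_periodicDifferential_mem_smallSimplices hp hK hc hcK (half_pos hδ)
    obtain ⟨x, hx, hxη⟩ := hsmall η hη
    obtain ⟨z, hz, hzx⟩ := exists_boundary_eq_of_mem_smallSimplices hK hKne b (half_pos hδ)
      (hηδ _ k x hxη) (hx.boundary_periodicDifferential_eq_zero hcp)
    rw [show 2 * (δ / 2) = δ by ring] at hz
    have hzK' := Finsupp.supported_mono (smallSimplices_mono hconeK' δ _) hz
    exact ⟨z, (hx.mono hKK').succ (supported_smallSimplices_le K' δ _ hzK') hzx, hzK'⟩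

end ResolutionChain

section Bockstein

open Finsupp (supported linearCombination)

variable {p : ℕ} {c : V → V} {K : Set V} {n : ℕ} {x y z : OrderedChain V}

/-- The integral lift of the coboundary of a `ZMod p`-valued label with values of least absolute
value. -/
def coboundaryLift (ℓ : V → ZMod p) (a b : V) : ℤ :=
  (ℓ b - ℓ a).valMinAbs

/-- The Bockstein of the coboundary of a label: the coboundary of its integral lift, which is
divisible by `p`, divided by `p`. -/
def bockstein (ℓ : V → ZMod p) (a b c : V) : ℤ :=
  (coboundaryLift ℓ b c - coboundaryLift ℓ a c + coboundaryLift ℓ a b) / p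

/-- The cup product of the Bocksteins of a list of labels, a cochain of degree `2 * ls.length`. -/
def bocksteinCup : List (V → ZMod p) → List V → ℤ
  | [], _ => 1
  | ℓ :: ls, v₀ :: v₁ :: v₂ :: l => bockstein ℓ v₀ v₁ v₂ * bocksteinCup ls (v₂ :: l)
  | _ :: _, _ => 0

/-- The cup product of the lifted coboundary of `ℓ` with the Bocksteins of `ls`. -/
def liftCup (ℓ : V → ZMod p) (ls : List (V → ZMod p)) : List V → ℤ
  | v₀ :: v₁ :: l => coboundaryLift ℓ v₀ v₁ * bocksteinCup ls (v₁ :: l)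
  | _ => 0

/-- The cup product of `ℓ` with the Bocksteins of `ls`, modulo `p`. -/
def labelCup (ℓ : V → ZMod p) (ls : List (V → ZMod p)) : List V → ZMod p
  | v₀ :: l => ℓ v₀ * (bocksteinCup ls (v₀ :: l) : ZMod p)
  | [] => 0

section Pairing

variable {R : Type*} [CommRing R]

theorem linearCombination_cons (f : List V → R) (v : V) (x : OrderedChain V) :
    linearCombination ℤ f (cons v x) = linearCombination ℤ (fun l => f (v :: l)) x :=
  Finsupp.linearCombination_mapDomain ..

theorem linearCombination_map (f : List V → R) (c : V → V) (x : OrderedChain V) :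
    linearCombination ℤ f (map c x) = linearCombination ℤ (fun l => f (l.map c)) x :=
  Finsupp.linearCombination_mapDomain ..

theorem linearCombination_mul_left (a : R) (f : List V → R) (x : OrderedChain V) :
    linearCombination ℤ (fun l => a * f l) x = a * linearCombination ℤ f x :=
  (Finsupp.apply_linearCombination ℤ (LinearMap.mulLeft ℤ a) f x).symm

theorem linearCombination_intCast (f : List V → ℤ) (x : OrderedChain V) :
    linearCombination ℤ (fun l => (f l : R)) x = (linearCombination ℤ f x : ℤ) :=
  (Finsupp.apply_linearCombination ℤ (Int.castAddHom R).toIntLinearMap f x).symm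

theorem linearCombination_single_one (f : List V → R) (l : List V) :
    linearCombination ℤ f (Finsupp.single l 1) = f l := by
  simp

end Pairing

theorem intCast_coboundaryLift [NeZero p] (ℓ : V → ZMod p) (a b : V) :
    (coboundaryLift ℓ a b : ZMod p) = ℓ b - ℓ a := by
  simp [coboundaryLift]

theorem mul_bockstein [NeZero p] (ℓ : V → ZMod p) (a b c : V) :
    (p : ℤ) * bockstein ℓ a b c =
      coboundaryLift ℓ b c - coboundaryLift ℓ a c + coboundaryLift ℓ a b := by
  refine Int.mul_ediv_cancel' ((ZMod.intCast_zmod_eq_zero_iff_dvd _ p).1 ?_)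
  push_cast
  simp only [intCast_coboundaryLift]
  ring

theorem bockstein_cocycle [NeZero p] (ℓ : V → ZMod p) (a b c d : V) :
    bockstein ℓ b c d - bockstein ℓ a c d + bockstein ℓ a b d - bockstein ℓ a b c = 0 := by
  refine mul_left_cancel₀ (Nat.cast_ne_zero.2 (NeZero.ne p) : (p : ℤ) ≠ 0) ?_
  simp only [mul_sub, mul_add, mul_bockstein]
  ring

theorem bocksteinCup_cocycle [NeZero p] (ls : List (V → ZMod p)) {l : List V}
    (hl : l.length = 2 * ls.length + 2) :
    linearCombination ℤ (bocksteinCup ls) (simplexBoundary l) = 0 := by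
  induction ls generalizing l with
  | nil =>
    match l, hl with
    | [a, b], _ => simp [simplexBoundary, bocksteinCup]
  | cons ℓ ls ih =>
    match l, hl with
    | v₀ :: v₁ :: v₂ :: v₃ :: l, hl =>
      have hrec := ih (l := v₂ :: v₃ :: l) (by simp at hl ⊢; lia)
      simp only [simplexBoundary, map_sub, linearCombination_cons,
        linearCombination_single_one] at hrec
      simp only [simplexBoundary, map_sub, linearCombination_cons, linearCombination_single_one,
        bocksteinCup, linearCombination_mul_left]
      linear_combination bocksteinCup ls (v₃ :: l) * bockstein_cocycle ℓ v₀ v₁ v₂ v₃ +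
        bockstein ℓ v₀ v₁ v₂ * hrec

theorem linearCombination_liftCup_simplexBoundary [NeZero p] (ℓ : V → ZMod p)
    (ls : List (V → ZMod p)) {l : List V} (hl : l.length = 2 * ls.length + 3) :
    linearCombination ℤ (liftCup ℓ ls) (simplexBoundary l) = p * bocksteinCup (ℓ :: ls) l := by
  match l, hl with
  | v₀ :: v₁ :: v₂ :: l, hl =>
    have hcocycle := bocksteinCup_cocycle ls (l := v₁ :: v₂ :: l) (by simp at hl ⊢; lia)
    simp only [simplexBoundary, map_sub, linearCombination_cons,
      linearCombination_single_one] at hcocycle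
    simp only [simplexBoundary, map_sub, linearCombination_cons, linearCombination_single_one,
      liftCup, bocksteinCup, linearCombination_mul_left]
    linear_combination -bocksteinCup ls (v₂ :: l) * mul_bockstein ℓ v₀ v₁ v₂ -
      coboundaryLift ℓ v₀ v₁ * hcocycle

theorem linearCombination_labelCup_simplexBoundary [NeZero p] (ℓ : V → ZMod p)
    (ls : List (V → ZMod p)) {l : List V} (hl : l.length = 2 * ls.length + 2) :
    linearCombination ℤ (labelCup ℓ ls) (simplexBoundary l) = (liftCup ℓ ls l : ZMod p) := by
  match l, hl with
  | v₀ :: v₁ :: l, hl =>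
    have hcocycle := congrArg (Int.cast : ℤ → ZMod p) (bocksteinCup_cocycle ls hl)
    simp only [simplexBoundary, map_sub, linearCombination_cons,
      linearCombination_single_one] at hcocycle
    push_cast at hcocycle
    simp only [simplexBoundary, map_sub, linearCombination_cons, linearCombination_single_one,
      liftCup, labelCup, linearCombination_mul_left, linearCombination_intCast]
    push_cast
    rw [intCast_coboundaryLift]
    linear_combination ℓ v₀ * hcocycle

theorem coboundaryLift_map {ℓ : V → ZMod p} (hℓ : ∀ v ∈ K, ℓ (c v) = ℓ v + 1) {a b : V}
    (ha : a ∈ K) (hb : b ∈ K) : coboundaryLift ℓ (c a) (c b) = coboundaryLift ℓ a b := by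
  simp [coboundaryLift, hℓ a ha, hℓ b hb]

theorem bocksteinCup_map {ls : List (V → ZMod p)}
    (hls : ∀ ℓ ∈ ls, ∀ v ∈ K, ℓ (c v) = ℓ v + 1) {l : List V} (hl : ∀ v ∈ l, v ∈ K) :
    bocksteinCup ls (l.map c) = bocksteinCup ls l := by
  induction ls generalizing l with
  | nil => simp [bocksteinCup]
  | cons ℓ ls ih =>
    rw [List.forall_mem_cons] at hls
    match l, hl with
    | [], _ | [_], _ | [_, _], _ => rfl
    | v₀ :: v₁ :: v₂ :: l, hl =>
      simp only [List.forall_mem_cons] at hl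
      obtain ⟨h₀, h₁, h₂, hl⟩ := hl
      have hrec := ih hls.2 (l := v₂ :: l) (List.forall_mem_cons.2 ⟨h₂, hl⟩)
      simp only [List.map_cons] at hrec ⊢
      simp only [bocksteinCup, hrec, bockstein, coboundaryLift_map hls.1, h₀, h₁, h₂]

theorem liftCup_map {ℓ : V → ZMod p} {ls : List (V → ZMod p)}
    (hls : ∀ m ∈ ℓ :: ls, ∀ v ∈ K, m (c v) = m v + 1) {l : List V} (hl : ∀ v ∈ l, v ∈ K) :
    liftCup ℓ ls (l.map c) = liftCup ℓ ls l := by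
  rw [List.forall_mem_cons] at hls
  match l, hl with
  | [], _ | [_], _ => rfl
  | v₀ :: v₁ :: l, hl =>
    rw [List.forall_mem_cons] at hl
    have hcup := bocksteinCup_map hls.2 hl.2
    simp only [List.map_cons] at hcup ⊢
    simp only [liftCup, hcup, coboundaryLift_map hls.1 hl.1 (hl.2 v₁ (by simp))]

theorem labelCup_map {ℓ : V → ZMod p} {ls : List (V → ZMod p)}
    (hls : ∀ m ∈ ℓ :: ls, ∀ v ∈ K, m (c v) = m v + 1) {l : List V}
    (hl : l ∈ simplices K (n + 1)) :
    labelCup ℓ ls (l.map c) = labelCup ℓ ls l + (bocksteinCup ls l : ZMod p) := by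
  rw [List.forall_mem_cons] at hls
  match l, hl with
  | v₀ :: l, hl =>
    have hcup := bocksteinCup_map hls.2 hl.2
    simp only [List.map_cons] at hcup ⊢
    simp only [labelCup, hcup, hls.1 v₀ (hl.2 v₀ (by simp))]
    ring

theorem linearCombination_bocksteinCup_cons [NeZero p] (hc : Set.MapsTo c K K)
    {ℓ : V → ZMod p} {ls : List (V → ZMod p)} (hls : ∀ m ∈ ℓ :: ls, ∀ v ∈ K, m (c v) = m v + 1)
    (hy : y ∈ supported ℤ ℤ (simplices K (2 * ls.length + 2)))
    (hz : z ∈ supported ℤ ℤ (simplices K (2 * ls.length + 3)))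
    (hyz : boundary z = ∑ j ∈ range p, (map c ^ j) y) :
    linearCombination ℤ (bocksteinCup (ℓ :: ls)) z = linearCombination ℤ (liftCup ℓ ls) y := by
  have hinv (j : ℕ) : linearCombination ℤ (liftCup ℓ ls) ((map c ^ j) y) =
      linearCombination ℤ (liftCup ℓ ls) y := by
    induction j with
    | zero => simp
    | succ j ih =>
      rw [← ih, pow_succ', End.mul_apply, linearCombination_map, map_pow]
      refine linearMap_eq_of_mem_supported (fun l hl => ?_)
        (map_mem_supported (hc.iterate j) hy)
      rw [linearCombination_single_one, linearCombination_single_one, liftCup_map hls hl.2]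
  refine mul_left_cancel₀ (Nat.cast_ne_zero.2 (NeZero.ne p) : (p : ℤ) ≠ 0) ?_
  calc (p : ℤ) * linearCombination ℤ (bocksteinCup (ℓ :: ls)) z
      = linearCombination ℤ (liftCup ℓ ls) (boundary z) := by
        rw [← linearCombination_mul_left]
        refine linearMap_eq_of_mem_supported (ψ := linearCombination ℤ (liftCup ℓ ls) ∘ₗ boundary)
          (fun l hl => ?_) hz
        simp [linearCombination_liftCup_simplexBoundary ℓ ls hl.1]
    _ = p * linearCombination ℤ (liftCup ℓ ls) y := by simp [hyz, hinv]

theorem intCast_linearCombination_liftCup [NeZero p]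
    {ℓ : V → ZMod p} {ls : List (V → ZMod p)} (hls : ∀ m ∈ ℓ :: ls, ∀ v ∈ K, m (c v) = m v + 1)
    (hx : x ∈ supported ℤ ℤ (simplices K (2 * ls.length + 1)))
    (hy : y ∈ supported ℤ ℤ (simplices K (2 * ls.length + 2)))
    (hxy : boundary y = map c x - x) :
    ((linearCombination ℤ (liftCup ℓ ls) y : ℤ) : ZMod p) =
      (linearCombination ℤ (bocksteinCup ls) x : ℤ) := by
  calc ((linearCombination ℤ (liftCup ℓ ls) y : ℤ) : ZMod p)
      = linearCombination ℤ (labelCup ℓ ls) (boundary y) := by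
        rw [← linearCombination_intCast]
        refine linearMap_eq_of_mem_supported (ψ := linearCombination ℤ (labelCup ℓ ls) ∘ₗ boundary)
          (fun l hl => ?_) hy
        simp [linearCombination_labelCup_simplexBoundary ℓ ls hl.1]
    _ = (linearCombination ℤ (bocksteinCup ls) x : ℤ) := by
        rw [hxy, map_sub, linearCombination_map, sub_eq_iff_eq_add', ← linearCombination_intCast,
          ← LinearMap.add_apply]
        refine linearMap_eq_of_mem_supported (fun l hl => ?_) hx
        simp only [LinearMap.add_apply, linearCombination_single_one, labelCup_map hls hl]

theorem IsResolutionChain.linearCombination_bocksteinCup [NeZero p] (hc : Set.MapsTo c K K)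
    {ls : List (V → ZMod p)} (hls : ∀ ℓ ∈ ls, ∀ v ∈ K, ℓ (c v) = ℓ v + 1)
    (hx : IsResolutionChain p c K (2 * ls.length) x) :
    ((linearCombination ℤ (bocksteinCup ls) x : ℤ) : ZMod p) = 1 := by
  induction ls generalizing x with
  | nil =>
    change IsResolutionChain p c K 0 x at hx
    cases hx
    simp [bocksteinCup]
  | cons ℓ ls ih =>
    change IsResolutionChain p c K (2 * ls.length + 1 + 1) x at hx
    obtain _ | ⟨hy, hx, hyx⟩ := hx
    obtain _ | ⟨hw, hy, hwy⟩ := hy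
    rw [periodicDifferential_of_odd p _ (odd_two_mul_add_one _), LinearMap.sum_apply] at hyx
    rw [periodicDifferential_of_even p _ (even_two_mul _)] at hwy
    rw [linearCombination_bocksteinCup_cons hc hls hy hx hyx,
      intCast_linearCombination_liftCup hls hw.mem_supported hy hwy,
      ih (List.forall_mem_cons.1 hls).2 hw]

theorem bocksteinCup_eq_zero {S : Set V} {ℓ : V → ZMod p} {ls : List (V → ZMod p)} (hℓ : ℓ ∈ ls)
    (hS : ∀ u ∈ S, ∀ v ∈ S, ∀ w ∈ S, bockstein ℓ u v w = 0) {l : List V} (hl : ∀ v ∈ l, v ∈ S) :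
    bocksteinCup ls l = 0 := by
  induction ls generalizing l with
  | nil => simp at hℓ
  | cons m ls ih =>
    match l, hl with
    | [], _ | [_], _ | [_, _], _ => rfl
    | v₀ :: v₁ :: v₂ :: l, hl =>
      simp only [List.forall_mem_cons] at hl
      obtain ⟨h₀, h₁, h₂, hl⟩ := hl
      rcases List.mem_cons.1 hℓ with rfl | hℓ
      · rw [bocksteinCup, hS v₀ h₀ v₁ h₁ v₂ h₂, zero_mul]
      · rw [bocksteinCup, ih hℓ (List.forall_mem_cons.2 ⟨h₂, hl⟩), mul_zero]

theorem coboundaryLift_eq_sub [NeZero p] {ℓ : V → ZMod p} {f : V → ℤ} {u v : V} (hu : ℓ u = f u)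
    (hv : ℓ v = f v) (huv : 2 * |f v - f u| < p) : coboundaryLift ℓ u v = f v - f u := by
  rw [coboundaryLift, ZMod.valMinAbs_spec, hu, hv]
  refine ⟨by push_cast; rfl, ?_, ?_⟩ <;> grind

theorem bockstein_eq_zero_of_lift [NeZero p] {S : Set V} {ℓ : V → ZMod p} {f : V → ℤ}
    (hℓ : ∀ v ∈ S, ℓ v = f v) (hf : ∀ u ∈ S, ∀ v ∈ S, 2 * |f v - f u| < p) :
    ∀ u ∈ S, ∀ v ∈ S, ∀ w ∈ S, bockstein ℓ u v w = 0 := fun u hu v hv w hw => by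
  rw [bockstein, coboundaryLift_eq_sub (hℓ v hv) (hℓ w hw) (hf v hv w hw),
    coboundaryLift_eq_sub (hℓ u hu) (hℓ w hw) (hf u hu w hw),
    coboundaryLift_eq_sub (hℓ u hu) (hℓ v hv) (hf u hu v hv)]
  simp

end Bockstein

end OrderedChain

section Sectors

open Complex

/-- The sector containing `z`, when the plane is cut into `p` sectors of equal angle. -/
noncomputable def sector (p : ℕ) (z : ℂ) : ZMod p :=
  ⌊p * arg z / (2 * Real.pi)⌋

theorem sector_eq (p : ℕ) {z w : ℂ} (hz : z ≠ 0) (hw : w ≠ 0) :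
    sector p w =
      ⌊p * arg z / (2 * Real.pi) + p * arg (w / z) / (2 * Real.pi)⌋ := by
  have hangle : ((arg w : ℝ) : Real.Angle) = ((arg z + arg (w / z) : ℝ) : Real.Angle) := by
    rw [Real.Angle.coe_add, arg_div_coe_angle hw hz, add_sub_cancel]
  obtain ⟨k, hk⟩ := Real.Angle.angle_eq_iff_two_pi_dvd_sub.1 hangle
  have hturn : p * arg w / (2 * Real.pi) =
      p * arg z / (2 * Real.pi) + p * arg (w / z) / (2 * Real.pi) + ((p * k : ℤ) : ℝ) := by
    rw [eq_add_of_sub_eq' hk]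
    push_cast
    field_simp
  rw [sector, hturn, Int.floor_add_intCast]
  simp

theorem arg_stdAddChar_one {p : ℕ} [NeZero p] (hp : 2 < p) :
    arg (ZMod.stdAddChar (1 : ZMod p)) = 2 * Real.pi / p := by
  have hp' : (2 : ℝ) < p := by exact_mod_cast hp
  have hexp : ZMod.stdAddChar (1 : ZMod p) = exp ((2 * Real.pi / p : ℝ) * I) := by
    have hcoe := ZMod.stdAddChar_coe (N := p) 1
    push_cast at hcoe ⊢
    rw [hcoe]
    ring_nf
  rw [hexp, arg_exp_mul_I, toIocMod_eq_self]
  have hpos : 0 < 2 * Real.pi / p := by positivity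
  refine ⟨by linarith [Real.pi_pos], ?_⟩
  rw [div_le_iff₀ (by linarith)]
  nlinarith [Real.pi_pos]

theorem sector_stdAddChar_mul {p : ℕ} [NeZero p] (hp : 2 < p) {z : ℂ} (hz : z ≠ 0) :
    sector p (ZMod.stdAddChar (1 : ZMod p) * z) = sector p z + 1 := by
  have hone : (p : ℝ) * (2 * Real.pi / p) / (2 * Real.pi) = 1 := by
    have : (p : ℝ) ≠ 0 := NeZero.ne _
    field_simp
  rw [sector_eq p hz (mul_ne_zero ((AddChar.val_isUnit _ _).ne_zero) hz),
    mul_div_cancel_right₀ _ hz, arg_stdAddChar_one hp, hone, Int.floor_add_one, Int.cast_add,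
    Int.cast_one, sector]

variable {ι : Type*}

/-- The label of `z ≠ 0` for the index `i`: the sector of the coordinate `z i`, or, when that
coordinate vanishes, of a nonzero coordinate depending only on the support of `z`. -/
noncomputable def sectorLabel [Nonempty ι] (p : ℕ) (i : ι) (z : ι → ℂ) : ZMod p :=
  open Classical in sector p (if z i ≠ 0 then z i else z (Classical.epsilon fun k => z k ≠ 0))

theorem sectorLabel_stdAddChar_smul [Nonempty ι] {p : ℕ} [NeZero p] (hp : 2 < p) (i : ι)
    {z : ι → ℂ} (hz : z ≠ 0) :
    sectorLabel p i (ZMod.stdAddChar (1 : ZMod p) • z) = sectorLabel p i z + 1 := by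
  have hζ : ZMod.stdAddChar (1 : ZMod p) ≠ 0 := (AddChar.val_isUnit _ _).ne_zero
  have hne : z (Classical.epsilon fun k => z k ≠ 0) ≠ 0 :=
    Classical.epsilon_spec (Function.ne_iff.1 hz)
  by_cases hi : z i = 0 <;>
    simp [sectorLabel, hi, hζ, hne, sector_stdAddChar_mul hp]

theorem abs_floor_add_sub_floor_add_le {a s t : ℝ} (hs : |s| < 1 / 2) (ht : |t| < 1 / 2) :
    |⌊a + t⌋ - ⌊a + s⌋| ≤ 1 := by
  rw [abs_lt] at hs ht
  rw [← Int.lt_add_one_iff, ← Int.cast_lt (R := ℝ)]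
  push_cast
  rw [abs_lt]
  constructor <;>
    linarith [Int.floor_le (a + s), Int.lt_floor_add_one (a + s), Int.floor_le (a + t),
      Int.lt_floor_add_one (a + t)]

theorem exists_forall_norm_sub_lt_abs_arg_div_lt {α : ℝ} (hα : 0 < α) :
    ∃ ε > 0, ∀ a z : ℂ, ‖a - z‖ < ε * ‖z‖ → a ≠ 0 ∧ |arg (a / z)| < α := by
  have hnear : ∀ᶠ x in nhds (1 : ℂ), x ≠ 0 ∧ |arg x| < α := by
    refine (eventually_ne_nhds one_ne_zero).and ?_
    have harg : ContinuousAt (fun x => |arg x|) 1 := (continuousAt_arg (by simp)).abs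
    exact harg.eventually (gt_mem_nhds (by simpa using hα))
  obtain ⟨ε, hε, hball⟩ := Metric.eventually_nhds_iff.1 hnear
  refine ⟨ε, hε, fun a z h => ?_⟩
  have hz : z ≠ 0 := by
    rintro rfl
    simp [(norm_nonneg a).not_gt] at h
  have hdist : dist (a / z) 1 < ε := by
    rwa [dist_eq_norm, div_sub_one hz, norm_div, div_lt_iff₀ (norm_pos_iff.2 hz)]
  exact ⟨fun ha => (hball hdist).1 (by simp [ha]), (hball hdist).2⟩

variable [Finite ι] {V : Type*}

theorem exists_forall_dist_lt_abs_arg_div_lt [PseudoMetricSpace V] {K : Set V} (hK : IsCompact K)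
    {w : V → ι → ℂ} (hw : ContinuousOn w K) (hw0 : ∀ v ∈ K, w v ≠ 0) {α : ℝ} (hα : 0 < α) :
    ∃ δ > 0, ∀ v ∈ K, ∃ i, ∀ u ∈ K, dist u v < δ → w u i ≠ 0 ∧ |arg (w u i / w v i)| < α := by
  have := Fintype.ofFinite ι
  obtain ⟨ε, hε, harg⟩ := exists_forall_norm_sub_lt_abs_arg_div_lt hα
  obtain ⟨μ, hμ, hbound⟩ := hK.exists_forall_le' hw.norm fun v hv => norm_pos_iff.2 (hw0 v hv)
  obtain ⟨δ, hδ, hunif⟩ := Metric.uniformContinuousOn_iff.1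
    (hK.uniformContinuousOn_of_continuous hw) (ε * μ) (by positivity)
  refine ⟨δ, hδ, fun v hv => ?_⟩
  obtain ⟨i, hi⟩ : ∃ i, μ ≤ ‖w v i‖ := by
    by_contra! h
    exact ((pi_norm_lt_iff hμ).2 h).not_ge (hbound v hv)
  refine ⟨i, fun u hu huv => harg _ _ ?_⟩
  calc ‖w u i - w v i‖ ≤ dist (w u) (w v) := by
        rw [dist_eq_norm]
        exact norm_le_pi_norm (w u - w v) i
    _ < ε * μ := hunif u hu v hv huv
    _ ≤ ε * ‖w v i‖ := by gcongr

theorem exists_forall_bockstein_sectorLabel_eq_zero [Nonempty ι] [PseudoMetricSpace V] {p : ℕ}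
    [NeZero p] (hp : 2 < p) {K : Set V} (hK : IsCompact K) {w : V → ι → ℂ} (hw : ContinuousOn w K)
    (hw0 : ∀ v ∈ K, w v ≠ 0) :
    ∃ δ > 0, ∀ v ∈ K, ∃ i : ι, ∀ a ∈ {u ∈ K | dist u v < δ}, ∀ b ∈ {u ∈ K | dist u v < δ},
      ∀ c ∈ {u ∈ K | dist u v < δ},
        OrderedChain.bockstein (fun u => sectorLabel p i (w u)) a b c = 0 := by
  have hppos : (0 : ℝ) < p := by positivity
  obtain ⟨δ, hδ, h⟩ := exists_forall_dist_lt_abs_arg_div_lt hK hw hw0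
    (div_pos Real.pi_pos hppos)
  refine ⟨δ, hδ, fun v hv => ?_⟩
  obtain ⟨i, hi⟩ := h v hv
  have hturn {u : V} (hu : u ∈ K) (huv : dist u v < δ) :
      |p * arg (w u i / w v i) / (2 * Real.pi)| < 1 / 2 := by
    have harg := (hi u hu huv).2
    rw [lt_div_iff₀ hppos] at harg
    rw [abs_div, abs_mul, abs_of_pos hppos, abs_of_pos Real.two_pi_pos,
      div_lt_iff₀ Real.two_pi_pos]
    linarith
  have hvi : w v i ≠ 0 := (hi v hv (by simpa using hδ)).1
  refine ⟨i, OrderedChain.bockstein_eq_zero_of_lift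
    (f := fun u => ⌊p * arg (w v i) / (2 * Real.pi) + p * arg (w u i / w v i) / (2 * Real.pi)⌋)
    (fun u hu => ?_) fun a ha b hb => ?_⟩
  · have hui := (hi u hu.1 hu.2).1
    rw [← sector_eq p hvi hui, sectorLabel, if_pos hui]
  · have := abs_floor_add_sub_floor_add_le (a := p * arg (w v i) / (2 * Real.pi))
      (hturn ha.1 ha.2) (hturn hb.1 hb.2)
    lia

end Sectors

section Fourier

open ZMod

section Dft

variable {E : Type*} [AddCommGroup E] [Module ℂ E] {p : ℕ} [NeZero p]

theorem dft_comp_add_right (Φ : ZMod p → E) (a j : ZMod p) :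
    𝓕 (fun k => Φ (k + a)) j = stdAddChar (a * j) • 𝓕 Φ j := by
  rw [dft_apply, dft_apply, Finset.smul_sum]
  refine Fintype.sum_equiv (Equiv.addRight a) _ _ fun k => ?_
  rw [Equiv.coe_addRight, smul_smul, ← AddChar.map_add_eq_mul]
  ring_nf

theorem eq_of_dft_eq_zero {Φ : ZMod p → E} (h : ∀ j ≠ 0, 𝓕 Φ j = 0) (k l : ZMod p) :
    Φ k = Φ l := by
  have hconst (k : ZMod p) : Φ k = (p : ℂ)⁻¹ • 𝓕 Φ 0 := by
    conv_lhs => rw [← dft.symm_apply_apply Φ]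
    rw [invDFT_apply, Finset.sum_eq_single 0 (fun j _ hj => by rw [h j hj, smul_zero]) (by simp)]
    simp
  rw [hconst, hconst]

end Dft

variable {V ι : Type*} {p : ℕ} {c : V → V}

/-- The coordinates of the discrete Fourier transform of `Φ` at `j ≠ 0`, raised to a power which
turns the character `j` into the character `1`. -/
noncomputable def dftPower [NeZero p] (Φ : ZMod p → ι → ℂ) (m : ι × {j : ZMod p // j ≠ 0}) : ℂ :=
  (𝓕 Φ m.2 m.1) ^ (m.2⁻¹ : ZMod p).val

theorem dftPower_shift [Fact p.Prime] (Φ : ZMod p → ι → ℂ) :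
    dftPower (fun k => Φ (k + 1)) = stdAddChar (1 : ZMod p) • dftPower Φ := by
  ext ⟨i, j, hj⟩
  rw [dftPower, dft_comp_add_right, Pi.smul_apply, smul_eq_mul, mul_pow, one_mul, Pi.smul_apply,
    smul_eq_mul, dftPower, ← AddChar.map_nsmul_eq_pow, nsmul_eq_mul, natCast_zmod_val,
    inv_mul_cancel₀ hj]

theorem eq_of_dftPower_eq_zero [NeZero p] {Φ : ZMod p → ι → ℂ} (h : dftPower Φ = 0)
    (k l : ZMod p) : Φ k = Φ l := by
  refine eq_of_dft_eq_zero (fun j hj => funext fun i => ?_) k l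
  have hpow : (𝓕 Φ j i) ^ (j⁻¹ : ZMod p).val = 0 := congrFun h (i, ⟨j, hj⟩)
  exact eq_zero_of_pow_eq_zero hpow

theorem continuous_dftPower [NeZero p] : Continuous (dftPower : (ZMod p → ι → ℂ) → _) := by
  unfold dftPower
  simp only [dft_apply, Finset.sum_apply, Pi.smul_apply]
  fun_prop

/-- The values of `u` along the orbit of `v` under a map of period `p`, as a complex-valued
function on `ZMod p`. -/
def orbitValues (p : ℕ) (c : V → V) (u : V → ι → ℝ) (v : V) (k : ZMod p) (i : ι) : ℂ :=
  u (c^[k.val] v) i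

theorem orbitValues_apply [Fact (1 < p)] (hcp : c^[p] = id) (u : V → ι → ℝ) (v : V) :
    orbitValues p c u (c v) = fun k => orbitValues p c u v (k + 1) := by
  have hper : IsPeriodicPt c p v := congrFun hcp v
  ext k i
  rw [orbitValues, orbitValues, ← iterate_succ_apply, ← hper.iterate_mod_apply, val_add, val_one]

theorem continuousOn_orbitValues [TopologicalSpace V] (hc : Continuous c) {K : Set V}
    (hcK : Set.MapsTo c K K) {u : V → ι → ℝ} (hu : ContinuousOn u K) :
    ContinuousOn (orbitValues p c u) K :=
  continuousOn_pi.2 fun _ => continuousOn_pi.2 fun i =>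
    Complex.continuous_ofReal.comp_continuousOn <| (continuousOn_pi.1 hu i).comp
      (hc.iterate _).continuousOn (hcK.iterate _)

end Fourier

section BorsukUlam

variable {V : Type*} [NormedAddCommGroup V] [NormedSpace ℝ V] {p : ℕ} {c : V → V} {Y : Set V}

theorem exists_isCompact_forall_exists_eq_zero (ι : Type*) [Finite ι] [NeZero p] (hp : 2 < p)
    (hc : Continuous c) (hcp : c^[p] = id) (hY : Convex ℝ Y) (hYne : Y.Nonempty)
    (hcY : Set.MapsTo c Y Y) :
    ∃ K ⊆ Y, IsCompact K ∧ Set.MapsTo c K K ∧ ∀ w : V → ι → ℂ, ContinuousOn w K →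
      (∀ v ∈ K, w (c v) = ZMod.stdAddChar (1 : ZMod p) • w v) → ∃ v ∈ K, w v = 0 := by
  have := Fintype.ofFinite ι
  obtain ⟨K, hK, ⟨v₀, hv₀⟩, hKY, hcK, hchain⟩ := OrderedChain.exists_isResolutionChain (NeZero.ne p)
    hc hcp hY hYne hcY (2 * Fintype.card ι)
  refine ⟨K, hKY, hK, hcK, fun w hw hwc => ?_⟩
  by_contra! hw0
  obtain ⟨i₀, -⟩ := Function.ne_iff.1 (hw0 v₀ hv₀)
  have : Nonempty ι := ⟨i₀⟩
  have : Fact (1 < p) := ⟨by lia⟩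
  obtain ⟨δ, hδ, hsmall⟩ := exists_forall_bockstein_sectorLabel_eq_zero hp hK hw hw0
  obtain ⟨x, hx, hxδ⟩ := hchain δ hδ
  let ls : List (V → ZMod p) := Finset.univ.toList.map fun i u => sectorLabel p i (w u)
  have hlen : ls.length = Fintype.card ι := by simp [ls]
  have hls : ∀ ℓ ∈ ls, ∀ v ∈ K, ℓ (c v) = ℓ v + 1 := by
    simp only [ls, List.forall_mem_map]
    intro i _ v hv
    rw [hwc v hv, sectorLabel_stdAddChar_smul hp i (hw0 v hv)]
  have hone := (hlen.symm ▸ hx : OrderedChain.IsResolutionChain p c K (2 * ls.length) x)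
    |>.linearCombination_bocksteinCup hcK hls
  have hzero : Finsupp.linearCombination ℤ (OrderedChain.bocksteinCup ls) x = 0 := by
    refine linearMap_eq_of_mem_supported (ψ := 0) (fun l hl => ?_) hxδ
    obtain ⟨v, hv⟩ : ∃ v, v ∈ l := List.length_pos_iff_exists_mem.1 (by simp [hl.1.1])
    obtain ⟨i, hi⟩ := hsmall v (hl.1.2 v hv)
    rw [OrderedChain.linearCombination_single_one, LinearMap.zero_apply]
    exact OrderedChain.bocksteinCup_eq_zero (List.mem_map_of_mem (Finset.mem_toList.2 (mem_univ i)))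
      (S := {u ∈ K | dist u v < δ}) hi fun u hu => Set.mem_sep (hl.1.2 u hu) (hl.2 u hu v hv)
  simp [hzero] at hone

theorem exists_isCompact_forall_exists_apply_eq (ι : Type*) [Finite ι] [Fact p.Prime] (hp : 2 < p)
    (hc : Continuous c) (hcp : c^[p] = id) (hY : Convex ℝ Y) (hYne : Y.Nonempty)
    (hcY : Set.MapsTo c Y Y) :
    ∃ K ⊆ Y, IsCompact K ∧ Set.MapsTo c K K ∧ ∀ u : V → ι → ℝ, ContinuousOn u K →
      ∃ v ∈ K, u (c v) = u v := by
  obtain ⟨K, hKY, hK, hcK, hzero⟩ := exists_isCompact_forall_exists_eq_zero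
    (ι × {j : ZMod p // j ≠ 0}) hp hc hcp hY hYne hcY
  refine ⟨K, hKY, hK, hcK, fun u hu => ?_⟩
  have : Fact (1 < p) := ⟨by lia⟩
  obtain ⟨v, hv, h0⟩ := hzero (fun v => dftPower (orbitValues p c u v))
    (continuous_dftPower.comp_continuousOn (continuousOn_orbitValues hc hcK hu))
    fun v _ => by rw [orbitValues_apply hcp, dftPower_shift]
  refine ⟨v, hv, funext fun i => ?_⟩
  have h10 := congrFun (eq_of_dftPower_eq_zero h0 1 0) i
  simpa [orbitValues, ZMod.val_one] using h10

theorem exists_apply_eq_of_iterate_eq_id {F : Type*} [NormedAddCommGroup F] [NormedSpace ℝ F]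
    [FiniteDimensional ℝ F] [Fact p.Prime] (hp : 2 < p) (hc : Continuous c) (hcp : c^[p] = id)
    (hY : Convex ℝ Y) (hYne : Y.Nonempty) (hcY : Set.MapsTo c Y Y) :
    ∃ K ⊆ Y, IsCompact K ∧ Set.MapsTo c K K ∧ ∀ u : V → F, ContinuousOn u K →
      ∃ v ∈ K, u (c v) = u v := by
  let e := (Module.finBasis ℝ F).equivFunL
  obtain ⟨K, hKY, hK, hcK, hu⟩ := exists_isCompact_forall_exists_apply_eq
    (Fin (finrank ℝ F)) hp hc hcp hY hYne hcY
  refine ⟨K, hKY, hK, hcK, fun u hucont => ?_⟩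
  obtain ⟨v, hv, h⟩ := hu (e ∘ u) (e.continuous.comp_continuousOn hucont)
  exact ⟨v, hv, e.injective h⟩

end BorsukUlam

section Transport

open unitInterval

theorem exists_chain_unitInterval {U : Set (I × I)} (hU : U ∈ uniformity I) :
    ∃ (τ : ℕ → I) (n : ℕ), τ 0 = 0 ∧ τ n = 1 ∧ ∀ k, (τ k, τ (k + 1)) ∈ U := by
  obtain ⟨ε, hε, hεU⟩ := Metric.mem_uniformity_dist.1 hU
  obtain ⟨n, hn⟩ := Set.Icc.addNSMul_eq_right (zero_le_one' ℝ) (half_pos hε)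
  refine ⟨Set.Icc.addNSMul (zero_le_one' ℝ) (ε / 2), n, ?_, ?_, fun k => hεU ?_⟩
  · exact Subtype.ext (Set.Icc.addNSMul_zero _)
  · exact Subtype.ext (hn n le_rfl)
  · rw [dist_comm]
    have hmono := Set.Icc.monotone_addNSMul (zero_le_one' ℝ) (half_pos hε).le k.le_succ
    exact (Set.Icc.abs_sub_addNSMul_le _ (half_pos hε).le k ⟨hmono, le_rfl⟩).trans_lt
      (half_lt_self hε)

theorem contDiff_iterate {𝕜 E : Type*} [NontriviallyNormedField 𝕜] [NormedAddCommGroup E]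
    [NormedSpace 𝕜 E] {r : WithTop ℕ∞} {c : E → E} (hc : ContDiff 𝕜 r c) (j : ℕ) :
    ContDiff 𝕜 r c^[j] := by
  induction j with
  | zero => exact contDiff_id
  | succ j ih => exact ih.comp hc

variable {E : Type*} [NormedAddCommGroup E] [NormedSpace ℝ E] {p : ℕ} {c : E → E}

/-- The map from the tangent space at `a` to the tangent space at `z` which moves vectors along the
orbit of `a` by `c^[j]` and back along the orbit of `z` by `c^[p - j]`. -/
noncomputable def orbitTransport (p : ℕ) (c : E → E) (a z : E) (j : ℕ) : E →L[ℝ] E :=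
  fderiv ℝ c^[p - j] (c^[j] z) * fderiv ℝ c^[j] a

/-- Parallel transport from `a` to a nearby point `z`, averaged over the orbits of `c`. -/
noncomputable def transport (p : ℕ) (c : E → E) (a z : E) : E →L[ℝ] E :=
  (p : ℝ)⁻¹ • ∑ j ∈ range p, orbitTransport p c a z j

/-- The composition of the transports along the first `k` steps of a sequence of points. -/
noncomputable def chainTransport (p : ℕ) (c : E → E) (a : ℕ → E) : ℕ → E →L[ℝ] E
  | 0 => 1
  | k + 1 => transport p c (a k) (a (k + 1)) * chainTransport p c a k

theorem continuous_transport (p : ℕ) (hc : ContDiff ℝ 1 c) :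
    Continuous fun q : E × E => transport p c q.1 q.2 := by
  refine (continuous_finsetSum _ fun j _ => ?_).const_smul (p : ℝ)⁻¹
  have hderiv (m : ℕ) : Continuous (fderiv ℝ c^[m]) :=
    (contDiff_iterate hc m).continuous_fderiv one_ne_zero
  exact ((hderiv (p - j)).comp ((hc.continuous.iterate j).comp continuous_snd)).mul
    ((hderiv j).comp continuous_fst)

theorem continuous_chainTransport {X : Type*} [TopologicalSpace X] (hc : ContDiff ℝ 1 c)
    {a : X → ℕ → E} (ha : Continuous a) (k : ℕ) :
    Continuous fun x => chainTransport p c (a x) k := by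
  rw [continuous_pi_iff] at ha
  induction k with
  | zero => exact continuous_const
  | succ k ih =>
    exact ((continuous_transport p hc).comp ((ha k).prodMk (ha (k + 1)))).mul ih

theorem orbitTransport_self (hc : Differentiable ℝ c) (hcp : c^[p] = id) {j : ℕ} (hj : j ≤ p)
    (a : E) : orbitTransport p c a a j = 1 := by
  have hcomp := fderiv_comp a (hc.iterate (p - j) (c^[j] a)) (hc.iterate j a)
  rw [← iterate_add, Nat.sub_add_cancel hj, hcp, fderiv_id] at hcomp
  exact hcomp.symm

theorem transport_self (hp : p ≠ 0) (hc : Differentiable ℝ c) (hcp : c^[p] = id) (a : E) :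
    transport p c a a = 1 := by
  rw [transport, sum_congr rfl fun j hj => orbitTransport_self hc hcp (mem_range.1 hj).le a,
    sum_const, card_range, ← Nat.cast_smul_eq_nsmul ℝ, inv_smul_smul₀ (Nat.cast_ne_zero.2 hp)]

theorem orbitTransport_apply_mul_fderiv (hc : Differentiable ℝ c) (hcp : c^[p] = id) {j : ℕ}
    (hj : j < p) (a z : E) :
    orbitTransport p c (c a) (c z) j * fderiv ℝ c a =
      fderiv ℝ c z * orbitTransport p c a z (j + 1) := by
  have hforth : fderiv ℝ c^[j + 1] a = fderiv ℝ c^[j] (c a) * fderiv ℝ c a :=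
    fderiv_comp a (hc.iterate j (c a)) (hc a)
  have hz : c^[p - (j + 1)] (c^[j + 1] z) = z := by
    rw [← iterate_add_apply, Nat.sub_add_cancel hj, hcp, id]
  have hback : fderiv ℝ c^[p - j] (c^[j + 1] z) =
      fderiv ℝ c z * fderiv ℝ c^[p - (j + 1)] (c^[j + 1] z) := by
    rw [show p - j = p - (j + 1) + 1 by lia, iterate_succ', fderiv_comp _ (hc _) (hc.iterate _ _),
      hz]
    rfl
  rw [orbitTransport, orbitTransport, ← iterate_succ_apply, hback, hforth]
  simp only [mul_assoc]

theorem transport_apply_mul_fderiv (hc : Differentiable ℝ c) (hcp : c^[p] = id) (a z : E) :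
    transport p c (c a) (c z) * fderiv ℝ c a = fderiv ℝ c z * transport p c a z := by
  have hcyclic : ∑ j ∈ range p, orbitTransport p c a z (j + 1) =
      ∑ j ∈ range p, orbitTransport p c a z j := by
    have hends : orbitTransport p c a z p = orbitTransport p c a z 0 := by
      simp [orbitTransport, hcp]
    have hsum := sum_range_succ' (orbitTransport p c a z) p
    rw [sum_range_succ, hends] at hsum
    exact (add_right_cancel hsum).symm
  rw [transport, transport, smul_mul_assoc, mul_smul_comm, sum_mul, ← hcyclic, mul_sum]
  congr 1
  exact sum_congr rfl fun j hj => orbitTransport_apply_mul_fderiv hc hcp (mem_range.1 hj) a z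

theorem chainTransport_comp_mul_fderiv (hc : Differentiable ℝ c) (hcp : c^[p] = id) (a : ℕ → E)
    (k : ℕ) :
    chainTransport p c (c ∘ a) k * fderiv ℝ c (a 0) =
      fderiv ℝ c (a k) * chainTransport p c a k := by
  induction k with
  | zero => simp [chainTransport]
  | succ k ih =>
    rw [chainTransport, chainTransport, mul_assoc, ih, ← mul_assoc, comp_apply, comp_apply,
      transport_apply_mul_fderiv hc hcp, mul_assoc]

theorem isUnit_chainTransport {a : ℕ → E} (h : ∀ k, IsUnit (transport p c (a k) (a (k + 1))))
    (k : ℕ) : IsUnit (chainTransport p c a k) := by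
  induction k with
  | zero => exact isUnit_one
  | succ k ih => exact (h k).mul ih

theorem eventually_uniformity_isUnit_transport [CompleteSpace E] {X : Type*} [UniformSpace X]
    [CompactSpace X] (hp : p ≠ 0) (hc : ContDiff ℝ 1 c) (hcp : c^[p] = id) {K : Set C(X, E)}
    (hK : IsCompact K) :
    ∀ᶠ q in uniformity X, ∀ γ ∈ K, IsUnit (transport p c (γ q.1) (γ q.2)) := by
  rw [← nhdsSet_diagonal_eq_uniformity, eventually_nhdsSet_iff_forall]
  rintro ⟨s, _⟩ (rfl : s = _)
  refine hK.eventually_forall_of_forall_eventually fun γ _ => ?_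
  have hcont : Continuous fun z : (X × X) × C(X, E) => transport p c (z.2 z.1.1) (z.2 z.1.2) :=
    (continuous_transport p hc).comp
      ((continuous_snd.eval continuous_fst.fst).prodMk (continuous_snd.eval continuous_fst.snd))
  refine hcont.continuousAt.eventually (Units.isOpen.mem_nhds ?_)
  simp [transport_self hp (hc.differentiable one_ne_zero) hcp]

end Transport

section Paths

variable {E : Type*} [NormedAddCommGroup E] [NormedSpace ℝ E]

/-- The continuous paths from `x` to `y`. -/
def pathsBetween (x y : E) : Set C(unitInterval, E) :=
  {γ | γ 0 = x ∧ γ 1 = y}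

theorem convex_pathsBetween (x y : E) : Convex ℝ (pathsBetween x y) := by
  rintro γ ⟨h0, h1⟩ γ' ⟨h0', h1'⟩ a b _ _ hab
  constructor <;> simp [h0, h0', h1, h1', ← add_smul, hab]

theorem nonempty_pathsBetween (x y : E) : (pathsBetween x y).Nonempty :=
  ⟨⟨fun t => AffineMap.lineMap x y (t : ℝ), by fun_prop⟩, by simp [pathsBetween]⟩

end Paths

section FixedPoints

variable {E : Type*} [NormedAddCommGroup E] [NormedSpace ℝ E] [FiniteDimensional ℝ E] {p : ℕ}
  [Fact p.Prime] {c : E → E}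

theorem exists_isFixedPt_of_iterate_eq_id (hp : 2 < p) (hc : Continuous c) (hcp : c^[p] = id) :
    ∃ x, IsFixedPt c x := by
  obtain ⟨K, -, -, -, hK⟩ := exists_apply_eq_of_iterate_eq_id (F := E) hp hc hcp convex_univ
    Set.univ_nonempty (Set.mapsTo_univ c _)
  obtain ⟨x, -, hx⟩ := hK id continuousOn_id
  exact ⟨x, hx⟩

theorem isConj_fderiv_of_isFixedPt (hp : 2 < p) (hc : ContDiff ℝ 1 c) (hcp : c^[p] = id) {x y : E}
    (hx : IsFixedPt c x) (hy : IsFixedPt c y) : IsConj (fderiv ℝ c x) (fderiv ℝ c y) := by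
  have : CompleteSpace E := FiniteDimensional.complete ℝ E
  let cc : C(unitInterval, E) → C(unitInterval, E) := ContinuousMap.comp ⟨c, hc.continuous⟩
  have hccp : cc^[p] = id := by
    ext γ t
    have hsemi : Semiconj (fun γ : C(unitInterval, E) => γ t) cc c := fun _ => rfl
    exact ((hsemi.iterate_right p) γ).trans (congrFun hcp _)
  have hccY : Set.MapsTo cc (pathsBetween x y) (pathsBetween x y) := fun γ hγ =>
    ⟨(congrArg c hγ.1).trans hx, (congrArg c hγ.2).trans hy⟩
  obtain ⟨K, hKY, hK, -, hKF⟩ := exists_apply_eq_of_iterate_eq_id (F := E →L[ℝ] E) hp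
    (ContinuousMap.continuous_postcomp _) hccp (convex_pathsBetween x y)
    (nonempty_pathsBetween x y) hccY
  obtain ⟨τ, n, hτ0, hτn, hunit⟩ := exists_chain_unitInterval
    (eventually_uniformity_isUnit_transport (NeZero.ne p) hc hcp hK)
  obtain ⟨γ, hγK, hγ⟩ := hKF (fun γ => chainTransport p c (γ ∘ τ) n)
    (continuous_chainTransport hc
      (continuous_pi fun k => continuous_eval_const (τ k)) n).continuousOn
  obtain ⟨T, hT⟩ := isUnit_chainTransport (a := γ ∘ τ) (fun k => hunit k γ hγK) n
  refine ⟨T, ?_⟩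
  have hconj := chainTransport_comp_mul_fderiv (hc.differentiable one_ne_zero) hcp (γ ∘ τ) n
  rwa [show c ∘ γ ∘ τ = cc γ ∘ τ from rfl, hγ, comp_apply, comp_apply, hτ0, hτn, (hKY hγK).1,
    (hKY hγK).2, ← hT] at hconj

end FixedPoints

section Linearization

theorem eventually_isFixedPt_of_hasStrictFDerivAt_one {𝕜 E : Type*} [NontriviallyNormedField 𝕜]
    [NormedAddCommGroup E] [NormedSpace 𝕜 E] [CompleteSpace E] {p : ℕ} (hp : (p : 𝕜) ≠ 0)
    {c : E → E} (hcp : c^[p] = id) {x : E} (hx : IsFixedPt c x)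
    (hc : HasStrictFDerivAt c (1 : E →L[𝕜] E) x) : ∀ᶠ z in nhds x, IsFixedPt c z := by
  -- The average of the iterates of `c` is `c`-invariant and locally injective at `x`.
  have hinv (z : E) : birkhoffAverage 𝕜 c id p (c z) = birkhoffAverage 𝕜 c id p z := by
    simpa [hcp, sub_eq_zero] using birkhoffAverage_apply_sub_birkhoffAverage (R := 𝕜) c id p z
  have havg : HasStrictFDerivAt (birkhoffAverage 𝕜 c id p)
      (ContinuousLinearEquiv.refl 𝕜 E : E →L[𝕜] E) x := by
    have hsum : HasStrictFDerivAt (birkhoffAverage 𝕜 c id p)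
        ((p : 𝕜)⁻¹ • ∑ k ∈ range p, (1 : E →L[𝕜] E) ^ k) x :=
      (HasStrictFDerivAt.fun_sum fun k _ => hc.iterate hx k).fun_const_smul _
    rwa [sum_congr rfl fun k _ => one_pow k, sum_const, card_range, ← Nat.cast_smul_eq_nsmul 𝕜,
      inv_smul_smul₀ hp] at hsum
  have hleft := havg.eventually_left_inverse
  have htendsto : Filter.Tendsto c (nhds x) (nhds x) := by
    simpa only [hx.eq] using hc.continuousAt.tendsto
  filter_upwards [hleft, htendsto.eventually hleft] with z hz hcz
  rw [hinv, hz] at hcz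
  exact hcz.symm

theorem eq_id_of_fderiv_eq_one {𝕜 E : Type*} [RCLike 𝕜] [NormedAddCommGroup E] [NormedSpace 𝕜 E]
    [CompleteSpace E] {p : ℕ} (hp : p ≠ 0) {c : E → E} (hc : ContDiff 𝕜 1 c) (hcp : c^[p] = id)
    {x : E} (hx : IsFixedPt c x) (hcx : fderiv 𝕜 c x = 1) : c = id := by
  let S : Set E := {z | IsFixedPt c z ∧ fderiv 𝕜 c z = 1}
  have hclosed : IsClosed S := (isClosed_eq hc.continuous continuous_id).inter
    (isClosed_eq (hc.continuous_fderiv one_ne_zero) continuous_const)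
  have hopen : IsOpen S := by
    refine isOpen_iff_eventually.2 fun w ⟨hw, hcw⟩ => ?_
    have hstrict := hcw ▸ hc.contDiffAt.hasStrictFDerivAt (x := w) one_ne_zero
    filter_upwards [(eventually_isFixedPt_of_hasStrictFDerivAt_one (Nat.cast_ne_zero.2 hp) hcp hw
      hstrict).eventually_nhds] with z hz
    have hcz : c =ᶠ[nhds z] id := hz
    exact ⟨hz.self_of_nhds, by rw [hcz.fderiv_eq, fderiv_id]; rfl⟩
  have : NormedSpace ℝ E := NormedSpace.restrictScalars ℝ 𝕜 E
  have huniv : S = Set.univ := IsClopen.eq_univ ⟨hclosed, hopen⟩ ⟨x, hx, hcx⟩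
  exact funext fun z => (huniv.symm ▸ Set.mem_univ z : z ∈ S).1

end Linearization

section Eigenvalues

theorem exists_mem_spectrum_ne_one {K A : Type*} [Field K] [IsAlgClosed K] [Ring A] [Algebra K A]
    [FiniteDimensional K A] {p : ℕ} (hp : (p : K) ≠ 0) {a : A} (hap : a ^ p = 1) (ha : a ≠ 1) :
    ∃ μ ∈ spectrum K a, μ ≠ 1 := by
  have : Nontrivial A := ⟨a, 1, ha⟩
  let Φ : Polynomial K := ∑ i ∈ range p, Polynomial.X ^ i
  have hΦ : Polynomial.aeval a Φ * (a - 1) = 0 := by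
    simp [Φ, geom_sum_mul, hap]
  have hmem : (0 : K) ∈ spectrum K (Polynomial.aeval a Φ) := by
    rw [spectrum.zero_mem_iff]
    exact fun hunit => ha (sub_eq_zero.1 (hunit.mul_right_eq_zero.1 hΦ))
  rw [spectrum.map_polynomial_aeval_of_nonempty a Φ
    (spectrum.nonempty_of_isAlgClosed_of_finiteDimensional K a)] at hmem
  obtain ⟨μ, hμ, hΦμ⟩ := hmem
  refine ⟨μ, hμ, ?_⟩
  rintro rfl
  exact hp (by simpa [Φ, Polynomial.eval_finsetSum] using hΦμ)

theorem spectrum_eq_of_isConj {R A : Type*} [CommSemiring R] [Ring A] [Algebra R A] {a b : A}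
    (h : IsConj a b) : spectrum R a = spectrum R b := by
  obtain ⟨u, hu⟩ := h
  rw [(Units.eq_mul_inv_iff_mul_eq u).2 hu.eq.symm, spectrum.units_conjugate]

theorem ncard_spectrum_le_finrank {K V : Type*} [Field K] [AddCommGroup V] [Module K V]
    [FiniteDimensional K V] (L : End K V) : (spectrum K L).ncard ≤ finrank K V := by
  classical
  have hsub : spectrum K L ⊆ L.charpoly.roots.toFinset := fun μ hμ => by
    simpa [L.charpoly_monic.ne_zero] using (L.mem_spectrum_iff_isRoot_charpoly μ).1 hμ
  calc (spectrum K L).ncard ≤ L.charpoly.roots.toFinset.card := by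
        simpa using Set.ncard_le_ncard hsub (finite_toSet _)
    _ ≤ L.charpoly.roots.card := Multiset.toFinset_card_le _
    _ ≤ L.charpoly.natDegree := Polynomial.card_roots' _
    _ = finrank K V := L.charpoly_natDegree

theorem sub_one_le_ncard_spectrum {K V : Type*} [Field K] [IsAlgClosed K] [AddCommGroup V]
    [Module K V] [FiniteDimensional K V] {p : ℕ} [Fact p.Prime] (hp : (p : K) ≠ 0) {L : End K V}
    (hLp : L ^ p = 1) (hL : L ≠ 1) (hconj : ∀ j, 0 < j → j < p → IsConj L (L ^ j)) :
    p - 1 ≤ (spectrum K L).ncard := by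
  have : Nontrivial (End K V) := ⟨L, 1, hL⟩
  obtain ⟨μ, hμ, hμ1⟩ := exists_mem_spectrum_ne_one hp hLp hL
  have hμp : μ ^ p = 1 := by simpa [hLp] using spectrum.pow_mem_pow L p hμ
  have hprim : IsPrimitiveRoot μ p := orderOf_eq_prime hμp hμ1 ▸ IsPrimitiveRoot.orderOf μ
  have hinj : Set.InjOn (μ ^ ·) (Set.Ioo 0 p) := fun i hi j hj => hprim.pow_inj hi.2 hj.2
  have hsub : (μ ^ ·) '' Set.Ioo 0 p ⊆ spectrum K L := by
    rintro _ ⟨j, ⟨h0, hjp⟩, rfl⟩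
    rw [spectrum_eq_of_isConj (R := K) (hconj j h0 hjp)]
    exact spectrum.pow_mem_pow L j hμ
  calc p - 1 = ((μ ^ ·) '' Set.Ioo 0 p).ncard := by
        rw [hinj.ncard_image, ← coe_Ioo, Set.ncard_coe_finset, Nat.card_Ioo, Nat.sub_zero]
    _ ≤ (spectrum K L).ncard := Set.ncard_le_ncard hsub L.finite_spectrum

theorem sub_one_le_finrank_of_isConj_pow {K V : Type*} [Field K] [AddCommGroup V] [Module K V]
    [FiniteDimensional K V] {p : ℕ} [Fact p.Prime] (hp : (p : K) ≠ 0) {L : End K V}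
    (hLp : L ^ p = 1) (hL : L ≠ 1) (hconj : ∀ j, 0 < j → j < p → IsConj L (L ^ j)) :
    p - 1 ≤ finrank K V := by
  let ψ := Module.End.baseChangeHom K (AlgebraicClosure K) V
  have hψ : Injective ψ := LinearMap.baseChangeHom_injective ..
  have hp' : (p : AlgebraicClosure K) ≠ 0 := by
    rwa [← map_natCast (algebraMap K _), map_ne_zero]
  rw [← finrank_baseChange (R := AlgebraicClosure K) (S := K)]
  refine (sub_one_le_ncard_spectrum (L := ψ L) hp' ?_ ?_ ?_).trans (ncard_spectrum_le_finrank _)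
  · rw [← map_pow, hLp, map_one]
  · exact fun h => hL (hψ (h.trans (map_one ψ).symm))
  · exact fun j h0 hj => map_pow ψ L j ▸ (MonoidHomClass.toMonoidHom ψ).map_isConj (hconj j h0 hj)

end Eigenvalues

section Derivatives

theorem isConj_fderiv_of_semiconj {𝕜 E : Type*} [NontriviallyNormedField 𝕜] [NormedAddCommGroup E]
    [NormedSpace 𝕜 E] {f g : E → E} {h : Equiv.Perm E} {x : E} (hfx : IsFixedPt f x)
    (hf : DifferentiableAt 𝕜 f x) (hg : DifferentiableAt 𝕜 g (h x)) (hh : DifferentiableAt 𝕜 h x)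
    (hh' : DifferentiableAt 𝕜 h.symm (h x)) (hsemi : Semiconj h f g) :
    IsConj (fderiv 𝕜 f x) (fderiv 𝕜 g (h x)) := by
  have hleft : fderiv 𝕜 h.symm (h x) * fderiv 𝕜 h x = 1 := by
    have hcomp := fderiv_comp x hh' hh
    rw [h.symm_comp_self, fderiv_id] at hcomp
    exact hcomp.symm
  have hright : fderiv 𝕜 h x * fderiv 𝕜 h.symm (h x) = 1 := by
    have hcomp := fderiv_comp (h x) (by rwa [h.symm_apply_apply]) hh'
    rw [h.self_comp_symm, fderiv_id, h.symm_apply_apply] at hcomp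
    exact hcomp.symm
  refine ⟨⟨_, _, hright, hleft⟩, ?_⟩
  have hcomp := fderiv_comp x (by rwa [hfx.eq]) hf
  rw [hsemi.comp_eq, hfx.eq, fderiv_comp x hg hh] at hcomp
  exact hcomp.symm

end Derivatives

section Actions

variable {E : Type*} [NormedAddCommGroup E] [NormedSpace ℝ E] [FiniteDimensional ℝ E] {p : ℕ}
  [hp : Fact p.Prime]

theorem isConj_fderiv_pow {G : Type*} [Group G] (hp2 : 2 < p) {ρ : G →* Equiv.Perm E}
    (hρ : ∀ g, ContDiff ℝ 1 (ρ g)) {g : G} (hgp : g ^ p = 1) {x : E} (hx : IsFixedPt (ρ g) x)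
    {j : ℕ} (hj : IsConj g (g ^ j)) : IsConj (fderiv ℝ (ρ g) x) (fderiv ℝ (ρ g) x ^ j) := by
  have hiter (k : ℕ) : (ρ g)^[k] = ρ (g ^ k) := by rw [map_pow, Equiv.Perm.coe_pow]
  have hρp : (ρ g)^[p] = id := by rw [hiter, hgp, map_one, Equiv.Perm.coe_one]
  have hdiff (k : G) : Differentiable ℝ (ρ k) := (hρ k).differentiable one_ne_zero
  obtain ⟨h, hh⟩ := isConj_iff.1 hj.symm
  have hsemi : Semiconj (ρ h) (ρ (g ^ j)) (ρ g) := fun z => by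
    rw [← Equiv.Perm.mul_apply, ← Equiv.Perm.mul_apply, ← map_mul, ← map_mul,
      mul_inv_eq_iff_eq_mul.1 hh]
  have hxj : IsFixedPt (ρ (g ^ j)) x := hiter j ▸ hx.iterate j
  have hpow : fderiv ℝ (ρ (g ^ j)) x = fderiv ℝ (ρ g) x ^ j :=
    hiter j ▸ ((hdiff g x).hasFDerivAt.iterate hx j).fderiv
  have hsymm : DifferentiableAt ℝ (ρ h).symm (ρ h x) := by
    simpa only [map_inv] using! hdiff h⁻¹ (ρ h x)
  refine (isConj_fderiv_of_isFixedPt hp2 (hρ g) hρp hx (hxj.map hsemi)).trans ?_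
  rw [← hpow]
  exact (isConj_fderiv_of_semiconj hxj (hdiff _ x) (hdiff g _) (hdiff h x) hsymm hsemi).symm

theorem sub_one_le_finrank_of_hom_perm {G : Type*} [Group G] {ρ : G →* Equiv.Perm E}
    (hρ : ∀ g, ContDiff ℝ 1 (ρ g)) {g : G} (hgp : g ^ p = 1) (hρg : ρ g ≠ 1)
    (hconj : ∀ j, 0 < j → j < p → IsConj g (g ^ j)) : p - 1 ≤ finrank ℝ E := by
  have : Nontrivial (Equiv.Perm E) := ⟨_, _, hρg⟩
  have : Nontrivial E := by
    by_contra hE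
    rw [not_nontrivial_iff_subsingleton] at hE
    exact hρg (Subsingleton.elim _ _)
  obtain rfl | hp2 := hp.out.two_le.eq_or_lt
  · exact finrank_pos
  have hρp : (ρ g)^[p] = id := by
    rw [← Equiv.Perm.coe_pow, ← map_pow, hgp, map_one, Equiv.Perm.coe_one]
  obtain ⟨x, hx⟩ := exists_isFixedPt_of_iterate_eq_id hp2 (hρ g).continuous hρp
  let L : E →L[ℝ] E := fderiv ℝ (ρ g) x
  have hLp : L ^ p = 1 := by
    have hiter := ((hρ g).differentiable one_ne_zero x).hasFDerivAt.iterate hx p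
    rw [hρp] at hiter
    exact hiter.unique (hasFDerivAt_id x)
  have hL : L ≠ 1 := fun hL1 => hρg <| DFunLike.coe_injective <|
    eq_id_of_fderiv_eq_one hp.out.ne_zero (hρ g) hρp hx hL1
  let ψ : (E →L[ℝ] E) →+* End ℝ E := ContinuousLinearMap.toLinearMapRingHom
  have hψ : Injective ψ := ContinuousLinearMap.coe_injective
  refine sub_one_le_finrank_of_isConj_pow (p := p) (L := ψ L) (Nat.cast_ne_zero.2 hp.out.ne_zero)
    (by rw [← map_pow, hLp, map_one]) (fun h => hL (hψ (h.trans (map_one ψ).symm)))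
    fun j h0 hj => ?_
  rw [← map_pow]
  exact (MonoidHomClass.toMonoidHom ψ).map_isConj (isConj_fderiv_pow hp2 hρ hgp hx (hconj j h0 hj))

end Actions

section SymmetricGroup

theorem isConj_pow_of_isCycle {α : Type*} [Finite α] {σ : Equiv.Perm α} (hσ : σ.IsCycle)
    (hprime : (orderOf σ).Prime) {j : ℕ} (h0 : 0 < j) (hj : j < orderOf σ) :
    IsConj σ (σ ^ j) := by
  classical
  have := Fintype.ofFinite α
  refine hσ.isConj (hσ.isCycle_pow_pos_of_lt_prime_order hprime j h0 hj) ?_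
  rw [hσ.support_pow_of_pos_of_lt_orderOf h0 hj]

theorem sub_one_le_finrank_of_injective_hom_perm {α E : Type*} [Finite α] [NormedAddCommGroup E]
    [NormedSpace ℝ E] [FiniteDimensional ℝ E] {ρ : Equiv.Perm α →* Equiv.Perm E}
    (hinj : Injective ρ) (hρ : ∀ g, ContDiff ℝ 1 (ρ g)) {σ : Equiv.Perm α} (hσ : σ.IsCycle)
    (hprime : (orderOf σ).Prime) : orderOf σ - 1 ≤ finrank ℝ E := by
  have := Fact.mk hprime
  exact sub_one_le_finrank_of_hom_perm hρ (pow_orderOf_eq_one σ)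
    ((map_ne_one_iff ρ hinj).2 hσ.ne_one) fun j h0 hj => isConj_pow_of_isCycle hσ hprime h0 hj

end SymmetricGroup

section StandardRepresentation

variable {K ι : Type*} [Field K] [Fintype ι]

variable (K ι) in
/-- The hyperplane of vectors in `ι → K` whose coordinates sum to zero, the space of the standard
representation of the symmetric group of `ι`. -/
def sumZero : Submodule K (ι → K) :=
  LinearMap.ker (∑ i, LinearMap.proj i)

theorem mem_sumZero {v : ι → K} : v ∈ sumZero K ι ↔ ∑ i, v i = 0 := by
  simp [sumZero]

theorem finrank_sumZero : finrank K (sumZero K ι) = Fintype.card ι - 1 := by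
  classical
  cases isEmpty_or_nonempty ι
  · simp [finrank_zero_of_subsingleton]
  have hne : (∑ i, LinearMap.proj i : Dual K (ι → K)) ≠ 0 := fun h => by
    simpa using LinearMap.congr_fun h (Pi.single (Classical.arbitrary ι) 1)
  rw [← finrank_fintype_fun_eq_card K, ← Dual.finrank_ker_add_one_of_ne_zero hne]
  rfl

theorem comp_inv_mem_sumZero (g : Equiv.Perm ι) {v : ι → K} (hv : v ∈ sumZero K ι) :
    v ∘ ⇑g⁻¹ ∈ sumZero K ι :=
  mem_sumZero.2 ((Equiv.sum_comp g⁻¹ v).trans (mem_sumZero.1 hv))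

variable (K ι) in
/-- The standard representation of the symmetric group of `ι`, permuting the coordinates of the
vectors of `sumZero K ι`; the inverse makes it a left action. -/
def standardRep : Representation K (Equiv.Perm ι) (sumZero K ι) where
  toFun g := (LinearMap.funLeft K K ⇑g⁻¹).restrict fun _ => comp_inv_mem_sumZero g
  map_one' := rfl
  map_mul' _ _ := by ext; simp [LinearMap.funLeft]

theorem injective_standardRep (hK : (2 : K) ≠ 0) : Injective (standardRep K ι) := by
  classical
  refine (injective_iff_map_eq_one _).2 fun g hg => Equiv.ext fun i => ?_
  by_contra hi : ¬g i = i
  let v : ι → K := Pi.single i 1 - Pi.single (g i) 1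
  have hv : v ∈ sumZero K ι := mem_sumZero.2 (by simp [v])
  have hgv : v (g⁻¹ i) = v i := congrFun (congrArg Subtype.val (LinearMap.congr_fun hg ⟨v, hv⟩)) i
  have hgi : g⁻¹ i ≠ i := fun h => hi (Equiv.Perm.inv_eq_iff_eq.1 h).symm
  simp only [v, Pi.sub_apply, Pi.single_apply, hgi, Ne.symm hi, if_true, if_false] at hgv
  split_ifs at hgv
  · exact hK (by linear_combination -hgv)
  · simp at hgv

theorem exists_injective_hom_generalLinearGroup {G V : Type*} [Group G] [AddCommGroup V]
    [Module K V] [FiniteDimensional K V] {n : ℕ} (hn : finrank K V = n) {ρ : Representation K G V}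
    (hρ : Injective ρ) : ∃ f : G →* Matrix.GeneralLinearGroup (Fin n) K, Injective f := by
  let e := LinearMap.toMatrixAlgEquiv (finBasisOfFinrankEq K V hn)
  refine ⟨((MonoidHomClass.toMonoidHom e).comp ρ).toHomUnits, fun g h hgh => hρ (e.injective ?_)⟩
  exact congrArg Units.val hgh

end StandardRepresentation

universe u

theorem minimal_euclidean_action_symmetric_group_general (p : ℕ) (hp : p.Prime) :
    (∀ (E : Type u) [NormedAddCommGroup E] [NormedSpace ℝ E] [FiniteDimensional ℝ E]
      (ρ : Equiv.Perm (Fin p) →* Equiv.Perm E),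
      Injective ρ → (∀ g, ContDiff ℝ 1 (ρ g)) → p - 1 ≤ finrank ℝ E) ∧
    (∃ f : Equiv.Perm (Fin p) →* Matrix.GeneralLinearGroup (Fin (p - 1)) ℝ, Injective f) := by
  constructor
  · intro E _ _ _ ρ hinj hρ
    have hcycle := isCycle_finRotate_of_le hp.two_le
    have horder : orderOf (finRotate p) = p := by
      rw [hcycle.orderOf, support_finRotate_of_le hp.two_le, card_univ, Fintype.card_fin]
    simpa only [horder] using
      sub_one_le_finrank_of_injective_hom_perm hinj hρ hcycle (horder.symm ▸ hp)
  · exact exists_injective_hom_generalLinearGroup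
      (finrank_sumZero.trans (by rw [Fintype.card_fin])) (injective_standardRep two_ne_zero)

/-- For an odd prime `p`: if the symmetric group `S_p` acts faithfully by diffeomorphisms
on `ℝⁿ`, then `n ≥ p - 1`; this bound is sharp, being realized by the standard
`(p-1)`-dimensional real linear representation of `S_p`. -/
theorem minimal_euclidean_action_symmetric_group (p : ℕ) (hp : p.Prime) (hpodd : Odd p) :
    (∀ (n : ℕ) (ρ : Equiv.Perm (Fin p) →* Equiv.Perm (EuclideanSpace ℝ (Fin n))),
      Function.Injective ρ → (∀ g, ContDiff ℝ (⊤ : ℕ∞) (ρ g)) → p - 1 ≤ n) ∧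
    (∃ f : Equiv.Perm (Fin p) →* Matrix.GeneralLinearGroup (Fin (p - 1)) ℝ,
      Function.Injective f) := by
  obtain ⟨hbound, hrep⟩ := minimal_euclidean_action_symmetric_group_general p hp
  exact ⟨fun n ρ hinj hρ => (hbound _ ρ hinj fun g => (hρ g).of_le (mod_cast le_top)).trans_eq
    finrank_euclideanSpace_fin, hrep⟩
end

section
/- Let p be a prime with p ≡ 3 (mod 4), p > 5. If the alternating group A_p on p letters acts faithfully by diffeomorphisms on Euclidean space R^n, then n ≥ p − 1. -/
/-!
Let `g` be a continuous self-map of `ℝⁿ` of prime order `p`. Smith theory says that its fixed point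
set is nonempty and connected: take as `g`-invariant cycle the empty simplex, or the difference of
two fixed points. Filling in arbitrarily fine simplices gives a tower of chains `c₀, c₁, …` with
`∂ c₀` the given cycle and `∂ cₖ₊₁ = Tₖ cₖ`, where `Tₖ` is alternately `1 - g` and
`1 + g + ⋯ + g ^ (p - 1)`. If there were no fixed point, or if a `g`-invariant function without
zeros on the fixed point set separated the two fixed points, an equivariant labelling of `ℝⁿ` by
finitely many labels would map the tower to alternating chains of a finite complex on which
`ker Tₖ = im Tₖ₊₁`. The image of the top chain is `0`, and descending the tower shows that the cycle
has coefficient `0` mod `p` on every simplex of fixed labels, a contradiction.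

Now let `t` act on `ℝⁿ` with order `p` and let `F` be the derivative of `t` at a fixed point. The
trace of the derivative of `t ^ k` takes finitely many values on the connected fixed point set, so
it is constant there. If each `t ^ k ≠ 1` is conjugate to `t` or `t⁻¹`, it follows that all the
traces of the `F ^ k` with `p ∤ k` agree, hence that the `p - 1` nontrivial `p`-th roots of unity
are eigenvalues of `F` of the same multiplicity. If `n < p - 1`, this multiplicity is `0`, so
`F = 1`, and a map of finite order with derivative `1` at a fixed point is the identity. In the
alternating group on `ZMod p` with `p ≡ 3 (mod 4)`, a translation is such an element `t`: one of
`k`, `-k` is a square `b ^ 2`, and the square of multiplication by `b` is even.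
-/

open Finsupp
open scoped Pointwise

namespace SmithTheory

section OrderedChain

variable {R X Y : Type*} [CommRing R]

/-- The augmented chain complex of all ordered simplices with vertices in `X`, ungraded: a list with
`k + 1` entries is an ordered `k`-simplex, and the empty list spans degree `-1`. -/
abbrev OrderedChain (R X : Type*) [CommRing R] := List X →₀ R

/-- The cone with apex `x`, which adds `x` as the first vertex of every simplex. -/
noncomputable def cone (x : X) : OrderedChain R X →ₗ[R] OrderedChain R X :=
  lmapDomain R R (List.cons x)

@[simp]
theorem cone_single (x : X) (l : List X) (r : R) : cone x (single l r) = single (x :: l) r :=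
  mapDomain_single

theorem hom_ext_cone {M : Type*} [AddCommMonoid M] [Module R M] {φ ψ : OrderedChain R X →ₗ[R] M}
    (nil : φ (single [] 1) = ψ (single [] 1))
    (cone : ∀ x c, φ c = ψ c → φ (cone x c) = ψ (cone x c)) : φ = ψ := by
  refine lhom_ext' fun l ↦ LinearMap.ext_ring ?_
  induction l with
  | nil => exact nil
  | cons x l ih => simpa using cone x _ ih

/-- The signed sum of the faces of an ordered simplex, each weighted by the value of `w` at the
vertex it omits. -/
noncomputable def contractSimplex (w : X → R) : List X → OrderedChain R X
  | [] => 0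
  | x :: l => w x • single l 1 - cone x (contractSimplex w l)

/-- Contraction with a weight function on the vertices. -/
noncomputable def contraction (w : X → R) : OrderedChain R X →ₗ[R] OrderedChain R X :=
  linearCombination R (contractSimplex w)

@[simp]
theorem contraction_nil (w : X → R) (r : R) : contraction w (single [] r) = 0 := by
  simp [contraction, contractSimplex]

@[simp]
theorem contraction_cone (w : X → R) (x : X) (c : OrderedChain R X) :
    contraction w (cone x c) = w x • c - cone x (contraction w c) := by
  induction c using Finsupp.induction_linear with
  | zero => simp
  | add c d hc hd => simp only [map_add, hc, hd, smul_add]; abel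
  | single l r =>
    simp [contraction, contractSimplex, smul_sub, mul_comm]

@[simp]
theorem contraction_singleton (w : X → R) (x : X) (r : R) :
    contraction w (single [x] r) = single [] (w x * r) := by
  simp [← cone_single]

theorem contraction_add (v w : X → R) (c : OrderedChain R X) :
    contraction (v + w) c = contraction v c + contraction w c := by
  suffices contraction (v + w) = contraction v + contraction w from LinearMap.congr_fun this c
  refine hom_ext_cone (by simp) fun x c ih ↦ ?_
  simp only [LinearMap.add_apply] at ih
  simp only [contraction_cone, ih, Pi.add_apply, add_smul, LinearMap.add_apply, map_add]
  abel

theorem contraction_sum {ι : Type*} (s : Finset ι) (w : ι → X → R) (c : OrderedChain R X) :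
    contraction (∑ i ∈ s, w i) c = ∑ i ∈ s, contraction (w i) c :=
  map_sum (AddMonoidHom.mk' (contraction · c) (contraction_add · · c)) w s

theorem contraction_contraction_self (w : X → R) (c : OrderedChain R X) :
    contraction w (contraction w c) = 0 := by
  suffices contraction w ∘ₗ contraction w = 0 from LinearMap.congr_fun this c
  refine hom_ext_cone (by simp) fun x c ih ↦ ?_
  simp only [LinearMap.comp_apply, LinearMap.zero_apply] at ih
  simp [ih]

theorem contraction_contraction_swap (v w : X → R) (c : OrderedChain R X) :
    contraction v (contraction w c) = -contraction w (contraction v c) := by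
  have h := contraction_contraction_self (v + w) c
  simp only [contraction_add, map_add, contraction_contraction_self, zero_add, add_zero] at h
  exact eq_neg_of_add_eq_zero_right h

/-- The simplicial boundary, augmented in degree `0`. -/
noncomputable def boundary : OrderedChain R X →ₗ[R] OrderedChain R X :=
  contraction 1

@[simp]
theorem boundary_nil (r : R) : boundary (single ([] : List X) r) = 0 :=
  contraction_nil _ r

@[simp]
theorem boundary_singleton (x : X) (r : R) : boundary (single [x] r) = single [] r := by
  simp [boundary]

@[simp]
theorem boundary_cone (x : X) (c : OrderedChain R X) :
    boundary (cone x c) = c - cone x (boundary c) := by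
  simp [boundary]

/-- The chain map induced by a map of vertices. -/
noncomputable def mapVertices (f : X → Y) : OrderedChain R X →ₗ[R] OrderedChain R Y :=
  lmapDomain R R (List.map f)

@[simp]
theorem mapVertices_single (f : X → Y) (l : List X) (r : R) :
    mapVertices f (single l r) = single (l.map f) r :=
  mapDomain_single

@[simp]
theorem mapVertices_cone (f : X → Y) (x : X) (c : OrderedChain R X) :
    mapVertices f (cone x c) = cone (f x) (mapVertices f c) := by
  induction c using Finsupp.induction_linear with
  | zero => simp
  | add c d hc hd => simp only [map_add, hc, hd]
  | single l r => simp

theorem mapVertices_id (c : OrderedChain R X) : mapVertices id c = c := by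
  simp [mapVertices]

theorem mapVertices_mapVertices {Z : Type*} (f : Y → Z) (g : X → Y) (c : OrderedChain R X) :
    mapVertices f (mapVertices g c) = mapVertices (f ∘ g) c := by
  simp only [mapVertices, lmapDomain_apply, ← mapDomain_comp, List.map_comp_map]

theorem contraction_mapVertices (f : X → Y) (w : Y → R) (c : OrderedChain R X) :
    contraction w (mapVertices f c) = mapVertices f (contraction (w ∘ f) c) := by
  suffices contraction w ∘ₗ mapVertices f = mapVertices f ∘ₗ contraction (w ∘ f) from
    LinearMap.congr_fun this c
  refine hom_ext_cone (by simp) fun x c ih ↦ ?_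
  simp only [LinearMap.comp_apply] at ih
  simp [ih]

theorem boundary_mapVertices (f : X → Y) (c : OrderedChain R X) :
    boundary (mapVertices f c) = mapVertices f (boundary c) :=
  contraction_mapVertices f 1 c

/-- The ordered simplices of the prism over a simplex, with bottom `f₀` and top `f₁`. -/
noncomputable def prismSimplex (f₀ f₁ : X → Y) : List X → OrderedChain R Y
  | [] => 0
  | x :: l => single (f₀ x :: f₁ x :: l.map f₁) 1 - cone (f₀ x) (prismSimplex f₀ f₁ l)

/-- The prism operator, a chain homotopy from `mapVertices f₀` to `mapVertices f₁`. -/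
noncomputable def prism (f₀ f₁ : X → Y) : OrderedChain R X →ₗ[R] OrderedChain R Y :=
  linearCombination R (prismSimplex f₀ f₁)

@[simp]
theorem prism_nil (f₀ f₁ : X → Y) (r : R) : prism f₀ f₁ (single [] r) = 0 := by
  simp [prism, prismSimplex]

@[simp]
theorem prism_cone (f₀ f₁ : X → Y) (x : X) (c : OrderedChain R X) :
    prism f₀ f₁ (cone x c) =
      cone (f₀ x) (cone (f₁ x) (mapVertices f₁ c)) - cone (f₀ x) (prism f₀ f₁ c) := by
  induction c using Finsupp.induction_linear with
  | zero => simp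
  | add c d hc hd => simp only [map_add, hc, hd]; abel
  | single l r => simp [prism, prismSimplex, smul_sub]

theorem boundary_prism (f₀ f₁ : X → Y) (c : OrderedChain R X) :
    boundary (prism f₀ f₁ c) = mapVertices f₁ c - mapVertices f₀ c - prism f₀ f₁ (boundary c) := by
  suffices boundary ∘ₗ prism f₀ f₁ = mapVertices f₁ - mapVertices f₀ - prism f₀ f₁ ∘ₗ boundary from
    LinearMap.congr_fun this c
  refine hom_ext_cone (by simp) fun x c ih ↦ ?_
  simp only [LinearMap.comp_apply, LinearMap.sub_apply] at ih
  simp only [LinearMap.comp_apply, LinearMap.sub_apply, prism_cone, boundary_cone, mapVertices_cone,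
    ih, map_sub, boundary_mapVertices]
  abel

theorem apply_mem_of_mem_supported {M : Type*} [AddCommGroup M] [Module R M]
    {φ : OrderedChain R X →ₗ[R] M} {s : Set (List X)} {N : Submodule R M} {c : OrderedChain R X}
    (hc : c ∈ supported R R s) (h : ∀ l ∈ s, φ (single l 1) ∈ N) : φ c ∈ N := by
  rw [supported_eq_span_single] at hc
  suffices Submodule.span R ((single · 1) '' s) ≤ N.comap φ from this hc
  rw [Submodule.span_le]
  rintro _ ⟨l, hl, rfl⟩
  exact h l hl

theorem mapVertices_mem_supported {f : X → Y} {s : Set (List X)} {t : Set (List Y)}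
    {c : OrderedChain R X} (hc : c ∈ supported R R s) (hf : ∀ l ∈ s, l.map f ∈ t) :
    mapVertices f c ∈ supported R R t :=
  apply_mem_of_mem_supported hc fun l hl ↦ by
    rw [mapVertices_single]
    exact single_mem_supported R 1 (hf l hl)

end OrderedChain

section OrientedChain

variable {R S : Type*} [CommRing R]

/-- The simplicial boundary of alternating functions, augmented in degree `0`. -/
def alternatingBoundary [Fintype S] : (List S → R) →ₗ[R] List S → R :=
  LinearMap.pi fun l ↦ ∑ s, LinearMap.proj (s :: l)

theorem alternatingBoundary_apply [Fintype S] (f : List S → R) (l : List S) :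
    alternatingBoundary f l = ∑ s, f (s :: l) := by
  simp [alternatingBoundary]

/-- The action of vertex permutations on alternating functions. -/
def permRep : Equiv.Perm S →* Module.End R (List S → R) where
  toFun τ := LinearMap.funLeft R R (List.map ⇑τ⁻¹)
  map_one' := by ext; simp
  map_mul' σ τ := by ext; simp [LinearMap.funLeft_apply]

theorem permRep_apply (τ : Equiv.Perm S) (f : List S → R) (l : List S) :
    permRep τ f l = f (l.map ⇑τ⁻¹) := rfl

theorem alternatingBoundary_permRep [Fintype S] (τ : Equiv.Perm S) (f : List S → R) :
    alternatingBoundary (permRep τ f) = permRep τ (alternatingBoundary f) := by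
  ext l
  simp only [alternatingBoundary_apply, permRep_apply, List.map_cons]
  exact Equiv.sum_comp τ⁻¹ fun s ↦ f (s :: l.map ⇑τ⁻¹)

variable [DecidableEq S]

theorem contraction_single_mem_supported (s : S) (l : List S) :
    contraction (Pi.single s 1) (single l 1) ∈ supported R R {m | (s :: m).Perm l} := by
  induction l with
  | nil => simp
  | cons x l ih =>
    rw [← cone_single, contraction_cone]
    refine sub_mem ?_ (apply_mem_of_mem_supported ih fun m hm ↦ ?_)
    · by_cases hx : x = s
      · subst hx
        simpa using single_mem_supported R (1 : R) (s := {m | List.Perm m l}) (.refl l)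
      · simp [hx]
    · have hperm : (s :: x :: m).Perm (x :: l) := (List.Perm.swap x s m).trans (List.Perm.cons x hm)
      rw [cone_single]
      exact single_mem_supported R (1 : R) hperm

/-- The coefficient of the oriented simplex `l` in an ordered chain. -/
noncomputable def orientedCoeff : List S → OrderedChain R S →ₗ[R] R
  | [] => lapply []
  | s :: l => orientedCoeff l ∘ₗ contraction (Pi.single s 1)

/-- The projection of ordered chains to oriented chains, the latter being encoded as alternating
functions on lists of vertices. -/
noncomputable def alternation : OrderedChain R S →ₗ[R] List S → R :=
  LinearMap.pi orientedCoeff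

theorem alternation_nil (c : OrderedChain R S) : alternation c [] = c [] := rfl

theorem alternation_cons (c : OrderedChain R S) (s : S) (l : List S) :
    alternation c (s :: l) = alternation (contraction (Pi.single s 1) c) l := rfl

theorem alternation_swap (c : OrderedChain R S) (u : List S) (s t : S) (v : List S) :
    alternation c (u ++ s :: t :: v) = -alternation c (u ++ t :: s :: v) := by
  induction u generalizing c with
  | nil =>
    simp only [List.nil_append, alternation_cons]
    rw [contraction_contraction_swap, map_neg, Pi.neg_apply]
  | cons a _ ih => exact ih _

theorem alternation_eq_zero_of_perm {l m : List S} (hlm : l.Perm m) {c : OrderedChain R S}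
    (hl : alternation c l = 0) : alternation c m = 0 := by
  induction hlm generalizing c with
  | nil => exact hl
  | cons x _ ih => exact ih hl
  | swap x y l => rw [← List.nil_append (x :: _), alternation_swap, List.nil_append, hl, neg_zero]
  | trans _ _ ih₁ ih₂ => exact ih₂ (ih₁ hl)

theorem alternation_eq_zero_of_not_nodup (c : OrderedChain R S) {l : List S} (hl : ¬ l.Nodup) :
    alternation c l = 0 := by
  obtain ⟨s, hs⟩ := List.exists_duplicate_iff_not_nodup.mpr hl
  obtain ⟨m, hm⟩ := (List.duplicate_iff_sublist.mp hs).exists_perm_append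
  refine alternation_eq_zero_of_perm hm.symm ?_
  simp [alternation_cons, contraction_contraction_self]

theorem alternation_eq_zero_of_mem_supported {c : OrderedChain R S} {l : List S}
    (hc : c ∈ supported R R {m | ¬ l.Perm m}) : alternation c l = 0 := by
  induction l generalizing c with
  | nil => simpa [alternation_nil] using (mem_supported' R c).mp hc []
  | cons s l ih =>
    refine ih (apply_mem_of_mem_supported hc fun m hm ↦ ?_)
    refine supported_mono ?_ (contraction_single_mem_supported s m)
    exact fun m' hm' hlm' ↦ hm ((List.Perm.cons s hlm').trans hm')

theorem alternation_eq_zero_of_supported_not_nodup {c : OrderedChain R S}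
    (hc : c ∈ supported R R {l | ¬ l.Nodup}) : alternation c = 0 := by
  ext l
  by_cases hl : l.Nodup
  · refine alternation_eq_zero_of_mem_supported (supported_mono ?_ hc)
    exact fun m hm hlm ↦ hm (hlm.nodup_iff.mp hl)
  · exact alternation_eq_zero_of_not_nodup c hl

theorem alternation_mapVertices (τ : Equiv.Perm S) (c : OrderedChain R S) :
    alternation (mapVertices τ c) = permRep τ (alternation c) := by
  ext l
  rw [permRep_apply]
  induction l generalizing c with
  | nil => exact mapDomain_apply (List.map_injective_iff.mpr τ.injective) c []
  | cons s l ih =>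
    have h : (Pi.single s 1 : S → R) ∘ τ = Pi.single (τ⁻¹ s) 1 := by
      ext x
      simp only [Function.comp_apply, Pi.single_apply, Equiv.Perm.eq_inv_iff_eq]
    rw [alternation_cons, contraction_mapVertices, ih, h, List.map_cons, alternation_cons]

theorem alternation_boundary [Fintype S] (c : OrderedChain R S) :
    alternation (boundary c) = alternatingBoundary (alternation c) := by
  ext l
  have h : (1 : S → R) = ∑ s, Pi.single s 1 := (Finset.univ_sum_single 1).symm
  simp only [alternatingBoundary_apply, alternation_cons, boundary, h, contraction_sum, map_sum,
    Finset.sum_apply]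

/-- The alternating functions on the faces with `k` vertices of the simplicial complex `K`. -/
def alternatingChains (R : Type*) [CommRing R] (K : LowerSet (Finset S)) (k : ℕ) :
    Submodule R (List S → R) where
  carrier := {f | (∀ u s t v, f (u ++ s :: t :: v) = -f (u ++ t :: s :: v)) ∧
    ∀ l, f l ≠ 0 → l.length = k ∧ l.Nodup ∧ l.toFinset ∈ K}
  add_mem' := by
    rintro f g ⟨hf, hf'⟩ ⟨hg, hg'⟩
    refine ⟨fun u s t v ↦ ?_, fun l hl ↦ ?_⟩
    · simp only [Pi.add_apply, hf u s, hg u s, neg_add]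
    · by_cases hfl : f l = 0
      · exact hg' l fun hgl ↦ hl (by simp [hfl, hgl])
      · exact hf' l hfl
  zero_mem' := by simp
  smul_mem' := by
    rintro r f ⟨hf, hf'⟩
    refine ⟨fun u s t v ↦ ?_, fun l hl ↦ hf' l (right_ne_zero_of_mul hl)⟩
    simp only [Pi.smul_apply, hf u s, smul_neg]

variable {K : LowerSet (Finset S)} {k : ℕ} {f : List S → R}

theorem alternation_mem {c : OrderedChain R S}
    (hc : c ∈ supported R R {l | l.length = k ∧ l.toFinset ∈ K}) :
    alternation c ∈ alternatingChains R K k := by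
  refine ⟨alternation_swap c, fun l hl ↦ ?_⟩
  have hnodup : l.Nodup := by
    by_contra h
    exact hl (alternation_eq_zero_of_not_nodup c h)
  obtain ⟨m, ⟨hmk, hmK⟩, hlm⟩ : ∃ m, (m.length = k ∧ m.toFinset ∈ K) ∧ l.Perm m := by
    by_contra! h
    exact hl (alternation_eq_zero_of_mem_supported (supported_mono h hc))
  exact ⟨hlm.length_eq.trans hmk, hnodup, List.toFinset_eq_of_perm _ _ hlm ▸ hmK⟩

theorem alternatingBoundary_mem [Fintype S] (hf : f ∈ alternatingChains R K (k + 1)) :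
    alternatingBoundary f ∈ alternatingChains R K k := by
  refine ⟨fun u s t v ↦ ?_, fun l hl ↦ ?_⟩
  · simp only [alternatingBoundary_apply, ← Finset.sum_neg_distrib]
    exact Finset.sum_congr rfl fun a _ ↦ hf.1 (a :: u) s t v
  · rw [alternatingBoundary_apply] at hl
    obtain ⟨s, -, hs⟩ := Finset.exists_ne_zero_of_sum_ne_zero hl
    obtain ⟨hlen, hnodup, hK⟩ := hf.2 _ hs
    refine ⟨by simpa using hlen, hnodup.of_cons, K.lower ?_ hK⟩
    simp

theorem alternatingBoundary_alternatingBoundary [Fintype S] (hf : f ∈ alternatingChains R K k) :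
    alternatingBoundary (alternatingBoundary f) = 0 := by
  ext l
  simp only [alternatingBoundary_apply, ← Finset.sum_product', Pi.zero_apply]
  refine Finset.sum_involution (fun a _ ↦ (a.2, a.1)) (fun a _ ↦ ?_) (fun a _ ha h ↦ ?_) ?_ ?_
  · exact eq_neg_iff_add_eq_zero.mp (hf.1 [] a.2 a.1 l)
  · have hnodup := (hf.2 _ ha).2.1
    have heq : a.2 = a.1 := congr_arg Prod.fst h
    simp [heq] at hnodup
  all_goals simp

theorem toFinset_map_perm (τ : Equiv.Perm S) (l : List S) :
    (l.map τ).toFinset = τ • l.toFinset := by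
  ext x
  simp [Finset.mem_smul_finset]

theorem permRep_mem {τ : Equiv.Perm S} (hτ : ∀ s ∈ K, τ • s ∈ K)
    (hf : f ∈ alternatingChains R K k) : permRep τ f ∈ alternatingChains R K k := by
  refine ⟨fun u s t v ↦ ?_, fun l hl ↦ ?_⟩
  · simpa only [permRep_apply, List.map_append, List.map_cons] using hf.1 _ _ _ _
  · obtain ⟨hlen, hnodup, hK⟩ := hf.2 _ hl
    refine ⟨by simpa using hlen, hnodup.of_map, ?_⟩
    rw [toFinset_map_perm] at hK
    simpa using hτ _ hK

theorem weight_mul_mem (χ : Finset S → R) (hf : f ∈ alternatingChains R K k) :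
    (fun l ↦ χ l.toFinset) * f ∈ alternatingChains R K k := by
  refine ⟨fun u s t v ↦ ?_, fun l hl ↦ hf.2 l (right_ne_zero_of_mul hl)⟩
  have h : (u ++ s :: t :: v).toFinset = (u ++ t :: s :: v).toFinset :=
    List.toFinset_eq_of_perm _ _ ((List.Perm.swap t s v).append_left u)
  simp only [Pi.mul_apply, h, hf.1 u s, mul_neg]

end OrientedChain

section Weight

variable {R G Y : Type*} [CommRing R] [Group G] [MulAction G Y]

theorem exists_weight {p : ℕ} (hp : p.Prime) {g : G} (hg : g ^ p = 1) :
    ∃ χ : Y → R, ∀ y, g • y ≠ y → ∑ i ∈ Finset.range p, χ (g ^ i • y) = 1 := by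
  classical
  let rep (y : Y) : Y := (Quotient.mk (MulAction.orbitRel (Subgroup.zpowers g) Y) y).out
  refine ⟨fun y ↦ if y = rep y then 1 else 0, fun y hy ↦ ?_⟩
  have hrep (i : ℕ) : rep (g ^ i • y) = rep y :=
    congr_arg Quotient.out (Quotient.sound ⟨⟨g ^ i, i, by simp⟩, rfl⟩)
  have hperiod : MulAction.period g y = p := by
    have := Fact.mk hp
    exact Function.minimalPeriod_eq_prime (MulAction.isPeriodicPt_smul_iff.mpr (by simp [hg])) hy
  obtain ⟨k, hkp, hk⟩ : ∃ k < p, g ^ k • y = rep y := by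
    obtain ⟨⟨_, n, rfl⟩, hn⟩ := Quotient.mk_out (s := MulAction.orbitRel (Subgroup.zpowers g) Y) y
    have hn0 : 0 ≤ n % p := Int.emod_nonneg _ (mod_cast hp.ne_zero)
    refine ⟨(n % p).toNat, ?_, ?_⟩
    · have := Int.emod_lt_of_pos n (mod_cast hp.pos : (0 : ℤ) < p)
      lia
    · rw [← zpow_natCast, Int.toNat_of_nonneg hn0, ← hperiod, MulAction.zpow_mod_period_smul]
      exact hn
  simp only [hrep, ← hk]
  rw [Finset.sum_eq_single_of_mem k (Finset.mem_range.mpr hkp), if_pos rfl]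
  refine fun i hi hik ↦ if_neg fun h ↦ hik ?_
  have hinj := Function.iterate_injOn_Iio_minimalPeriod (f := (g • ·)) (x := y)
  rw [← MulAction.period_eq_minimalPeriod, hperiod] at hinj
  exact hinj (Finset.mem_range.mp hi) hkp (by simpa only [smul_iterate_apply] using h)

end Weight

section SmithOp

variable {A : Type*} [Ring A]

/-- The operators `1 - g` and `1 + g + ⋯ + g ^ (p - 1)` of Smith theory, alternating with the parity
of the last argument. -/
def smithOp (p : ℕ) (g : A) (k : ℕ) : A :=
  if Even k then 1 - g else ∑ i ∈ Finset.range p, g ^ i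

theorem smithOp_of_even {k : ℕ} (hk : Even k) (p : ℕ) (g : A) : smithOp p g k = 1 - g :=
  if_pos hk

theorem smithOp_of_odd {k : ℕ} (hk : Odd k) (p : ℕ) (g : A) :
    smithOp p g k = ∑ i ∈ Finset.range p, g ^ i :=
  if_neg (Nat.not_even_iff_odd.mpr hk)

theorem smithOp_add_two (p : ℕ) (g : A) (k : ℕ) : smithOp p g (k + 2) = smithOp p g k := by
  simp [smithOp, Nat.even_add]

theorem smithOp_succ_mul_smithOp {p : ℕ} {g : A} (hg : g ^ p = 1) (k : ℕ) :
    smithOp p g (k + 1) * smithOp p g k = 0 := by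
  rcases k.even_or_odd with hk | hk
  · rw [smithOp_of_even hk, smithOp_of_odd hk.add_one, geom_sum_mul_neg, hg, sub_self]
  · rw [smithOp_of_odd hk, smithOp_of_even hk.add_one, mul_neg_geom_sum, hg, sub_self]

end SmithOp

section SmithModule

variable {R V W : Type*} [CommRing R] [AddCommGroup V] [Module R V] [AddCommGroup W] [Module R W]
  {p : ℕ} {g : Module.End R V}

theorem map_smithOp {g' : Module.End R W} {φ : V →ₗ[R] W} (h : ∀ v, φ (g v) = g' (φ v)) (k : ℕ)
    (v : V) : φ (smithOp p g k v) = smithOp p g' k (φ v) := by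
  have hpow (i : ℕ) : φ ((g ^ i) v) = (g' ^ i) (φ v) := by
    simp only [Module.End.pow_apply]
    exact (Function.Semiconj.iterate_right h i) v
  rcases k.even_or_odd with hk | hk
  · simp [smithOp_of_even hk, h]
  · simp [smithOp_of_odd hk, hpow]

theorem exists_eq_smithOp_succ {θ : Module.End R V} {M : Submodule R V}
    (hgM : ∀ v ∈ M, g v ∈ M) (hθM : ∀ v ∈ M, θ v ∈ M)
    (hsum : ∀ v ∈ M, ∑ i ∈ Finset.range p, (g ^ i) (θ ((g ^ (p - i)) v)) = v)
    {k : ℕ} {v : V} (hv : v ∈ M) (hkv : smithOp p g k v = 0) :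
    ∃ e ∈ M, v = smithOp p g (k + 1) e := by
  have hpow (i : ℕ) {w : V} (hw : w ∈ M) : (g ^ i) w ∈ M := by
    induction i with
    | zero => exact hw
    | succ i ih => rw [pow_succ', Module.End.mul_apply]; exact hgM _ ih
  rcases k.even_or_odd with hk | hk
  · have hfix (i : ℕ) : (g ^ i) v = v := by
      rw [smithOp_of_even hk, LinearMap.sub_apply, sub_eq_zero] at hkv
      rw [Module.End.pow_apply]
      exact Function.iterate_fixed hkv.symm i
    refine ⟨θ v, hθM v hv, ?_⟩
    rw [smithOp_of_odd hk.add_one, LinearMap.sum_apply]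
    simpa only [hfix] using (hsum v hv).symm
  · have hzero : ∑ i ∈ Finset.range p, (g ^ (p - i)) v = 0 := by
      calc ∑ i ∈ Finset.range p, (g ^ (p - i)) v
          = ∑ i ∈ Finset.range p, (g ^ (p - 1 - i + 1)) v :=
            Finset.sum_congr rfl fun i hi ↦ by
              rw [show p - i = p - 1 - i + 1 by have := Finset.mem_range.mp hi; lia]
        _ = ∑ i ∈ Finset.range p, (g ^ (i + 1)) v :=
            Finset.sum_range_reflect (fun i ↦ (g ^ (i + 1)) v) p
        _ = g (smithOp p g k v) := by
            simp [smithOp_of_odd hk, pow_succ']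
        _ = 0 := by rw [hkv, map_zero]
    refine ⟨-∑ i ∈ Finset.range p, ∑ j ∈ Finset.range i, (g ^ j) (θ ((g ^ (p - i)) v)), ?_, ?_⟩
    · exact neg_mem (sum_mem fun i _ ↦ sum_mem fun j _ ↦ hpow j (hθM _ (hpow _ hv)))
    · have hgeom (i : ℕ) (w : V) : (1 - g) (∑ j ∈ Finset.range i, (g ^ j) w) = w - (g ^ i) w := by
        simpa using LinearMap.congr_fun (mul_neg_geom_sum g i) w
      rw [smithOp_of_even hk.add_one, map_neg, map_sum]
      simp only [hgeom, Finset.sum_sub_distrib, hsum v hv, ← map_sum θ, hzero, map_zero, zero_sub,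
        neg_neg]

/-- Downward induction on `k`: exactness lets each `d k` be written as `T (k + 1) a + ∂ b`. -/
theorem exists_boundary_eq_sum_of_tower {D : Module.End R V} (hDg : ∀ v, D (g v) = g (D v))
    {M : ℕ → Submodule R V} (hDM : ∀ k, ∀ v ∈ M (k + 1), D v ∈ M k)
    (hDD : ∀ k, ∀ v ∈ M k, D (D v) = 0)
    (hexact : ∀ k, ∀ v ∈ M k, smithOp p g k v = 0 → ∃ e ∈ M k, v = smithOp p g (k + 1) e)
    {d : ℕ → V} {N : ℕ} (hdM : ∀ k ≤ N, d k ∈ M k) (hN : d N = 0)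
    (hd : ∀ k < N, D (d (k + 1)) = smithOp p g k (d k)) :
    ∃ a, D (d 0) = ∑ i ∈ Finset.range p, (g ^ i) (D a) := by
  suffices ∃ a ∈ M 0, ∃ b ∈ M 1, d 0 = smithOp p g 1 a + D b by
    obtain ⟨a, -, b, hb, hab⟩ := this
    refine ⟨a, ?_⟩
    rw [hab, map_add, hDD 1 b hb, add_zero, map_smithOp hDg, smithOp_of_odd odd_one,
      LinearMap.sum_apply]
  suffices ∀ k ≤ N, ∃ a ∈ M k, ∃ b ∈ M (k + 1), d k = smithOp p g (k + 1) a + D b from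
    this 0 N.zero_le
  intro k hk
  induction hk using Nat.decreasingInduction with
  | self => exact ⟨0, zero_mem _, 0, zero_mem _, by simp [hN]⟩
  | of_succ k hk ih =>
    obtain ⟨b, hb, e, he, hde⟩ := ih
    have hzero : smithOp p g k (d k - D b) = 0 := by
      rw [map_sub, ← hd k hk, hde, map_add, hDD _ e he, map_smithOp hDg, add_zero,
        smithOp_add_two, sub_self]
    obtain ⟨a, ha, hab⟩ := hexact k _ (sub_mem (hdM k hk.le) (hDM k b hb)) hzero
    exact ⟨a, ha, b, hb, sub_eq_iff_eq_add.mp hab⟩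

end SmithModule

section FixedComplex

variable {R S : Type*} [CommRing R] [DecidableEq S]

/-- The simplices with at most `q` vertices fixed by `τ`, each of whose other vertices is moved by
`τ` out of the simplex. -/
def fixedComplex (τ : Equiv.Perm S) (q : ℕ) : LowerSet (Finset S) where
  carrier := {s | (∀ x ∈ s, τ x ∈ s → τ x = x) ∧ {x ∈ s | τ x = x}.card ≤ q}
  lower' := fun _ _ hts ⟨hs, hsq⟩ ↦ ⟨fun x hx hτx ↦ hs x (hts hx) (hts hτx),
    (Finset.card_le_card (Finset.filter_subset_filter _ hts)).trans hsq⟩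

theorem mem_fixedComplex {τ : Equiv.Perm S} {q : ℕ} {s : Finset S} :
    s ∈ fixedComplex τ q ↔ (∀ x ∈ s, τ x ∈ s → τ x = x) ∧ {x ∈ s | τ x = x}.card ≤ q := Iff.rfl

theorem smul_mem_fixedComplex {τ : Equiv.Perm S} {q : ℕ} {s : Finset S}
    (hs : s ∈ fixedComplex τ q) : τ • s ∈ fixedComplex τ q := by
  have hfilter : {x ∈ τ • s | τ x = x} = τ • {x ∈ s | τ x = x} := by
    ext x
    obtain ⟨y, rfl⟩ := τ.surjective x
    simp [Finset.mem_smul_finset]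
  rw [mem_fixedComplex, hfilter, Finset.card_smul_finset]
  refine ⟨fun x hx hτx ↦ ?_, hs.2⟩
  obtain ⟨y, rfl⟩ := τ.surjective x
  simp only [Finset.mem_smul_finset, Equiv.Perm.smul_def, τ.injective.eq_iff,
    exists_eq_right] at hx hτx ⊢
  exact hs.1 y hx hτx

theorem inv_smul_ne_of_mem_fixedComplex {τ : Equiv.Perm S} {q : ℕ} {s : Finset S}
    (hs : s ∈ fixedComplex τ q) (hq : q < s.card) : τ⁻¹ • s ≠ s := by
  intro h
  rw [inv_smul_eq_iff] at h
  have hfix : {x ∈ s | τ x = x} = s := Finset.filter_true_of_mem fun x hx ↦ by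
    refine hs.1 x hx ?_
    rw [h]
    exact Finset.smul_mem_smul_finset hx
  exact hq.not_ge (hfix ▸ hs.2)

theorem exists_eq_smithOp_succ_of_mem_alternatingChains {p : ℕ} (hp : p.Prime) {τ : Equiv.Perm S}
    (hτ : τ ^ p = 1) {q n : ℕ} (hqn : q < n) {f : List S → R}
    (hf : f ∈ alternatingChains R (fixedComplex τ q) n) {k : ℕ}
    (hkf : smithOp p (permRep τ) k f = 0) :
    ∃ e ∈ alternatingChains R (fixedComplex τ q) n, f = smithOp p (permRep τ) (k + 1) e := by
  obtain ⟨χ, hχ⟩ := exists_weight (R := R) (Y := Finset S) hp (g := τ⁻¹) (by simp [hτ])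
  refine exists_eq_smithOp_succ (θ := LinearMap.mulLeft R fun l ↦ χ l.toFinset)
    (fun _ ↦ permRep_mem fun _ ↦ smul_mem_fixedComplex) (fun _ ↦ weight_mul_mem χ)
    (fun v hv ↦ ?_) hf hkf
  ext l
  have hterm (i : ℕ) (hi : i ∈ Finset.range p) :
      (permRep τ ^ i) (LinearMap.mulLeft R (fun l ↦ χ l.toFinset) ((permRep τ ^ (p - i)) v)) l =
        χ (τ⁻¹ ^ i • l.toFinset) * v l := by
    have hinv : τ ^ (p - i) = (τ ^ i)⁻¹ := by
      rw [eq_inv_iff_mul_eq_one, pow_sub_mul_pow _ (Finset.mem_range.mp hi).le, hτ]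
    rw [← map_pow, ← map_pow, hinv, permRep_apply, LinearMap.mulLeft_apply, Pi.mul_apply,
      toFinset_map_perm, permRep_apply, inv_pow]
    simp
  rw [Finset.sum_apply, Finset.sum_congr rfl hterm, ← Finset.sum_mul]
  by_cases hl : v l = 0
  · rw [hl, mul_zero]
  · obtain ⟨hlen, hnodup, hK⟩ := hv.2 l hl
    rw [hχ _ (inv_smul_ne_of_mem_fixedComplex hK ?_), one_mul]
    rwa [List.toFinset_card_of_nodup hnodup, hlen]

theorem alternation_boundary_eq_zero_of_tower [Finite S] {p : ℕ} (hp : p.Prime) [CharP R p]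
    {τ : Equiv.Perm S} (hτ : τ ^ p = 1) {q : ℕ} {c : ℕ → OrderedChain R S} {N : ℕ}
    (hc : ∀ k ≤ N, c k ∈ supported R R {l | l.length = q + 1 + k ∧ l.toFinset ∈ fixedComplex τ q})
    (hcN : c N ∈ supported R R {l | ¬ l.Nodup})
    (hbd : ∀ k < N, boundary (c (k + 1)) = smithOp p (mapVertices τ) k (c k))
    {l : List S} (hl : ∀ s ∈ l, τ s = s) : alternation (boundary (c 0)) l = 0 := by
  cases nonempty_fintype S
  obtain ⟨a, ha⟩ := exists_boundary_eq_sum_of_tower (alternatingBoundary_permRep τ)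
    (M := fun k ↦ alternatingChains R (fixedComplex τ q) (q + 1 + k))
    (fun k _ ↦ alternatingBoundary_mem) (fun k _ ↦ alternatingBoundary_alternatingBoundary)
    (fun k v hv ↦
      exists_eq_smithOp_succ_of_mem_alternatingChains hp hτ (by lia : q < q + 1 + k) hv)
    (d := fun k ↦ alternation (c k)) (fun k hk ↦ alternation_mem (hc k hk))
    (alternation_eq_zero_of_supported_not_nodup hcN)
    (fun k hk ↦ by rw [← alternation_boundary, hbd k hk, map_smithOp (alternation_mapVertices τ)])
  have hfix (i : ℕ) : l.map ⇑(τ ^ i)⁻¹ = l := by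
    refine (List.map_congr_left fun s hs ↦ ?_).trans (List.map_id l)
    rw [← inv_pow]
    refine Equiv.Perm.pow_apply_eq_self_of_apply_eq_self ?_ i
    rw [Equiv.Perm.inv_eq_iff_eq, hl s hs]
  rw [alternation_boundary, ha, Finset.sum_apply]
  simp only [← map_pow, permRep_apply, hfix, Finset.sum_const, Finset.card_range, nsmul_eq_mul,
    CharP.cast_eq_zero, zero_mul]

theorem alternation_mapVertices_boundary_eq_zero_of_tower {X : Type*} [Finite S] {p : ℕ}
    (hp : p.Prime) [CharP R p] {τ : Equiv.Perm S} (hτ : τ ^ p = 1) {g : X → X} {lab : X → S}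
    (hlab : ∀ x, lab (g x) = τ (lab x)) {q N : ℕ} {c : ℕ → OrderedChain R X}
    (hc : ∀ k ≤ N, c k ∈
      supported R R {l | l.length = q + 1 + k ∧ (l.map lab).toFinset ∈ fixedComplex τ q})
    (hcN : c N ∈ supported R R {l | ¬ (l.map lab).Nodup})
    (hbd : ∀ k < N, boundary (c (k + 1)) = smithOp p (mapVertices g) k (c k))
    {l : List S} (hl : ∀ s ∈ l, τ s = s) :
    alternation (mapVertices lab (boundary (c 0))) l = 0 := by
  have hequiv (c : OrderedChain R X) :
      mapVertices lab (mapVertices g c) = mapVertices τ (mapVertices lab c) := by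
    rw [mapVertices_mapVertices, mapVertices_mapVertices]
    exact congrArg (mapVertices · c) (funext hlab)
  rw [← boundary_mapVertices]
  refine alternation_boundary_eq_zero_of_tower (q := q) hp hτ (c := fun k ↦ mapVertices lab (c k))
    (fun k hk ↦ mapVertices_mem_supported (hc k hk) fun l hl ↦ ?_)
    (mapVertices_mem_supported hcN fun l hl ↦ hl) (fun k hk ↦ ?_) hl
  · exact ⟨by simpa using hl.1, hl.2⟩
  · rw [boundary_mapVertices, hbd k hk, map_smithOp hequiv]

end FixedComplex

section Iterate

variable {R X : Type*} [CommRing R]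

theorem mapVertices_pow (f : X → X) (i : ℕ) :
    (mapVertices f : Module.End R (OrderedChain R X)) ^ i = mapVertices f^[i] := by
  induction i with
  | zero => exact (LinearMap.ext mapVertices_id).symm
  | succ i ih =>
    refine LinearMap.ext fun c ↦ ?_
    rw [pow_succ', ih, Function.iterate_succ', Module.End.mul_apply, mapVertices_mapVertices]

theorem prism_single_mem_supported {Y : Type*} (f₀ f₁ : X → Y) (l : List X) :
    prism f₀ f₁ (single l 1) ∈ supported R R
      {m | m.length = l.length + 1 ∧ ∀ y ∈ m, ∃ x ∈ l, y = f₀ x ∨ y = f₁ x} := by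
  induction l with
  | nil => simp
  | cons x l ih =>
    rw [← cone_single, prism_cone]
    refine sub_mem ?_ (apply_mem_of_mem_supported ih fun m ⟨hml, hm⟩ ↦ ?_)
    · rw [mapVertices_single, cone_single, cone_single]
      refine single_mem_supported R (1 : R) ⟨by simp, ?_⟩
      simp only [List.forall_mem_cons, List.forall_mem_map, List.exists_mem_cons_iff]
      exact ⟨.inl (.inl trivial), .inl (.inr trivial), fun y hy ↦ .inr ⟨y, hy, .inr rfl⟩⟩
    · rw [cone_single]
      refine single_mem_supported R (1 : R) ⟨by simp [hml], ?_⟩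
      simp only [List.forall_mem_cons, List.exists_mem_cons_iff]
      exact ⟨.inl (.inl trivial), fun y hy ↦ .inr (hm y hy)⟩

end Iterate

section SmallChains

variable {R X Y : Type*} [CommRing R] [PseudoMetricSpace X] [PseudoMetricSpace Y]

/-- The chains of simplices with `k` vertices, all in `K`, and of diameter at most `δ`. -/
def smallChains (R : Type*) [CommRing R] (K : Set X) (δ : ℝ) (k : ℕ) :
    Submodule R (OrderedChain R X) :=
  supported R R {l | l.length = k ∧ (∀ x ∈ l, x ∈ K) ∧ ∀ x ∈ l, ∀ y ∈ l, dist x y ≤ δ}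

variable {K : Set X} {L : Set Y} {δ ε : ℝ} {k : ℕ} {c : OrderedChain R X} {f f₀ f₁ : X → Y}

theorem single_mem_smallChains {l : List X} (hlk : l.length = k) (hlK : ∀ x ∈ l, x ∈ K)
    (hlδ : ∀ x ∈ l, ∀ y ∈ l, dist x y ≤ δ) (r : R) : single l r ∈ smallChains R K δ k :=
  single_mem_supported R r ⟨hlk, hlK, hlδ⟩

theorem smallChains_mono {K' : Set X} (hK : K ⊆ K') (hδ : δ ≤ ε) :
    smallChains R K δ k ≤ smallChains R K' ε k :=
  supported_mono fun _ hl ↦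
    ⟨hl.1, fun x hx ↦ hK (hl.2.1 x hx), fun x hx y hy ↦ (hl.2.2 x hx y hy).trans hδ⟩

theorem mapVertices_mem_smallChains (hc : c ∈ smallChains R K δ k) (hf : Set.MapsTo f K L)
    (hε : ∀ x ∈ K, ∀ y ∈ K, dist x y ≤ δ → dist (f x) (f y) ≤ ε) :
    mapVertices f c ∈ smallChains R L ε k := by
  refine mapVertices_mem_supported hc fun l ⟨hlk, hlK, hlδ⟩ ↦
    ⟨by simpa using hlk, by simpa using fun x hx ↦ hf (hlK x hx), ?_⟩
  simp only [List.forall_mem_map]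
  exact fun x hx y hy ↦ hε x (hlK x hx) y (hlK y hy) (hlδ x hx y hy)

theorem cone_mem_smallChains {x : X} (hc : c ∈ smallChains R K δ k) (hx : x ∈ K)
    (hxδ : ∀ y ∈ K, dist x y ≤ δ) : cone x c ∈ smallChains R K δ (k + 1) := by
  refine apply_mem_of_mem_supported hc fun l ⟨hlk, hlK, hlδ⟩ ↦ ?_
  rw [cone_single]
  refine single_mem_smallChains (by simpa using hlk) (by simpa using ⟨hx, hlK⟩) ?_ 1
  simp only [List.forall_mem_cons]
  exact ⟨⟨hxδ x hx, fun y hy ↦ hxδ y (hlK y hy)⟩,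
    fun y hy ↦ ⟨dist_comm x y ▸ hxδ y (hlK y hy), hlδ y hy⟩⟩

theorem prism_mem_smallChains (hc : c ∈ smallChains R K δ k) (hf₀ : Set.MapsTo f₀ K L)
    (hf₁ : Set.MapsTo f₁ K L)
    (h₀ : ∀ x ∈ K, ∀ y ∈ K, dist x y ≤ δ → dist (f₀ x) (f₀ y) ≤ ε)
    (h₁ : ∀ x ∈ K, ∀ y ∈ K, dist x y ≤ δ → dist (f₁ x) (f₁ y) ≤ ε)
    (h₀₁ : ∀ x ∈ K, ∀ y ∈ K, dist x y ≤ δ → dist (f₀ x) (f₁ y) ≤ ε) :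
    prism f₀ f₁ c ∈ smallChains R L ε (k + 1) := by
  refine apply_mem_of_mem_supported hc fun l ⟨hlk, hlK, hlδ⟩ ↦ ?_
  refine supported_mono ?_ (prism_single_mem_supported f₀ f₁ l)
  rintro m ⟨hml, hm⟩
  refine ⟨by rw [hml, hlk], fun y hy ↦ ?_, fun y hy z hz ↦ ?_⟩
  · obtain ⟨x, hx, rfl | rfl⟩ := hm y hy
    exacts [hf₀ (hlK x hx), hf₁ (hlK x hx)]
  · obtain ⟨x, hx, hy⟩ := hm y hy
    obtain ⟨x', hx', hz⟩ := hm z hz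
    have hxK := hlK x hx
    have hxK' := hlK x' hx'
    have hxx' := hlδ x hx x' hx'
    rcases hy with rfl | rfl <;> rcases hz with rfl | rfl
    · exact h₀ x hxK x' hxK' hxx'
    · exact h₀₁ x hxK x' hxK' hxx'
    · rw [dist_comm] at hxx' ⊢
      exact h₀₁ x' hxK' x hxK hxx'
    · exact h₁ x hxK x' hxK' hxx'

theorem exists_boundary_eq_of_contraction {x₀ : X} {m : ℕ} {f : ℕ → X → X} (hf₀ : f 0 = id)
    (hfm : ∀ x, f m x = x₀) (hx₀ : x₀ ∈ K) (hε : 0 ≤ ε)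
    (hmaps : ∀ j ≤ m, Set.MapsTo (f j) K K)
    (hdist : ∀ j ≤ m, ∀ x ∈ K, ∀ y ∈ K, dist x y ≤ δ → dist (f j x) (f j y) ≤ ε)
    (hstep : ∀ j < m, ∀ x ∈ K, ∀ y ∈ K, dist x y ≤ δ → dist (f j x) (f (j + 1) y) ≤ ε)
    (hc : c ∈ smallChains R K δ k) (hbd : boundary c = 0) :
    ∃ d ∈ smallChains R K ε (k + 1), boundary d = c := by
  have hconst : mapVertices (f m) c ∈ smallChains R {x₀} ε k :=
    mapVertices_mem_smallChains hc (fun x _ ↦ hfm x) fun x _ y _ _ ↦ by simpa [hfm] using hε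
  refine ⟨cone x₀ (mapVertices (f m) c) - ∑ j ∈ Finset.range m, prism (f j) (f (j + 1)) c,
    sub_mem ?_ (sum_mem fun j hj ↦ ?_), ?_⟩
  · refine smallChains_mono (Set.singleton_subset_iff.mpr hx₀) le_rfl ?_
    exact cone_mem_smallChains hconst rfl (by simpa using hε)
  · have hjm := Finset.mem_range.mp hj
    exact prism_mem_smallChains hc (hmaps j hjm.le) (hmaps _ hjm) (hdist j hjm.le) (hdist _ hjm)
      (hstep j hjm)
  · have htelescope : ∑ j ∈ Finset.range m, boundary (prism (f j) (f (j + 1)) c) =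
        mapVertices (f m) c - c := by
      simp only [boundary_prism, hbd, map_zero, sub_zero]
      rw [Finset.sum_range_sub (fun j ↦ mapVertices (f j) c), hf₀, mapVertices_id]
    rw [map_sub, map_sum, htelescope, boundary_cone, boundary_mapVertices, hbd, map_zero, map_zero,
      sub_zero, sub_sub_cancel]

end SmallChains

section IterateBounds

variable {R E : Type*} [CommRing R] [SeminormedAddCommGroup E] [ProperSpace E]

theorem exists_iterate_bounds {g : E → E} (hg : Continuous g) (r : ℝ) (N : ℕ) :
    ∃ r', ∀ ε > 0, ∃ δ > 0, ∀ i < N,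
      Set.MapsTo g^[i] (Metric.closedBall 0 r) (Metric.closedBall 0 r') ∧
      ∀ x ∈ Metric.closedBall (0 : E) r, ∀ y ∈ Metric.closedBall (0 : E) r,
        dist x y ≤ δ → dist (g^[i] x) (g^[i] y) ≤ ε := by
  have hK := isCompact_closedBall (0 : E) r
  let F (x : E) (i : Fin N) : E := g^[i] x
  have hF : Continuous F := continuous_pi fun i ↦ hg.iterate i
  obtain ⟨r', hr'⟩ := (hK.image hF).isBounded.subset_closedBall 0
  refine ⟨r', fun ε hε ↦ ?_⟩
  obtain ⟨δ, hδ, hFδ⟩ :=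
    Metric.uniformContinuousOn_iff_le.mp (hK.uniformContinuousOn_of_continuous hF.continuousOn) ε hε
  refine ⟨δ, hδ, fun i hi ↦ ⟨fun x hx ↦ ?_, fun x hx y hy hxy ↦ ?_⟩⟩
  · have h := hr' (Set.mem_image_of_mem F hx)
    rw [mem_closedBall_zero_iff] at h ⊢
    exact (norm_le_pi_norm (F x) ⟨i, hi⟩).trans h
  · exact (dist_le_pi_dist (F x) (F y) ⟨i, hi⟩).trans (hFδ x hx y hy hxy)

theorem exists_smithOp_mem_smallChains {g : E → E} (hg : Continuous g) (p : ℕ)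
    (r : ℝ) : ∃ r', ∀ ε > 0, ∃ δ > 0, ∀ {k n : ℕ} {c : OrderedChain R E},
      c ∈ smallChains R (Metric.closedBall 0 r) δ n →
      smithOp p (mapVertices g : Module.End R (OrderedChain R E)) k c ∈
        smallChains R (Metric.closedBall 0 r') ε n := by
  obtain ⟨r', hr'⟩ := exists_iterate_bounds hg r (p + 2)
  refine ⟨r', fun ε hε ↦ ?_⟩
  obtain ⟨δ, hδ, hgδ⟩ := hr' ε hε
  refine ⟨δ, hδ, fun {k n c} hc ↦ ?_⟩
  have hmem (i : ℕ) (hi : i < p + 2) :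
      mapVertices g^[i] c ∈ smallChains R (Metric.closedBall 0 r') ε n :=
    mapVertices_mem_smallChains hc (hgδ i hi).1 (hgδ i hi).2
  rcases k.even_or_odd with hk | hk
  · rw [smithOp_of_even hk]
    have h₀ := hmem 0 (by lia)
    rw [Function.iterate_zero, mapVertices_id] at h₀
    exact sub_mem h₀ (hmem 1 (by lia))
  · rw [smithOp_of_odd hk, LinearMap.sum_apply]
    refine sum_mem fun i hi ↦ ?_
    rw [mapVertices_pow]
    exact hmem i ((Finset.mem_range.mp hi).trans (by lia))

end IterateBounds

section Filling

variable {R E : Type*} [CommRing R] [NormedAddCommGroup E] [NormedSpace ℝ E]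

theorem dist_smul_smul_le {r δ a b : ℝ} {x y : E} (ha : a ∈ Set.Icc 0 1)
    (hy : y ∈ Metric.closedBall 0 r) (hxy : dist x y ≤ δ) :
    dist (a • x) (b • y) ≤ δ + |a - b| * r := by
  rw [dist_eq_norm, show a • x - b • y = a • (x - y) + (a - b) • y by module]
  rw [mem_closedBall_zero_iff] at hy
  rw [dist_eq_norm] at hxy
  calc ‖a • (x - y) + (a - b) • y‖
      ≤ ‖a • (x - y)‖ + ‖(a - b) • y‖ := norm_add_le _ _
    _ = a * ‖x - y‖ + |a - b| * ‖y‖ := by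
        rw [norm_smul, norm_smul, Real.norm_of_nonneg ha.1, Real.norm_eq_abs]
    _ ≤ 1 * δ + |a - b| * r := by gcongr; exact ha.2
    _ = δ + |a - b| * r := by rw [one_mul]

/-- The cycle is pushed radially to the origin in steps shorter than `ε`. -/
theorem exists_boundary_eq_of_mem_smallChains {r ε : ℝ} (hr : 0 ≤ r) (hε : 0 < ε)
    {k : ℕ} {c : OrderedChain R E} (hc : c ∈ smallChains R (Metric.closedBall 0 r) (ε / 2) k)
    (hbd : boundary c = 0) :
    ∃ d ∈ smallChains R (Metric.closedBall (0 : E) r) ε (k + 1), boundary d = c := by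
  obtain ⟨m, hm⟩ := exists_nat_gt (r / (ε / 2))
  have hm0 : (0 : ℝ) < m := (by positivity : 0 ≤ r / (ε / 2)).trans_lt hm
  have hrm : r / m ≤ ε / 2 := ((div_lt_comm₀ (half_pos hε) hm0).mp hm).le
  have hscale (j : ℕ) (hj : j ≤ m) : (1 - j / m : ℝ) ∈ Set.Icc (0 : ℝ) 1 := by
    have : (j : ℝ) / m ≤ 1 := (div_le_one hm0).mpr (mod_cast hj)
    exact ⟨by linarith, sub_le_self 1 (by positivity)⟩
  refine exists_boundary_eq_of_contraction (f := fun j x ↦ (1 - j / m : ℝ) • x) (m := m) (x₀ := 0)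
    (by ext; simp) (by simp [hm0.ne']) (by simpa using hr) hε.le
    (fun j hj x hx ↦ ?_) (fun j hj x _ y hy hxy ↦ ?_) (fun j hj x _ y hy hxy ↦ ?_) hc hbd
  · exact (convex_closedBall 0 r).smul_mem_of_zero_mem (by simpa using hr) hx (hscale j hj)
  · refine (dist_smul_smul_le (hscale j hj) hy hxy).trans ?_
    simp only [sub_self, abs_zero, zero_mul, add_zero]
    exact half_le_self hε.le
  · refine (dist_smul_smul_le (hscale j hj.le) hy hxy).trans ?_
    have hstep : (1 - j / m - (1 - ((j + 1 : ℕ) : ℝ) / m) : ℝ) = 1 / m := by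
      push_cast
      ring
    rw [hstep, abs_of_pos (by positivity), one_div_mul_eq_div]
    linarith

theorem boundary_smithOp_eq_zero_of_tower {X : Type*} {p : ℕ} {g : X → X} (hgp : g^[p] = id)
    {c : ℕ → OrderedChain R X} (hgc : mapVertices g (boundary (c 0)) = boundary (c 0)) {N : ℕ}
    (hcT : ∀ k < N, boundary (c (k + 1)) = smithOp p (mapVertices g) k (c k)) :
    boundary (smithOp p (mapVertices g) N (c N)) = 0 := by
  rw [map_smithOp (boundary_mapVertices g)]
  cases N with
  | zero => simp [smithOp_of_even, hgc]
  | succ N =>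
    have hpow : (mapVertices g : Module.End R (OrderedChain R X)) ^ p = 1 := by
      rw [mapVertices_pow, hgp]
      exact LinearMap.ext mapVertices_id
    rw [hcT N N.lt_succ_self, ← Module.End.mul_apply, smithOp_succ_mul_smithOp hpow,
      LinearMap.zero_apply]

theorem exists_tower [ProperSpace E] {p : ℕ} {g : E → E} (hg : Continuous g) (hgp : g^[p] = id)
    {r₀ : ℝ} (hr₀ : 0 ≤ r₀) {n : ℕ} {b : OrderedChain R E}
    (hb : b ∈ smallChains R (Metric.closedBall 0 r₀) 0 n) (hbd : boundary b = 0)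
    (hgb : mapVertices g b = b) (N : ℕ) :
    ∃ r, ∀ ε > 0, ∃ c : ℕ → OrderedChain R E, boundary (c 0) = b ∧
      (∀ k < N, boundary (c (k + 1)) = smithOp p (mapVertices g) k (c k)) ∧
      ∀ k ≤ N, c k ∈ smallChains R (Metric.closedBall 0 r) ε (n + 1 + k) := by
  induction N with
  | zero =>
    refine ⟨r₀, fun ε hε ↦ ?_⟩
    obtain ⟨d, hd, hdb⟩ := exists_boundary_eq_of_mem_smallChains hr₀ hε
      (smallChains_mono le_rfl (half_pos hε).le hb) hbd
    exact ⟨fun _ ↦ d, hdb, by simp, by simpa using hd⟩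
  | succ N ih =>
    obtain ⟨r, hr⟩ := ih
    obtain ⟨r', hr'⟩ := exists_smithOp_mem_smallChains (R := R) hg p r
    refine ⟨max (max r r') 0, fun ε hε ↦ ?_⟩
    obtain ⟨δ, hδ, hT⟩ := hr' (ε / 2) (half_pos hε)
    obtain ⟨c, hc₀, hcT, hc⟩ := hr (min δ ε) (lt_min hδ hε)
    have hcycle := boundary_smithOp_eq_zero_of_tower hgp (hc₀.symm ▸ hgb) hcT
    obtain ⟨d, hd, hdT⟩ := exists_boundary_eq_of_mem_smallChains (le_max_right (max r r') 0) hε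
      (smallChains_mono (Metric.closedBall_subset_closedBall (by simp)) le_rfl
        (hT (smallChains_mono le_rfl (min_le_left δ ε) (hc N le_rfl)))) hcycle
    refine ⟨Function.update c (N + 1) d, ?_, fun k hk ↦ ?_, fun k hk ↦ ?_⟩
    · simpa using hc₀
    · rcases Nat.lt_succ_iff_lt_or_eq.mp hk with hkN | rfl
      · rw [Function.update_of_ne (by lia), Function.update_of_ne (by lia), hcT k hkN]
      · rw [Function.update_self, Function.update_of_ne (by lia), hdT]
    · rcases Nat.le_succ_iff.mp hk with hkN | rfl
      · rw [Function.update_of_ne (by lia)]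
        exact smallChains_mono (Metric.closedBall_subset_closedBall (by simp)) (min_le_right δ ε)
          (hc k hkN)
      · rw [Function.update_self]
        exact hd

end Filling

section GridLabel

variable {ι : Type*} {m : ℕ} {σ : Equiv.Perm ι} {a b : ℝ} {v w : ι → ℝ}

theorem floor_eq_floor_of_zmod_eq {x y : ℝ} (hxy : |x - y| < m - 1)
    (h : (⌊x⌋ : ZMod m) = ⌊y⌋) : ⌊x⌋ = ⌊y⌋ := by
  rw [ZMod.intCast_eq_intCast_iff_dvd_sub] at h
  refine (sub_eq_zero.mp (Int.eq_zero_of_abs_lt_dvd h ?_)).symm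
  have hlt : |(⌊y⌋ - ⌊x⌋ : ℝ)| < m := by
    rw [abs_lt] at hxy ⊢
    constructor <;>
      linarith [Int.floor_le x, Int.lt_floor_add_one x, Int.floor_le y, Int.lt_floor_add_one y]
  exact_mod_cast hlt

/-- The label of a point of a real line times a grid: outside the slab `|a| < 1` it is the side of
the slab, inside the slab it is the cube containing `v`, whose integral coordinates are reduced
modulo `m` to keep the set of labels finite. -/
noncomputable def gridLabel (m : ℕ) (a : ℝ) (v : ι → ℝ) : Bool ⊕ (ι → ZMod m) :=
  open scoped Classical in if 1 ≤ |a| then .inl (0 < a) else .inr fun i ↦ (⌊v i⌋ : ZMod m)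

/-- The permutation of the labels induced by the permutation `σ` of the coordinates. -/
def labelPerm (m : ℕ) (σ : Equiv.Perm ι) : Equiv.Perm (Bool ⊕ (ι → ZMod m)) :=
  Equiv.Perm.sumCongrHom _ _ (1, MulAction.toPermHom _ _ (DomMulAct.mk σ))

theorem labelPerm_inl (m : ℕ) (σ : Equiv.Perm ι) (s : Bool) : labelPerm m σ (.inl s) = .inl s := rfl

theorem labelPerm_pow_eq_one {p : ℕ} (hσ : σ ^ p = 1) : labelPerm m σ ^ p = 1 := by
  rw [labelPerm, ← map_pow, Prod.pow_mk, one_pow, ← map_pow, ← DomMulAct.mk_pow, hσ,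
    DomMulAct.mk_one, map_one, ← Prod.one_eq_mk, map_one]

theorem gridLabel_of_one_le (ha : 1 ≤ |a|) (m : ℕ) (v : ι → ℝ) :
    gridLabel m a v = .inl (decide (0 < a)) := by
  rw [gridLabel, if_pos ha]

theorem gridLabel_of_lt_one (ha : |a| < 1) (m : ℕ) (v : ι → ℝ) :
    gridLabel m a v = .inr fun i ↦ (⌊v i⌋ : ZMod m) :=
  if_neg ha.not_ge

theorem gridLabel_comp_perm (m : ℕ) (a : ℝ) (v : ι → ℝ) (σ : Equiv.Perm ι) :
    gridLabel m a (v ∘ σ) = labelPerm m σ (gridLabel m a v) := by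
  unfold gridLabel
  split_ifs <;> rfl

theorem gridLabel_eq_gridLabel_of_one_le (ha : 1 ≤ |a|) (hb : 1 ≤ |b|) (hab : |a - b| < 1) :
    gridLabel m a v = gridLabel m b w := by
  rw [gridLabel_of_one_le ha, gridLabel_of_one_le hb]
  have hsign : 0 < a ↔ 0 < b := by
    rw [abs_lt] at hab
    rw [le_abs] at ha hb
    constructor <;> intro h <;> rcases ha <;> rcases hb <;> linarith
  simp only [hsign]

variable [Fintype ι]

theorem gridLabel_eq_of_gridLabel_two_eq (hvw : dist v w < 1)
    (h : gridLabel 2 a v = gridLabel 2 b w) : gridLabel m a v = gridLabel m b w := by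
  unfold gridLabel at h ⊢
  split_ifs at h ⊢ <;> simp only [Sum.inl.injEq, Sum.inr.injEq] at h ⊢
  · exact h
  · funext i
    rw [floor_eq_floor_of_zmod_eq ?_ (congrFun h i)]
    have := (dist_le_pi_dist v w i).trans_lt hvw
    norm_num
    rwa [← Real.dist_eq]

theorem one_le_abs_of_labelPerm_gridLabel_eq (hgap : 1 ≤ |a| ∨ 2 ≤ dist (v ∘ σ) v)
    (hvw : dist v w < 1) (hm : dist (v ∘ σ) w < m - 1)
    (h : labelPerm m σ (gridLabel m a v) = gridLabel m b w) : 1 ≤ |a| := by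
  by_contra! ha
  have hfar := hgap.resolve_left ha.not_ge
  rw [← gridLabel_comp_perm, gridLabel_of_lt_one ha] at h
  have hb : |b| < 1 := by
    by_contra! hb
    rw [gridLabel_of_one_le hb] at h
    exact Sum.inr_ne_inl h
  rw [gridLabel_of_lt_one hb, Sum.inr.injEq] at h
  have hnear : dist (v ∘ σ) w ≤ 1 := (dist_pi_le_iff zero_le_one).mpr fun i ↦
    (Int.abs_sub_lt_one_of_floor_eq_floor
      (floor_eq_floor_of_zmod_eq ((dist_le_pi_dist _ _ i).trans_lt hm) (congrFun h i))).le
  linarith [dist_triangle_right (v ∘ σ) v w]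

variable {X : Type*} {h : X → ℝ} {Φ : X → ι → ℝ} {l : List X}

theorem map_gridLabel_mem_fixedComplex [DecidableEq (Bool ⊕ (ι → ZMod m))]
    (hgap : ∀ x ∈ l, 1 ≤ |h x| ∨ 2 ≤ dist (Φ x ∘ σ) (Φ x))
    (hΦ : ∀ x ∈ l, ∀ y ∈ l, dist (Φ x) (Φ y) < 1) (hh : ∀ x ∈ l, ∀ y ∈ l, |h x - h y| < 1)
    (hm : ∀ x ∈ l, ∀ y ∈ l, dist (Φ x ∘ σ) (Φ y) < m - 1) {q : ℕ}
    (hq : ∀ x ∈ l, 1 ≤ |h x| → 1 ≤ q) :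
    (l.map fun x ↦ gridLabel m (h x) (Φ x)).toFinset ∈ fixedComplex (labelPerm m σ) q := by
  have hside {x y : X} (hx : x ∈ l) (hy : y ∈ l)
      (hxy : labelPerm m σ (gridLabel m (h x) (Φ x)) = gridLabel m (h y) (Φ y)) : 1 ≤ |h x| :=
    one_le_abs_of_labelPerm_gridLabel_eq (hgap x hx) (hΦ x hx y hy) (hm x hx y hy) hxy
  refine mem_fixedComplex.mpr ⟨?_, ?_⟩
  · simp only [List.mem_toFinset, List.forall_mem_map]
    intro x hx hτx
    obtain ⟨y, hy, hxy⟩ := List.mem_map.mp hτx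
    rw [gridLabel_of_one_le (hside hx hy hxy.symm), labelPerm_inl]
  · have hfixed {s} (hs : s ∈ (l.map fun x ↦ gridLabel m (h x) (Φ x)).toFinset)
        (hτs : labelPerm m σ s = s) : ∃ x ∈ l, 1 ≤ |h x| ∧ gridLabel m (h x) (Φ x) = s := by
      obtain ⟨x, hx, rfl⟩ := List.mem_map.mp (List.mem_toFinset.mp hs)
      exact ⟨x, hx, hside hx hx hτs, rfl⟩
    rcases Finset.eq_empty_or_nonempty
      {s ∈ (l.map fun x ↦ gridLabel m (h x) (Φ x)).toFinset | labelPerm m σ s = s}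
      with hempty | ⟨s, hs⟩
    · simp [hempty]
    · obtain ⟨x, hx, hhx, -⟩ := (Finset.mem_filter.mp hs).elim hfixed
      refine (Finset.card_le_one.mpr fun s hs t ht ↦ ?_).trans (hq x hx hhx)
      obtain ⟨x, hx, hhx, rfl⟩ := (Finset.mem_filter.mp hs).elim hfixed
      obtain ⟨y, hy, hhy, rfl⟩ := (Finset.mem_filter.mp ht).elim hfixed
      exact gridLabel_eq_gridLabel_of_one_le hhx hhy (hh x hx y hy)

theorem not_nodup_map_gridLabel (hΦ : ∀ x ∈ l, ∀ y ∈ l, dist (Φ x) (Φ y) < 1)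
    (hl : Nat.card (Bool ⊕ (ι → ZMod 2)) < l.length) :
    ¬ (l.map fun x ↦ gridLabel m (h x) (Φ x)).Nodup := by
  intro hnodup
  cases nonempty_fintype (Bool ⊕ (ι → ZMod 2))
  rw [Nat.card_eq_fintype_card] at hl
  have hpairwise : (l.map fun x ↦ gridLabel 2 (h x) (Φ x)).Nodup :=
    List.pairwise_map.mpr ((List.pairwise_map.mp hnodup).imp_of_mem fun hx hy hxy hxy₂ ↦
      hxy (gridLabel_eq_of_gridLabel_two_eq (hΦ _ hx _ hy) hxy₂))
  exact hl.not_ge (by simpa using hpairwise.length_le_card)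

end GridLabel

section Labelling

theorem exists_equivariant_coordinates {E : Type*} [NormedAddCommGroup E] [NormedSpace ℝ E]
    [FiniteDimensional ℝ E] {p : ℕ} (hp : p ≠ 0) {g : E → E} (hg : Continuous g)
    (hgp : g^[p] = id) :
    ∃ (ι : Type) (_ : Fintype ι) (σ : Equiv.Perm ι) (Φ : E → ι → ℝ), σ ^ p = 1 ∧ Continuous Φ ∧
      Function.Injective Φ ∧ ∀ x, Φ (g x) = Φ x ∘ σ := by
  have : NeZero p := ⟨hp⟩
  let e := (Module.finBasis ℝ E).equivFunL
  let σ : Equiv.Perm (ZMod p × Fin (Module.finrank ℝ E)) :=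
    Equiv.prodCongr (Equiv.addRight 1) (Equiv.refl _)
  have hσ (i : ℕ) (jk) : (σ ^ i) jk = (jk.1 + i, jk.2) := by
    induction i with
    | zero => simp
    | succ i ih => rw [pow_succ', Equiv.Perm.mul_apply, ih]; simp [σ, add_assoc]
  refine ⟨_, inferInstance, σ, fun x jk ↦ e (g^[jk.1.val] x) jk.2, ?_, ?_, fun x y hxy ↦ ?_,
    fun x ↦ funext fun jk ↦ ?_⟩
  · ext jk : 1
    simp [hσ]
  · exact continuous_pi fun jk ↦
      (continuous_apply jk.2).comp (e.continuous.comp (hg.iterate jk.1.val))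
  · refine e.injective (funext fun k ↦ ?_)
    simpa using congrFun hxy (0, k)
  · have hperiod : g^[(jk.1 + 1).val] = g^[jk.1.val + 1] := by
      ext y
      rw [ZMod.val_add, ZMod.val_one_eq_one_mod, Nat.add_mod_mod]
      exact Function.IsPeriodicPt.iterate_mod_apply (congrFun hgp y) _
    simp [σ, hperiod]

variable {X ι : Type*} [Fintype ι] {K : Set X} {σ : Equiv.Perm ι} {Φ : X → ι → ℝ} {h : X → ℝ}

theorem exists_scale [TopologicalSpace X] (hK : IsCompact K) (hΦ : Continuous Φ)
    (hh : Continuous h) (hgap : ∀ x ∈ K, Φ x ∘ σ = Φ x → h x ≠ 0) :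
    ∃ C > 0, ∀ x ∈ K, 1 ≤ |C * h x| ∨ 2 ≤ dist ((C • Φ x) ∘ σ) (C • Φ x) := by
  have : Continuous fun x ↦ Φ x ∘ σ :=
    continuous_pi fun i ↦ (continuous_apply (σ i)).comp hΦ
  obtain ⟨η, hη, hle⟩ := hK.exists_forall_le' (a := 0)
    (f := fun x ↦ max |h x| (dist (Φ x ∘ σ) (Φ x))) (by fun_prop) fun x hx ↦ by
      by_cases hx₀ : h x = 0
      · exact lt_max_of_lt_right (dist_pos.mpr fun hfix ↦ hgap x hx hfix hx₀)
      · exact lt_max_of_lt_left (abs_pos.mpr hx₀)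
  refine ⟨2 / η, by positivity, fun x hx ↦ ?_⟩
  have hscale : ((2 / η) • Φ x) ∘ σ = (2 / η) • (Φ x ∘ σ) := rfl
  rw [hscale, dist_smul₀, Real.norm_of_nonneg (by positivity), abs_mul,
    abs_of_pos (by positivity : 0 < 2 / η)]
  have hmul {t : ℝ} (ht : η ≤ t) : 2 ≤ 2 / η * t := by
    rw [div_mul_eq_mul_div, le_div_iff₀ hη]
    linarith
  exact (le_max_iff.mp (hle x hx)).imp (fun h ↦ one_le_two.trans (hmul h)) hmul

theorem exists_modulus [PseudoMetricSpace X] (hK : IsCompact K) (hΦ : Continuous Φ)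
    (hh : Continuous h) (σ : Equiv.Perm ι) :
    ∃ m : ℕ, m ≠ 0 ∧ ∃ ε > 0, ∀ x ∈ K, ∀ y ∈ K, dist (Φ x ∘ σ) (Φ y) < m - 1 ∧
      (dist x y ≤ ε → dist (Φ x) (Φ y) < 1 ∧ |h x - h y| < 1) := by
  have : Continuous fun x ↦ Φ x ∘ σ :=
    continuous_pi fun i ↦ (continuous_apply (σ i)).comp hΦ
  obtain ⟨M, hM⟩ := (hK.prod hK).exists_bound_of_continuousOn
    (f := fun z ↦ dist (Φ z.1 ∘ σ) (Φ z.2)) (by fun_prop)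
  obtain ⟨n, hn⟩ := exists_nat_gt M
  obtain ⟨δ, hδ, hunif⟩ := Metric.uniformContinuousOn_iff.mp
    (hK.uniformContinuousOn_of_continuous (hΦ.prodMk hh).continuousOn) 1 one_pos
  refine ⟨n + 1, n.succ_ne_zero, δ / 2, half_pos hδ, fun x hx y hy ↦ ⟨?_, fun hxy ↦ ?_⟩⟩
  · push_cast
    rw [add_sub_cancel_right]
    exact ((le_abs_self _).trans (hM (x, y) ⟨hx, hy⟩)).trans_lt hn
  · rw [← Real.dist_eq, ← max_lt_iff]
    exact hunif x hx y hy (hxy.trans_lt (half_lt_self hδ))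

open scoped Classical in
theorem exists_gridLabel [PseudoMetricSpace X] (hK : IsCompact K)
    (hΦ : Continuous Φ) (hh : Continuous h) (hfix : ∀ x ∈ K, Φ x ∘ σ = Φ x → h x ≠ 0) {q : ℕ}
    (hq : ∀ x, h x ≠ 0 → 1 ≤ q) :
    ∃ (m : ℕ) (_ : NeZero m) (lab : X → Bool ⊕ (ι → ZMod m)), ∃ ε > 0,
      (∀ x y, Φ y = Φ x ∘ σ → h y = h x → lab y = labelPerm m σ (lab x)) ∧
      (∀ x ∈ K, Φ x ∘ σ = Φ x → lab x = .inl (decide (0 < h x))) ∧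
      ∀ l : List X, (∀ x ∈ l, x ∈ K) → (∀ x ∈ l, ∀ y ∈ l, dist x y ≤ ε) →
        (l.map lab).toFinset ∈ fixedComplex (labelPerm m σ) q ∧
        (Nat.card (Bool ⊕ (ι → ZMod 2)) < l.length → ¬ (l.map lab).Nodup) := by
  obtain ⟨C, hC, hgap⟩ := exists_scale hK hΦ hh hfix
  obtain ⟨m, hm, ε, hε, hmod⟩ := exists_modulus hK (hΦ.const_smul C) (hh.const_mul C) σ
  refine ⟨m, ⟨hm⟩, fun x ↦ gridLabel m (C * h x) (C • Φ x), ε, hε, fun x y hΦxy hhxy ↦ ?_,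
    fun x hx hΦx ↦ ?_, fun l hlK hlε ↦ ?_⟩
  · rw [← gridLabel_comp_perm]
    simp only [hΦxy, hhxy]
    rfl
  · have hfixed : (C • Φ x) ∘ σ = C • Φ x := congrArg (C • ·) hΦx
    have hone := (hgap x hx).resolve_right (by rw [hfixed, dist_self]; exact two_pos.not_ge)
    simp only [gridLabel_of_one_le hone, mul_pos_iff_of_pos_left hC]
  · have hclose (x) (hx : x ∈ l) (y) (hy : y ∈ l) :=
      (hmod x (hlK x hx) y (hlK y hy)).2 (hlε x hx y hy)
    refine ⟨map_gridLabel_mem_fixedComplex (fun x hx ↦ hgap x (hlK x hx))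
      (fun x hx y hy ↦ (hclose x hx y hy).1) (fun x hx y hy ↦ (hclose x hx y hy).2)
      (fun x hx y hy ↦ (hmod x (hlK x hx) y (hlK y hy)).1) fun x _ hhx ↦ hq x ?_,
      not_nodup_map_gridLabel fun x hx y hy ↦ (hclose x hx y hy).1⟩
    rintro hx₀
    norm_num [hx₀] at hhx

end Labelling

section Obstruction

variable {R E : Type*} [CommRing R] [NormedAddCommGroup E] [NormedSpace ℝ E] [FiniteDimensional ℝ E]

theorem exists_label_alternation_eq_zero {p : ℕ} [CharP R p] (hp : p.Prime) {g : E → E}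
    (hg : Continuous g) (hgp : g^[p] = id) {h : E → ℝ} (hh : Continuous h)
    (hhg : ∀ x, h (g x) = h x) (hfix : ∀ x, g x = x → h x ≠ 0) {q : ℕ}
    (hq : ∀ x, h x ≠ 0 → 1 ≤ q) {r₀ : ℝ} (hr₀ : 0 ≤ r₀) {b : OrderedChain R E}
    (hb : b ∈ smallChains R (Metric.closedBall 0 r₀) 0 q) (hbd : boundary b = 0)
    (hgb : mapVertices g b = b) :
    ∃ (S : Type) (_ : DecidableEq S) (lab : E → Bool ⊕ S),
      (∀ x ∈ Metric.closedBall 0 r₀, g x = x → lab x = .inl (decide (0 < h x))) ∧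
      ∀ l : List Bool, alternation (mapVertices lab b) (l.map .inl) = 0 := by
  classical
  have : ProperSpace E := FiniteDimensional.proper_real E
  obtain ⟨ι, _, σ, Φ, hσ, hΦ, hΦinj, hΦg⟩ := exists_equivariant_coordinates hp.ne_zero hg hgp
  obtain ⟨r, hr⟩ := exists_tower hg hgp hr₀ hb hbd hgb (Nat.card (Bool ⊕ (ι → ZMod 2)))
  have hr_le := Metric.closedBall_subset_closedBall (x := (0 : E)) (le_max_left r r₀)
  have hr₀_le := Metric.closedBall_subset_closedBall (x := (0 : E)) (le_max_right r r₀)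
  obtain ⟨m, _, lab, ε, hε, hlabg, hlabfix, hlab⟩ := exists_gridLabel (σ := σ)
    (isCompact_closedBall (0 : E) (max r r₀)) hΦ hh
    (fun x _ hx ↦ hfix x (hΦinj ((hΦg x).trans hx))) hq
  obtain ⟨c, hc₀, hcT, hc⟩ := hr ε hε
  refine ⟨ι → ZMod m, inferInstance, lab, fun x hx hgx ↦ hlabfix x (hr₀_le hx) ?_, fun l ↦ ?_⟩
  · rw [← hΦg, hgx]
  · rw [← hc₀]
    refine alternation_mapVertices_boundary_eq_zero_of_tower (q := q) hp (labelPerm_pow_eq_one hσ)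
      (fun x ↦ hlabg x (g x) (hΦg x) (hhg x)) (fun k hk ↦ supported_mono ?_ (hc k hk))
      (supported_mono ?_ (hc _ le_rfl)) hcT (by simp [labelPerm_inl])
    · exact fun l ⟨hlk, hlr, hlε⟩ ↦ ⟨hlk, (hlab l (fun x hx ↦ hr_le (hlr x hx)) hlε).1⟩
    · exact fun l ⟨hlk, hlr, hlε⟩ ↦ (hlab l (fun x hx ↦ hr_le (hlr x hx)) hlε).2 (by lia)

theorem exists_fixed_point {p : ℕ} (hp : p.Prime) {g : E → E} (hg : Continuous g)
    (hgp : g^[p] = id) : ∃ x, g x = x := by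
  by_contra! hfree
  obtain ⟨S, _, lab, -, hlab⟩ := exists_label_alternation_eq_zero (R := ZMod p) (q := 0)
    (b := single [] 1) (h := fun _ ↦ 0) hp hg hgp continuous_const (fun _ ↦ rfl)
    (fun x hx ↦ absurd hx (hfree x)) (fun _ h ↦ absurd rfl h) le_rfl
    (single_mem_smallChains rfl (by simp) (by simp) 1) (boundary_nil 1) (mapVertices_single g [] 1)
  have := Fact.mk hp
  simpa [alternation_nil] using hlab []

theorem pos_of_invariant_of_pos {p : ℕ} (hp : p.Prime) {g : E → E} (hg : Continuous g)
    (hgp : g^[p] = id) {h : E → ℝ} (hh : Continuous h) (hhg : ∀ x, h (g x) = h x)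
    (hfix : ∀ x, g x = x → h x ≠ 0) {x y : E} (hx : g x = x) (hy : g y = y) (hhx : 0 < h x) :
    0 < h y := by
  by_contra hhy
  have hball {z : E} (hz : z ∈ [x, y]) : z ∈ Metric.closedBall 0 (max ‖x‖ ‖y‖) := by
    rcases List.mem_pair.mp hz with rfl | rfl <;> simp
  obtain ⟨S, _, lab, hlabfix, hlab⟩ := exists_label_alternation_eq_zero (R := ZMod p) (q := 1)
    (b := single [x] 1 - single [y] 1) hp hg hgp hh hhg hfix (fun _ _ ↦ le_rfl)
    (r₀ := max ‖x‖ ‖y‖) (le_max_of_le_left (norm_nonneg x))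
    (sub_mem (single_mem_smallChains rfl (by simp) (by simp) 1)
      (single_mem_smallChains rfl (by simp) (by simp) 1)) (by simp) (by simp [hx, hy])
  have := Fact.mk hp
  have h := hlab [true]
  simp [alternation_cons, alternation_nil, hlabfix x (hball (by simp)) hx,
    hlabfix y (hball (by simp)) hy, hhx, hhy] at h

theorem sum_range_succ_eq_sum_range {M : Type*} [AddCommGroup M] {c : ℕ → M} {p : ℕ}
    (hc : c p = c 0) : ∑ i ∈ Finset.range p, c (i + 1) = ∑ i ∈ Finset.range p, c i := by
  rw [← sub_eq_zero, ← Finset.sum_sub_distrib, Finset.sum_range_sub, hc, sub_self]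

theorem sum_iterate_apply {X M : Type*} [AddCommGroup M] {p : ℕ} {g : X → X} (hgp : g^[p] = id)
    (u : X → M) (x : X) :
    ∑ i ∈ Finset.range p, u (g^[i] (g x)) = ∑ i ∈ Finset.range p, u (g^[i] x) :=
  sum_range_succ_eq_sum_range (c := fun i ↦ u (g^[i] x)) (by simp only [hgp, Function.iterate_zero])

theorem isPreconnected_setOf_fixed {p : ℕ} (hp : p.Prime) {g : E → E} (hg : Continuous g)
    (hgp : g^[p] = id) : IsPreconnected {x | g x = x} := by
  have hF : IsClosed {x | g x = x} := isClosed_eq hg continuous_id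
  rw [isPreconnected_closed_iff]
  rintro A B hA hB hAB ⟨a, ha, haA⟩ ⟨b, hb, hbB⟩
  by_contra hempty
  have hdisj : Disjoint ({x | g x = x} ∩ A) ({x | g x = x} ∩ B) := by
    rwa [Set.disjoint_iff_inter_eq_empty, ← Set.inter_inter_distrib_left,
      ← Set.not_nonempty_iff_eq_empty]
  obtain ⟨u, huA, huB, -⟩ := exists_bounded_mem_Icc_of_closed_of_le (hF.inter hA) (hF.inter hB)
    hdisj (by norm_num : (-1 : ℝ) ≤ 1)
  let h (x : E) := ∑ i ∈ Finset.range p, u (g^[i] x)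
  have h_eq {x} (hx : g x = x) : h x = p * u x := by simp [h, Function.iterate_fixed hx]
  have h_neg {x} (hx : g x = x) (hxA : x ∈ A) : h x < 0 := by simp [h_eq hx, huA ⟨hx, hxA⟩, hp.pos]
  have h_pos {x} (hx : g x = x) (hxB : x ∈ B) : 0 < h x := by simp [h_eq hx, huB ⟨hx, hxB⟩, hp.pos]
  have hh : Continuous h := continuous_finsetSum _ fun i _ ↦ u.continuous.comp (hg.iterate i)
  refine (h_neg ha haA).not_gt (pos_of_invariant_of_pos hp hg hgp hh (sum_iterate_apply hgp u)
    (fun x hx ↦ ?_) hb ha (h_pos hb hbB))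
  exact (hAB hx).elim (fun hxA ↦ (h_neg hx hxA).ne) fun hxB ↦ (h_pos hx hxB).ne'

end Obstruction

section FiniteOrder

variable {K V : Type*} [Field K] [AddCommGroup V] [Module K V]

theorem pow_mul_geom_sum_of_pow_eq_one {A : Type*} [Ring A] {a : A} {p : ℕ} (ha : a ^ p = 1)
    (j : ℕ) : a ^ j * ∑ i ∈ Finset.range p, a ^ i = ∑ i ∈ Finset.range p, a ^ i := by
  have hfix : a * ∑ i ∈ Finset.range p, a ^ i = ∑ i ∈ Finset.range p, a ^ i := by
    rw [Finset.mul_sum]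
    simp only [← pow_succ']
    exact sum_range_succ_eq_sum_range (by rw [ha, pow_zero])
  induction j with
  | zero => rw [pow_zero, one_mul]
  | succ j ih => rw [pow_succ, mul_assoc, hfix, ih]

theorem isIdempotentElem_average {A : Type*} [Ring A] [Algebra K A] {a : A} {p : ℕ}
    (hp : (p : K) ≠ 0) (ha : a ^ p = 1) :
    IsIdempotentElem ((p : K)⁻¹ • ∑ i ∈ Finset.range p, a ^ i) := by
  have hsq : (∑ i ∈ Finset.range p, a ^ i) * ∑ i ∈ Finset.range p, a ^ i =
      (p : K) • ∑ i ∈ Finset.range p, a ^ i := by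
    rw [Finset.sum_mul]
    simp only [pow_mul_geom_sum_of_pow_eq_one ha, Finset.sum_const, Finset.card_range,
      Nat.cast_smul_eq_nsmul]
  rw [IsIdempotentElem, smul_mul_smul_comm, hsq, smul_smul, mul_assoc, inv_mul_cancel₀ hp, mul_one]

variable [FiniteDimensional K V]

theorem exists_sum_trace_pow_eq {f : Module.End K V} {p : ℕ} (hp : (p : K) ≠ 0) (hf : f ^ p = 1) :
    ∃ r : ℕ, ∑ i ∈ Finset.range p, LinearMap.trace K V (f ^ i) = p * r := by
  have htr := (LinearMap.IsIdempotentElem.isProj_range _ (isIdempotentElem_average hp hf)).trace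
  rw [map_smul, map_sum, smul_eq_mul, inv_mul_eq_iff_eq_mul₀ hp] at htr
  exact ⟨_, htr⟩

theorem eq_one_of_sum_trace_pow_eq [CharZero K] {f : Module.End K V} {p : ℕ} (hp : p ≠ 0)
    (hf : f ^ p = 1) (htr : ∑ i ∈ Finset.range p, LinearMap.trace K V (f ^ i) =
      p * Module.finrank K V) : f = 1 := by
  have hp' : (p : K) ≠ 0 := Nat.cast_ne_zero.mpr hp
  have hidem := (isIdempotentElem_average hp' hf).one_sub
  have hone : (p : K)⁻¹ • ∑ i ∈ Finset.range p, f ^ i = 1 := by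
    refine (sub_eq_zero.mp ((LinearMap.IsIdempotentElem.trace_eq_zero_iff hidem).mp ?_)).symm
    rw [map_sub, map_smul, map_sum, htr, LinearMap.trace_one, smul_eq_mul,
      inv_mul_cancel_left₀ hp', sub_self]
  rw [inv_smul_eq_iff₀ hp'] at hone
  have hfix := pow_mul_geom_sum_of_pow_eq_one hf 1
  rwa [pow_one, hone, mul_smul_comm, mul_one, smul_right_inj hp'] at hfix

theorem sum_trace_smul_pow {f : Module.End K V} {p : ℕ} (hp : p ≠ 0) {a : K}
    (ha : ∀ k, ¬ p ∣ k → LinearMap.trace K V (f ^ k) = a) (z : K) :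
    ∑ i ∈ Finset.range p, LinearMap.trace K V ((z • f) ^ i) =
      Module.finrank K V - a + a * ∑ i ∈ Finset.range p, z ^ i := by
  obtain ⟨q, rfl⟩ := Nat.exists_eq_succ_of_ne_zero hp
  have hsmul (i) (hi : i ∈ Finset.range q) :
      LinearMap.trace K V ((z • f) ^ (i + 1)) = a * z ^ (i + 1) := by
    have hdvd : ¬ q + 1 ∣ i + 1 :=
      Nat.not_dvd_of_pos_of_lt i.succ_pos (Nat.succ_lt_succ (Finset.mem_range.mp hi))
    rw [smul_pow, map_smul, ha _ hdvd, smul_eq_mul, mul_comm]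
  rw [Finset.sum_range_succ', Finset.sum_range_succ', Finset.sum_congr rfl hsmul, mul_add,
    Finset.mul_sum, pow_zero, pow_zero, LinearMap.trace_one]
  ring

theorem eq_one_of_trace_pow_eq [CharZero K] {f : Module.End K V} {p : ℕ} (hp : p.Prime)
    (hf : f ^ p = 1) {a : K} (ha : ∀ k, ¬ p ∣ k → LinearMap.trace K V (f ^ k) = a)
    (hfin : Module.finrank K V < p - 1) : f = 1 := by
  have hp' : (p : K) ≠ 0 := Nat.cast_ne_zero.mpr hp.ne_zero
  have : NeZero p := ⟨hp.ne_zero⟩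
  let L := CyclotomicField p K
  have : CharZero L := charZero_of_injective_algebraMap (algebraMap K L).injective
  have hζ := IsCyclotomicExtension.zeta_spec p K L
  obtain ⟨r₀, h₀⟩ := exists_sum_trace_pow_eq hp' hf
  obtain ⟨r₁, h₁⟩ := exists_sum_trace_pow_eq (K := L) (p := p)
    (f := IsCyclotomicExtension.zeta p K L • f.baseChange L) (Nat.cast_ne_zero.mpr hp.ne_zero)
    (by rw [smul_pow, hζ.pow_eq_one, ← LinearMap.baseChange_pow, hf, one_smul,
          LinearMap.baseChange_one])
  have ha₀ : Module.finrank K V - a + a * p = (p : K) * r₀ := by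
    have h := sum_trace_smul_pow hp.ne_zero ha 1
    rw [one_smul, h₀] at h
    simpa using h.symm
  have ha₁ : Module.finrank K V - a = (p : K) * r₁ := by
    rw [sum_trace_smul_pow hp.ne_zero (a := algebraMap K L a) (fun k hk ↦ by
        rw [← LinearMap.baseChange_pow, LinearMap.trace_baseChange, ha k hk]),
      hζ.geom_sum_eq_zero hp.one_lt, mul_zero, add_zero, Module.finrank_baseChange] at h₁
    exact (algebraMap K L).injective (by simpa using h₁)
  have hdim : Module.finrank K V = r₀ + (p - 1) * r₁ := by
    have h : (Module.finrank K V : K) = r₀ + (p - 1) * r₁ :=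
      mul_left_cancel₀ hp' (by linear_combination ha₀ + (p - 1) * ha₁)
    rw [← Nat.cast_pred hp.pos] at h
    exact_mod_cast h
  have hr₁ : r₁ = 0 := by
    by_contra hr
    have := Nat.le_mul_of_pos_right (p - 1) (Nat.pos_of_ne_zero hr)
    lia
  refine eq_one_of_sum_trace_pow_eq hp.ne_zero hf ?_
  rw [h₀, hdim, hr₁, mul_zero, add_zero]

theorem pow_eq_one_of_isRoot_charpoly {f : Module.End K V} {p : ℕ} (hf : f ^ p = 1) {μ : K}
    (hμ : f.charpoly.IsRoot μ) : μ ^ p = 1 := by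
  obtain ⟨v, hv⟩ := ((f.hasEigenvalue_iff_isRoot_charpoly μ).mpr hμ).exists_hasEigenvector
  have h := hv.pow_apply p
  rw [hf] at h
  exact (smul_left_injective K hv.2 (by simpa using h)).symm

theorem finite_setOf_trace_of_pow_eq_one (K V : Type*) [Field K] [AddCommGroup V] [Module K V]
    [FiniteDimensional K V] {p : ℕ} (hp : 0 < p) :
    {a | ∃ f : Module.End K V, f ^ p = 1 ∧ LinearMap.trace K V f = a}.Finite := by
  classical
  let L := AlgebraicClosure K
  refine Set.Finite.of_finite_image (f := algebraMap K L) ?_ (algebraMap K L).injective.injOn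
  refine ((Set.finite_Iic (Module.finrank K V • (Polynomial.nthRootsFinset p (1 : L)).val)).image
    Multiset.sum).subset ?_
  rintro _ ⟨_, ⟨f, hf, rfl⟩, rfl⟩
  refine ⟨(f.baseChange L).charpoly.roots, ?_, ?_⟩
  · refine Multiset.le_iff_count.mpr fun μ ↦ ?_
    by_cases hμ : μ ∈ (f.baseChange L).charpoly.roots
    · have hmem : μ ∈ Polynomial.nthRootsFinset p (1 : L) :=
        (Polynomial.mem_nthRootsFinset hp 1).mpr <| pow_eq_one_of_isRoot_charpoly
          (by rw [← LinearMap.baseChange_pow, hf, LinearMap.baseChange_one])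
          (Polynomial.isRoot_of_mem_roots hμ)
      rw [Multiset.count_nsmul, Multiset.count_eq_one_of_mem (Finset.nodup _) hmem, mul_one]
      refine (Multiset.count_le_card _ _).trans ((Polynomial.card_roots' _).trans ?_)
      rw [LinearMap.charpoly_natDegree, Module.finrank_baseChange]
    · rw [Multiset.count_eq_zero_of_notMem hμ]
      exact Nat.zero_le _
  · rw [← LinearMap.trace_baseChange,
      Module.End.trace_eq_sum_roots_charpoly_of_splits (IsAlgClosed.splits _)]

end FiniteOrder

section Transpose

variable {n : Type*} [Fintype n] [DecidableEq n]

theorem trace_inv_eq_of_transpose_mul_mul_eq {R : Type*} [CommRing R] {A B : Matrix n n R}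
    (hA : IsUnit A) (hB : IsUnit B) (h : A.transpose * B * A = B) : A⁻¹.trace = A.trace := by
  have hA' := (Matrix.isUnit_iff_isUnit_det A).mp hA
  have hB' := (Matrix.isUnit_iff_isUnit_det B).mp hB
  have hinv : A⁻¹ = B⁻¹ * (A.transpose * B) := by
    rw [← Matrix.mul_nonsing_inv_cancel_right A (A.transpose * B) hA', h,
      Matrix.nonsing_inv_mul_cancel_left B _ hB']
  rw [hinv, Matrix.trace_mul_comm, Matrix.mul_nonsing_inv_cancel_right B _ hB',
    Matrix.trace_transpose]

theorem trace_inv_eq_of_pow_eq_one {A : Matrix n n ℝ} {p : ℕ} (hp : p ≠ 0) (hA : A ^ p = 1) :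
    A⁻¹.trace = A.trace := by
  have hAu : IsUnit A := IsUnit.of_pow_eq_one hA hp
  have hB : (∑ i ∈ Finset.range p, (A ^ i).conjTranspose * A ^ i).PosDef :=
    Matrix.posDef_sum (Finset.nonempty_range_iff.mpr hp) fun i _ ↦
      .conjTranspose_mul_self _ (Matrix.mulVec_injective_of_isUnit (hAu.pow i))
  refine trace_inv_eq_of_transpose_mul_mul_eq hAu hB.isUnit ?_
  simp only [Finset.mul_sum, Finset.sum_mul, ← Matrix.conjTranspose_eq_transpose_of_trivial,
    ← mul_assoc, ← Matrix.conjTranspose_mul, ← pow_succ]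
  simp only [mul_assoc, ← pow_succ]
  exact sum_range_succ_eq_sum_range (c := fun i ↦ (A ^ i).conjTranspose * A ^ i) (by simp [hA])

theorem trace_eq_trace_of_mul_eq_one {V : Type*} [AddCommGroup V] [Module ℝ V]
    [FiniteDimensional ℝ V] {f g : Module.End ℝ V} {p : ℕ} (hp : p ≠ 0) (hf : f ^ p = 1)
    (hfg : f * g = 1) : LinearMap.trace ℝ V g = LinearMap.trace ℝ V f := by
  let b := Module.finBasis ℝ V
  have hA : LinearMap.toMatrixAlgEquiv b f ^ p = 1 := by rw [← map_pow, hf, map_one]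
  have hAB : LinearMap.toMatrixAlgEquiv b f * LinearMap.toMatrixAlgEquiv b g = 1 := by
    rw [← map_mul, hfg, map_one]
  have htr := trace_inv_eq_of_pow_eq_one hp hA
  rw [Matrix.inv_eq_right_inv hAB] at htr
  rwa [LinearMap.trace_eq_matrix_trace ℝ b, LinearMap.trace_eq_matrix_trace ℝ b]

end Transpose

section Derivative

variable {E : Type*} [NormedAddCommGroup E] [NormedSpace ℝ E]

theorem eventually_eq_of_hasStrictFDerivAt_id [CompleteSpace E] {p : ℕ} (hp : p ≠ 0) {f : E → E}
    (hfp : f^[p] = id) {x : E} (hx : f x = x)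
    (hf : HasStrictFDerivAt f (ContinuousLinearMap.id ℝ E) x) : ∀ᶠ y in nhds x, f y = y := by
  let ψ (y : E) := (p : ℝ)⁻¹ • ∑ i ∈ Finset.range p, f^[i] y
  have hψ : HasStrictFDerivAt ψ
      (ContinuousLinearEquiv.refl ℝ E : E →L[ℝ] E) x := by
    have h := (HasStrictFDerivAt.fun_sum fun i (_ : i ∈ Finset.range p) ↦
      hf.iterate hx i).const_smul (p : ℝ)⁻¹
    have hid : (p : ℝ)⁻¹ • ∑ i ∈ Finset.range p, ContinuousLinearMap.id ℝ E ^ i =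
        (ContinuousLinearEquiv.refl ℝ E : E →L[ℝ] E) := by
      simp only [← ContinuousLinearMap.one_def, one_pow, Finset.sum_const, Finset.card_range,
        ← Nat.cast_smul_eq_nsmul ℝ, inv_smul_smul₀ (Nat.cast_ne_zero.mpr hp : (p : ℝ) ≠ 0)]
      rfl
    rwa [hid] at h
  have hψf (y : E) : ψ (f y) = ψ y :=
    congrArg ((p : ℝ)⁻¹ • ·) (sum_iterate_apply hfp id y)
  have hU := hψ.toOpenPartialHomeomorph ψ |>.open_source.mem_nhds
    hψ.mem_toOpenPartialHomeomorph_source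
  have hfx : Filter.Tendsto f (nhds x) (nhds x) := by simpa only [hx] using hf.continuousAt.tendsto
  filter_upwards [hU, hfx.eventually hU] with y hy hfy
  exact (hψ.toOpenPartialHomeomorph ψ).injOn hfy hy (hψf y)

theorem eq_id_of_fderiv_eq_id [CompleteSpace E] {p : ℕ} (hp : p ≠ 0) {f : E → E}
    (hf : ContDiff ℝ 1 f) (hfp : f^[p] = id) {x : E} (hx : f x = x)
    (hfx : fderiv ℝ f x = ContinuousLinearMap.id ℝ E) : f = id := by
  let W : Set E := {y | f y = y ∧ fderiv ℝ f y = ContinuousLinearMap.id ℝ E}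
  have hclosed : IsClosed W := (isClosed_eq hf.continuous continuous_id).inter
    (isClosed_eq (hf.continuous_fderiv one_ne_zero) continuous_const)
  have hopen : IsOpen W := isOpen_iff_mem_nhds.mpr fun y ⟨hy, hfy⟩ ↦ by
    have hstrict := hf.contDiffAt.hasStrictFDerivAt (x := y) one_ne_zero
    rw [hfy] at hstrict
    have hlocal := eventually_eq_of_hasStrictFDerivAt_id hp hfp hy hstrict
    filter_upwards [hlocal.eventually_nhds] with z hz
    have hz' : f =ᶠ[nhds z] id := hz
    exact ⟨hz'.eq_of_nhds, hz'.fderiv_eq.trans fderiv_id⟩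
  have huniv : W = Set.univ := IsClopen.eq_univ ⟨hclosed, hopen⟩ ⟨x, hx, hfx⟩
  exact funext fun y ↦ (huniv.ge (Set.mem_univ y)).1

theorem fderiv_iterate_of_fixed {f : E → E} {x : E} (hf : DifferentiableAt ℝ f x) (hx : f x = x)
    (k : ℕ) : fderiv ℝ f^[k] x = fderiv ℝ f x ^ k :=
  (hf.hasFDerivAt.iterate hx k).fderiv

theorem fderiv_pow_eq_one {p : ℕ} {f : E → E} {x : E} (hf : DifferentiableAt ℝ f x)
    (hx : f x = x) (hfp : f^[p] = id) : (fderiv ℝ f x : E →ₗ[ℝ] E) ^ p = 1 := by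
  rw [← ContinuousLinearMap.toLinearMap_pow, ← fderiv_iterate_of_fixed hf hx, hfp, fderiv_id]
  rfl

theorem fderiv_symm_comp_fderiv (h : Equiv.Perm E) {x : E} (hh : DifferentiableAt ℝ h x)
    (hh' : DifferentiableAt ℝ h.symm (h x)) :
    fderiv ℝ h.symm (h x) ∘L fderiv ℝ h x = ContinuousLinearMap.id ℝ E := by
  have hcomp := hh'.hasFDerivAt.comp x hh.hasFDerivAt
  rw [h.symm_comp_self] at hcomp
  exact hcomp.unique (hasFDerivAt_id x)

theorem iterate_eq_id_of_pow_eq_one {α : Type*} {σ : Equiv.Perm α} {p : ℕ} (hσ : σ ^ p = 1) :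
    (σ : α → α)^[p] = id := by
  rw [Equiv.Perm.iterate_eq_pow, hσ, Equiv.Perm.coe_one]

/-- The trace of the derivative of a self-map, which depends only on the conjugacy class of the map
when taken at a fixed point. -/
noncomputable def traceFDeriv (f : E → E) (x : E) : ℝ := LinearMap.trace ℝ E (fderiv ℝ f x)

variable [FiniteDimensional ℝ E]

theorem continuous_traceFDeriv {f : E → E} (hf : ContDiff ℝ 1 f) : Continuous (traceFDeriv f) :=
  (LinearMap.continuous_of_finiteDimensional
    (LinearMap.trace ℝ E ∘ₗ ContinuousLinearMap.coeLM ℝ)).comp (hf.continuous_fderiv one_ne_zero)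

theorem traceFDeriv_conj (h : Equiv.Perm E) {f : E → E} {x : E} (hh : DifferentiableAt ℝ h x)
    (hh' : DifferentiableAt ℝ h.symm (h x)) (hf : DifferentiableAt ℝ f x) (hx : f x = x) :
    traceFDeriv (h ∘ f ∘ h.symm) (h x) = traceFDeriv f x := by
  have hF : HasFDerivAt f (fderiv ℝ f x) (h.symm (h x)) := by
    rw [h.symm_apply_apply]
    exact hf.hasFDerivAt
  have hA : HasFDerivAt h (fderiv ℝ h x) (f (h.symm (h x))) := by
    rw [h.symm_apply_apply, hx]
    exact hh.hasFDerivAt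
  rw [traceFDeriv, (hA.comp (h x) (hF.comp (h x) hh'.hasFDerivAt)).fderiv,
    ContinuousLinearMap.toLinearMap_comp, LinearMap.trace_comp_comm',
    ← ContinuousLinearMap.toLinearMap_comp, ContinuousLinearMap.comp_assoc,
    fderiv_symm_comp_fderiv h hh hh',
    ContinuousLinearMap.comp_id, traceFDeriv]

theorem traceFDeriv_symm_of_fixed {p : ℕ} (hp : p ≠ 0) {h : Equiv.Perm E} {x : E}
    (hh : DifferentiableAt ℝ h x) (hh' : DifferentiableAt ℝ h.symm x) (hhp : h ^ p = 1)
    (hx : h x = x) : traceFDeriv h.symm x = traceFDeriv h x := by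
  have hcomp := fderiv_symm_comp_fderiv h hh (hx.symm ▸ hh')
  rw [hx] at hcomp
  exact trace_eq_trace_of_mul_eq_one hp
    (fderiv_pow_eq_one hh hx (iterate_eq_id_of_pow_eq_one hhp))
    (mul_eq_one_comm.mp (congrArg ContinuousLinearMap.toLinearMap hcomp))

theorem traceFDeriv_eq_of_fixed {p : ℕ} (hp : p.Prime) {f : E → E} (hf : ContDiff ℝ 1 f)
    (hfp : f^[p] = id) {x y : E} (hx : f x = x) (hy : f y = y) :
    traceFDeriv f x = traceFDeriv f y := by
  have hconn := isPreconnected_setOf_fixed hp hf.continuous hfp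
  have hdiscrete := (finite_setOf_trace_of_pow_eq_one ℝ E hp.pos).isDiscrete
  refine hconn.constant_of_mapsTo hdiscrete (continuous_traceFDeriv hf).continuousOn
    (fun z (hz : f z = z) ↦ ⟨_, ?_, rfl⟩) hx hy
  exact fderiv_pow_eq_one (hf.differentiable one_ne_zero z) hz hfp

theorem traceFDeriv_eq_of_isConj {G : Type*} [Group G] {ρ : G →* Equiv.Perm E}
    (hρ : ∀ g, ContDiff ℝ 1 (ρ g)) {p : ℕ} (hp : p.Prime) {s s' : G} (hss' : IsConj s s')
    (hs' : ρ s' ^ p = 1) {x y : E} (hx : ρ s x = x) (hy : ρ s' y = y) :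
    traceFDeriv (ρ s) x = traceFDeriv (ρ s') y := by
  obtain ⟨c, rfl⟩ := isConj_iff.mp hss'
  have hdiff (g : G) : Differentiable ℝ (ρ g) := (hρ g).differentiable one_ne_zero
  have hconj : ρ (c * s * c⁻¹) = ρ c ∘ ρ s ∘ (ρ c).symm := by
    rw [map_mul, map_mul, map_inv]
    rfl
  have hfixed : ρ (c * s * c⁻¹) (ρ c x) = ρ c x := by
    simp only [hconj, Function.comp_apply, Equiv.symm_apply_apply, hx]
  calc
    traceFDeriv (ρ s) x = traceFDeriv (ρ (c * s * c⁻¹)) (ρ c x) := by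
      rw [hconj]
      refine (traceFDeriv_conj (ρ c) (hdiff c x) ?_ (hdiff s x) hx).symm
      simpa only [map_inv, Equiv.Perm.inv_def] using hdiff c⁻¹ (ρ c x)
    _ = traceFDeriv (ρ (c * s * c⁻¹)) y :=
      traceFDeriv_eq_of_fixed hp (hρ _) (iterate_eq_id_of_pow_eq_one hs') hfixed hy

end Derivative

section Alternating

theorem isSquare_or_isSquare_neg {F : Type*} [Field F] [Finite F] (hF : ¬ IsSquare (-1 : F))
    (a : F) : IsSquare a ∨ IsSquare (-a) := by
  have := Fintype.ofFinite F
  classical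
  by_contra! ⟨ha, ha'⟩
  rw [← quadraticChar_neg_one_iff_not_isSquare] at hF ha ha'
  rw [neg_eq_neg_one_mul, map_mul, hF, ha] at ha'
  norm_num at ha'

theorem sq_mem_alternatingGroup {α : Type*} [Fintype α] [DecidableEq α] (σ : Equiv.Perm α) :
    σ ^ 2 ∈ alternatingGroup α := by
  rw [Equiv.Perm.mem_alternatingGroup, map_pow, Int.units_sq]

/-- The translation `x ↦ x + 2` of `ZMod p`, an even permutation because it is a square. -/
def translation (p : ℕ) [NeZero p] : alternatingGroup (ZMod p) :=
  ⟨Equiv.addLeft 1 ^ 2, sq_mem_alternatingGroup _⟩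

theorem coe_translation_zpow {p : ℕ} [NeZero p] (m : ℤ) :
    (translation p ^ m : alternatingGroup (ZMod p)) = Equiv.addLeft (2 * m : ZMod p) := by
  have hsq : (translation p : Equiv.Perm (ZMod p)) = Equiv.addLeft 1 ^ (2 : ℤ) := rfl
  rw [Subgroup.coe_zpow, hsq, ← zpow_mul, Equiv.zsmul_addLeft, zsmul_one]
  push_cast
  rfl

variable {p : ℕ} [Fact p.Prime]

/-- The permutation `x ↦ b ^ 2 * x` of `ZMod p`, even because it is a square. -/
def squareScaling (b : ZMod p) (hb : b ≠ 0) : alternatingGroup (ZMod p) :=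
  ⟨Equiv.mulLeft₀ b hb ^ 2, sq_mem_alternatingGroup _⟩

theorem isConj_translation_zpow {b : ZMod p} (hb : b ≠ 0) {l m : ℤ} (hlm : b ^ 2 * l = m) :
    IsConj (translation p ^ l) (translation p ^ m) := by
  refine isConj_iff.mpr ⟨squareScaling b hb, mul_inv_eq_iff_eq_mul.mpr ?_⟩
  ext x : 2
  simp only [Subgroup.coe_mul, coe_translation_zpow, squareScaling, sq, Equiv.Perm.mul_apply,
    Equiv.coe_addLeft, Equiv.mulLeft₀_apply, ← hlm]
  ring

theorem orderOf_translation (hp : p ≠ 2) : orderOf (translation p) = p := by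
  have htwo : (2 : ZMod p) ≠ 0 := Ring.two_ne_zero (by rwa [ZMod.ringChar_zmod_n])
  refine orderOf_eq_prime ?_ fun h ↦ htwo ?_
  · ext x : 2
    rw [← zpow_natCast, coe_translation_zpow]
    simp
  · have hzero := congrArg (fun g : alternatingGroup (ZMod p) ↦ g.1 0) h
    simpa [translation, one_add_one_eq_two] using hzero

theorem isConj_translation_pow (hp : p % 4 = 3) {k : ℕ} (hk : ¬ p ∣ k) :
    IsConj (translation p) (translation p ^ k) ∨ IsConj (translation p)⁻¹ (translation p ^ k) := by
  have hneg : ¬ IsSquare (-1 : ZMod p) := fun h ↦ ZMod.exists_sq_eq_neg_one_iff.mp h hp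
  have hk' : (k : ZMod p) ≠ 0 := mt (ZMod.natCast_eq_zero_iff k p).mp hk
  have hpow := zpow_natCast (translation p) k
  rcases isSquare_or_isSquare_neg hneg (k : ZMod p) with ⟨b, hb⟩ | ⟨b, hb⟩
  · left
    have hb0 : b ≠ 0 := by rintro rfl; simp_all
    simpa only [zpow_one, hpow] using isConj_translation_zpow hb0 (l := 1) (m := k)
      (by push_cast; linear_combination -hb)
  · right
    have hb0 : b ≠ 0 := by rintro rfl; simp_all
    simpa only [zpow_neg_one, hpow] using isConj_translation_zpow hb0 (l := -1) (m := k)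
      (by push_cast; linear_combination hb)

end Alternating

section Main

variable {G E : Type*} [Group G] [NormedAddCommGroup E] [NormedSpace ℝ E] [FiniteDimensional ℝ E]
  {p : ℕ} {ρ : G →* Equiv.Perm E}

theorem trace_fderiv_pow_eq (hp : p.Prime) (hρ : ∀ g, ContDiff ℝ 1 (ρ g)) {t : G}
    (ht : ρ t ^ p = 1) {x : E} (hx : ρ t x = x) {k : ℕ}
    (hk : IsConj t (t ^ k) ∨ IsConj t⁻¹ (t ^ k)) :
    LinearMap.trace ℝ E ((fderiv ℝ (ρ t) x : E →ₗ[ℝ] E) ^ k) = traceFDeriv (ρ t) x := by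
  have hdiff (g : G) : Differentiable ℝ (ρ g) := (hρ g).differentiable one_ne_zero
  have hpow : ⇑(ρ (t ^ k)) = (ρ t)^[k] := by rw [map_pow, Equiv.Perm.iterate_eq_pow]
  have hxk : ρ (t ^ k) x = x := by rw [hpow, Function.iterate_fixed hx]
  have htk : ρ (t ^ k) ^ p = 1 := by rw [map_pow, pow_right_comm, ht, one_pow]
  have hinv : ⇑(ρ t⁻¹) = (ρ t).symm := by rw [map_inv, Equiv.Perm.inv_def]
  have hxinv : ρ t⁻¹ x = x := by rw [map_inv, Equiv.Perm.inv_eq_iff_eq, hx]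
  have htrace : LinearMap.trace ℝ E ((fderiv ℝ (ρ t) x : E →ₗ[ℝ] E) ^ k) =
      traceFDeriv (ρ (t ^ k)) x := by
    rw [traceFDeriv, hpow, fderiv_iterate_of_fixed (hdiff t x) hx,
      ContinuousLinearMap.toLinearMap_pow]
  rw [htrace]
  rcases hk with hk | hk
  · exact (traceFDeriv_eq_of_isConj hρ hp hk htk hx hxk).symm
  · rw [← traceFDeriv_eq_of_isConj hρ hp hk htk hxinv hxk]
    rw [hinv, traceFDeriv_symm_of_fixed hp.ne_zero (hdiff t x) (hinv ▸ hdiff t⁻¹ x) ht hx]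

theorem sub_one_le_finrank_of_isConj_pow (hp : p.Prime) (hρ : ∀ g, ContDiff ℝ 1 (ρ g)) {t : G}
    (ht : orderOf (ρ t) = p) (hconj : ∀ k, ¬ p ∣ k → IsConj t (t ^ k) ∨ IsConj t⁻¹ (t ^ k)) :
    p - 1 ≤ Module.finrank ℝ E := by
  by_contra! hdim
  have hpow : ρ t ^ p = 1 := ht ▸ pow_orderOf_eq_one _
  have hiter := iterate_eq_id_of_pow_eq_one hpow
  obtain ⟨x, hx⟩ := exists_fixed_point hp (hρ t).continuous hiter
  have hF := fderiv_pow_eq_one ((hρ t).differentiable one_ne_zero x) hx hiter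
  have hF_one := eq_one_of_trace_pow_eq hp hF
    (fun k hk ↦ trace_fderiv_pow_eq hp hρ hpow hx (hconj k hk)) hdim
  have := FiniteDimensional.complete ℝ E
  have hid : ⇑(ρ t) = id := eq_id_of_fderiv_eq_id hp.ne_zero (hρ t) hiter hx
    (ContinuousLinearMap.coe_injective hF_one)
  have hone : ρ t = 1 := Equiv.ext fun y ↦ congrFun hid y
  exact hp.ne_one (by rw [← ht, hone, orderOf_one])

end Main

end SmithTheory

theorem minimal_euclidean_action_alternating_group_general
    {E : Type*} [NormedAddCommGroup E] [NormedSpace ℝ E] [FiniteDimensional ℝ E] {p : ℕ}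
    (hp : p.Prime) (hp4 : p % 4 = 3) (ρ : alternatingGroup (Fin p) →* Equiv.Perm E)
    (hρ : Function.Injective ρ) (hsmooth : ∀ g, ContDiff ℝ 1 (ρ g)) :
    p - 1 ≤ Module.finrank ℝ E := by
  have := Fact.mk hp
  have := NeZero.mk hp.ne_zero
  let e := Equiv.altCongrHom (ZMod.finEquiv p).symm.toEquiv
  have hinj : Function.Injective (ρ.comp e.toMonoidHom) := hρ.comp e.injective
  refine SmithTheory.sub_one_le_finrank_of_isConj_pow hp (ρ := ρ.comp e.toMonoidHom)
    (fun g ↦ hsmooth (e g)) ?_ fun k ↦ SmithTheory.isConj_translation_pow hp4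
  rw [orderOf_injective _ hinj, SmithTheory.orderOf_translation (by lia)]

/-- For a prime `p ≡ 3 (mod 4)`, `p > 5`: if the alternating group `A_p` acts faithfully
by diffeomorphisms on `ℝⁿ`, then `n ≥ p - 1`. -/
theorem minimal_euclidean_action_alternating_group
    (p n : ℕ) (hp : p.Prime) (hp4 : p % 4 = 3) (hp5 : 5 < p)
    (ρ : alternatingGroup (Fin p) →* Equiv.Perm (EuclideanSpace ℝ (Fin n)))
    (hfaithful : Function.Injective ρ)
    (hsmooth : ∀ g, ContDiff ℝ (⊤ : ℕ∞) (ρ g)) :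
    p - 1 ≤ n := by
  simpa only [finrank_euclideanSpace_fin] using minimal_euclidean_action_alternating_group_general
    hp hp4 ρ hfaithful fun g ↦ (hsmooth g).of_le (by simp)
end
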